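/- arXiv:1411.3415 — 2 statements merged into one kernel-verified Lean document; each statement's English description precedes it below -/
import Mathlib

section
/- (Separation Lemma) Let Ω ⊂ ℂ be a Jordan domain, i.e. there is a homeomorphism φ from the closed unit disk onto the closure of Ω with φ(𝔻) = Ω, so ∂Ω = φ(𝕋). Let A ⊆ clos Ω be a closed connected set such that Γ := A ∩ ∂Ω is a simple arc with distinct endpoints P and Q (Γ is the image of a continuous injective map γ : [0,1] → ℂ with γ(0) = P, γ(1) = Q). Assume that every point x ∈ Γ ∖ {P, Q} has an open neighborhood V with V ∩ (clos Ω ∖ A) = ∅. Then the set (∂A) ∩ Ω (where ∂A denotes the topological boundary of A in ℂ) has a connected component whose closure contains both P and Q. -/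
/-!
`Ω` is open by planar invariance of domain: if `g` is injective on a disk about `0` and missed a
value near `g 0`, then `ζ ↦ g ζ - g 0` would have a continuous logarithm on the boundary circle,
and so would the odd map `ζ ↦ g ζ - g (-ζ)`, which is impossible.

Inside the closed disk, let `W` be the component of the complement of `A` containing the circle arc
complementary to `Γ`. Both `closure W` and the complement of `W` are connected and together they
cover the disk. A contractible normal space is unicoherent, because nonvanishing functions on it
have continuous logarithms, so `frontier W` is a continuum. It lies in the frontier of `A` and
contains `P` and `Q`. A subcontinuum irreducible between `P` and `Q` remains connected when `P` and
`Q` are removed, and the neighborhood hypothesis keeps the rest of it away from `∂Ω`.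
-/

open Set Metric Filter Topology Function unitInterval

section ContinuousLog

variable {X Y : Type*} [TopologicalSpace X] [TopologicalSpace Y] {f : X → ℂ}

/-- `f` has a globally defined continuous logarithm, that is, it lifts through the covering
`Complex.exp : ℂ → ℂ \ {0}`. In particular `f` is continuous and vanishes nowhere. -/
def HasContinuousLog (f : X → ℂ) : Prop :=
  ∃ L : X → ℂ, Continuous L ∧ ∀ x, Complex.exp (L x) = f x

namespace HasContinuousLog

theorem const {c : ℂ} (hc : c ≠ 0) : HasContinuousLog fun _ : X ↦ c :=
  ⟨fun _ ↦ Complex.log c, continuous_const, fun _ ↦ Complex.exp_log hc⟩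

theorem comp (hf : HasContinuousLog f) {g : Y → X} (hg : Continuous g) :
    HasContinuousLog fun y ↦ f (g y) := by
  obtain ⟨L, hL, hexp⟩ := hf
  exact ⟨L ∘ g, hL.comp hg, fun y ↦ hexp (g y)⟩

theorem of_homotopy {H : I × X → ℂ} (hH : Continuous H) (hne : ∀ x, H x ≠ 0)
    (h₀ : HasContinuousLog fun x ↦ H (0, x)) : HasContinuousLog fun x ↦ H (1, x) := by
  obtain ⟨L₀, hL₀, hexp⟩ := h₀
  let H' : C(I × X, {z : ℂ // z ≠ 0}) := ⟨fun x ↦ ⟨H x, hne x⟩, by fun_prop⟩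
  have hlift := Complex.isCoveringMap_exp.liftHomotopy_lifts H' ⟨L₀, hL₀⟩
    fun x ↦ Subtype.ext (hexp x).symm
  exact ⟨_, (ContinuousMap.continuous _).comp (Continuous.prodMk_right 1),
    fun x ↦ congrArg Subtype.val (congrFun hlift (1, x))⟩

theorem of_contractibleSpace [ContractibleSpace X] (hf : Continuous f) (hne : ∀ x, f x ≠ 0) :
    HasContinuousLog f := by
  obtain ⟨c, ⟨F⟩⟩ := id_nullhomotopic X
  have h₀ : HasContinuousLog fun x ↦ f (F.symm (0, x)) := by
    simpa only [F.symm.apply_zero, ContinuousMap.const_apply] using const (hne c)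
  simpa only [comp_apply, F.symm.apply_one, ContinuousMap.id_apply] using
    of_homotopy (H := f ∘ F.symm) (hf.comp F.symm.continuous) (fun _ ↦ hne _) h₀

end HasContinuousLog

theorem sub_eq_sub_of_exp_eq_exp {s : Set X} (hs : IsPreconnected s) {L M : X → ℂ}
    (hL : ContinuousOn L s) (hM : ContinuousOn M s)
    (h : ∀ x ∈ s, Complex.exp (L x) = Complex.exp (M x)) {x y : X} (hx : x ∈ s) (hy : y ∈ s) :
    L x - M x = L y - M y := by
  have hexp : ∀ z ∈ s, Complex.exp (L z - M z) = 1 := fun z hz ↦ by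
    rw [Complex.exp_sub, h z hz, div_self (Complex.exp_ne_zero _)]
  exact Complex.isCoveringMap_exp.constOn_of_comp hs (hL.sub hM)
    (fun a ha b hb ↦ Subtype.ext ((hexp a ha).trans (hexp b hb).symm)) hx hy

/- If `L` is a logarithm of `f`, then `L x - L (-x)` is constant on `X` and odd, hence zero. But
`f (-x) = -f x` forces `L x ≠ L (-x)`. -/
theorem not_hasContinuousLog_of_odd [ConnectedSpace X] [InvolutiveNeg X] [ContinuousNeg X]
    (hodd : ∀ x, f (-x) = -f x) : ¬ HasContinuousLog f := by
  rintro ⟨L, hL, hexp⟩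
  obtain ⟨x⟩ : Nonempty X := inferInstance
  have hshift : ∀ y, Complex.exp (L (-y)) = Complex.exp (L y + Real.pi * Complex.I) := fun y ↦ by
    rw [Complex.exp_add, Complex.exp_pi_mul_I, hexp, hexp, hodd, mul_neg_one]
  have hconst := sub_eq_sub_of_exp_eq_exp isPreconnected_univ (hL.comp continuous_neg).continuousOn
    (hL.add continuous_const).continuousOn (fun y _ ↦ hshift y) (mem_univ x) (mem_univ (-x))
  have hsymm : L (-x) = L x := by
    simp only [comp_apply, Pi.add_apply, neg_neg] at hconst
    linear_combination hconst / 2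
  have hfx : f x = -f x := by rw [← hodd, ← hexp, ← hexp, hsymm]
  exact Complex.exp_ne_zero (L x) ((hexp x).trans (self_eq_neg.1 hfx))

end ContinuousLog

section InvarianceOfDomain

variable {g : ℂ → ℂ}

theorem not_hasContinuousLog_sub_apply_zero {r : ℝ} (hr : 0 < r)
    (hg : ContinuousOn g (closedBall 0 r)) (hinj : InjOn g (closedBall 0 r)) :
    ¬ HasContinuousLog fun ζ : sphere (0 : ℂ) r ↦ g ζ - g 0 := by
  intro hlog
  let contract : I × sphere (0 : ℂ) r → ℂ := fun x ↦ -((x.1 : ℝ) * x.2)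
  have hnorm : ∀ ζ : sphere (0 : ℂ) r, ‖(ζ : ℂ)‖ = r := fun ζ ↦ mem_sphere_zero_iff_norm.1 ζ.2
  have hmem : ∀ x, contract x ∈ closedBall (0 : ℂ) r := fun ⟨t, ζ⟩ ↦ by
    rw [mem_closedBall_zero_iff, norm_neg, norm_mul, hnorm, Complex.norm_real,
      Real.norm_of_nonneg t.2.1]
    exact mul_le_of_le_one_left hr.le t.2.2
  have hne : ∀ x : I × sphere (0 : ℂ) r, g x.2 - g (contract x) ≠ 0 := fun ⟨t, ζ⟩ h ↦ by
    have hζ : (ζ : ℂ) = -((t : ℝ) * ζ) :=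
      hinj (sphere_subset_closedBall ζ.2) (hmem (t, ζ)) (sub_eq_zero.1 h)
    have hprod : ((1 + t : ℝ) : ℂ) * ζ = 0 := by push_cast; linear_combination hζ
    have hζ0 : (ζ : ℂ) ≠ 0 := norm_pos_iff.1 ((hnorm ζ).symm ▸ hr)
    have := Complex.ofReal_eq_zero.1 ((mul_eq_zero.1 hprod).resolve_right hζ0)
    linarith [t.2.1]
  have hcont : Continuous fun x : I × sphere (0 : ℂ) r ↦ g x.2 - g (contract x) :=
    (hg.comp_continuous (by fun_prop) fun x ↦ sphere_subset_closedBall x.2.2).sub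
      (hg.comp_continuous (by fun_prop) hmem)
  have hodd : HasContinuousLog fun ζ : sphere (0 : ℂ) r ↦ g ζ - g (-ζ) := by
    simpa [contract] using HasContinuousLog.of_homotopy hcont hne (by simpa [contract] using hlog)
  have : ConnectedSpace (sphere (0 : ℂ) r) :=
    isConnected_iff_connectedSpace.1 (isConnected_sphere (by simp) 0 hr.le)
  exact not_hasContinuousLog_of_odd (fun ζ ↦ by simp) hodd

theorem apply_zero_mem_interior_image_closedBall {r : ℝ} (hr : 0 < r)
    (hg : ContinuousOn g (closedBall 0 r)) (hinj : InjOn g (closedBall 0 r)) :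
    g 0 ∈ interior (g '' closedBall 0 r) := by
  have hgs : ContinuousOn g (sphere 0 r) := hg.mono sphere_subset_closedBall
  have h0 : g 0 ∈ (g '' sphere 0 r)ᶜ := by
    rintro ⟨ζ, hζ, h⟩
    have hζ0 := hinj (sphere_subset_closedBall hζ) (mem_closedBall_self hr.le) h
    exact hr.ne (by simpa [hζ0] using hζ)
  have hopen : IsOpen (g '' sphere 0 r)ᶜ :=
    ((isCompact_sphere 0 r).image_of_continuousOn hgs).isClosed.isOpen_compl
  obtain ⟨ε, hε, hball⟩ := isOpen_iff.1 hopen _ h0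
  refine mem_interior.2 ⟨ball (g 0) ε, fun b hb ↦ ?_, isOpen_ball, mem_ball_self hε⟩
  by_contra hb'
  have : ContractibleSpace (closedBall (0 : ℂ) r) := contractibleSpace_closedBall hr.le
  have hlog : HasContinuousLog fun z : closedBall (0 : ℂ) r ↦ g z - b :=
    .of_contractibleSpace (hg.comp_continuous continuous_subtype_val (·.2) |>.sub continuous_const)
      fun z hz ↦ hb' ⟨z, z.2, sub_eq_zero.1 hz⟩
  have hlog' : HasContinuousLog fun ζ : sphere (0 : ℂ) r ↦ g ζ - b :=
    hlog.comp (continuous_inclusion sphere_subset_closedBall)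
  let c : I → ℂ := fun t ↦ AffineMap.lineMap b (g 0) (t : ℝ)
  have hc : ∀ t, c t ∈ ball (g 0) ε := fun t ↦
    (convex_ball (g 0) ε).lineMap_mem hb (mem_ball_self hε) t.2
  have hcont : Continuous fun x : I × sphere (0 : ℂ) r ↦ g x.2 - c x.1 :=
    (hgs.comp_continuous (by fun_prop) fun x ↦ x.2.2).sub (by fun_prop)
  have hne : ∀ x : I × sphere (0 : ℂ) r, g x.2 - c x.1 ≠ 0 := fun x h ↦
    hball (hc x.1) ⟨x.2, x.2.2, sub_eq_zero.1 h⟩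
  refine not_hasContinuousLog_sub_apply_zero hr hg hinj ?_
  simpa [c] using HasContinuousLog.of_homotopy hcont hne (by simpa [c] using hlog')

theorem isOpen_image_of_injOn {U : Set ℂ} (hU : IsOpen U) (hg : ContinuousOn g U)
    (hinj : InjOn g U) : IsOpen (g '' U) := by
  refine isOpen_iff_mem_nhds.2 ?_
  rintro _ ⟨c, hc, rfl⟩
  obtain ⟨r, hr, hball⟩ := nhds_basis_closedBall.mem_iff.1 (hU.mem_nhds hc)
  have hmaps : MapsTo (c + ·) (closedBall 0 r) U := fun z hz ↦ hball (by simpa using hz)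
  have hint := apply_zero_mem_interior_image_closedBall (g := fun z ↦ g (c + z)) hr
    (hg.comp (by fun_prop) hmaps) (hinj.comp (add_right_injective c).injOn hmaps)
  have hsub : (fun z ↦ g (c + z)) '' closedBall 0 r ⊆ g '' U := by
    rintro _ ⟨z, hz, rfl⟩
    exact mem_image_of_mem g (hmaps hz)
  simpa using Filter.mem_of_superset (mem_interior_iff_mem_nhds.1 hint) hsub

end InvarianceOfDomain

section Unicoherence

variable {X : Type*} [TopologicalSpace X]

/- `exp θ` on `s` and `exp (-θ)` on `t` glue to a function on `X`. A logarithm of it differs from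
`θ` by a constant on `s` and from `-θ` by a constant on `t`. -/
theorem eq_of_exp_eq_exp_neg_on_inter [ContractibleSpace X] {s t : Set X} (hs : IsClosed s)
    (ht : IsClosed t) (hs' : IsPreconnected s) (ht' : IsPreconnected t) (hst : s ∪ t = univ)
    {θ : X → ℂ} (hθ : Continuous θ) (hexp : ∀ x ∈ s ∩ t, Complex.exp (θ x) = Complex.exp (-θ x))
    {a b : X} (ha : a ∈ s ∩ t) (hb : b ∈ s ∩ t) : θ a = θ b := by
  classical
  let f : X → ℂ := s.piecewise (fun x ↦ Complex.exp (θ x)) (fun x ↦ Complex.exp (-θ x))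
  have hfs : EqOn f (fun x ↦ Complex.exp (θ x)) s := piecewise_eqOn _ _ _
  have hft : EqOn f (fun x ↦ Complex.exp (-θ x)) t := fun x hx ↦ by
    by_cases hxs : x ∈ s
    · exact (hfs hxs).trans (hexp x ⟨hxs, hx⟩)
    · exact piecewise_eq_of_notMem _ _ _ hxs
  have hfc : Continuous f := by
    rw [← continuousOn_univ, ← hst]
    exact (ContinuousOn.congr (by fun_prop) hfs).union_of_isClosed
      (ContinuousOn.congr (by fun_prop) hft) hs ht
  obtain ⟨L, hL, hLf⟩ := HasContinuousLog.of_contractibleSpace hfc fun x ↦ by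
    by_cases hx : x ∈ s <;> simp [f, hx]
  have eqs : L a - θ a = L b - θ b := sub_eq_sub_of_exp_eq_exp hs' hL.continuousOn
    hθ.continuousOn (fun x hx ↦ (hLf x).trans (hfs hx)) ha.1 hb.1
  have eqt : L a - -θ a = L b - -θ b := sub_eq_sub_of_exp_eq_exp ht' hL.continuousOn
    hθ.neg.continuousOn (fun x hx ↦ (hLf x).trans (hft hx)) ha.2 hb.2
  linear_combination (eqt - eqs) / 2

theorem isPreconnected_inter_of_union_eq_univ [ContractibleSpace X] [NormalSpace X] {s t : Set X}
    (hs : IsClosed s) (ht : IsClosed t) (hs' : IsPreconnected s) (ht' : IsPreconnected t)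
    (hst : s ∪ t = univ) : IsPreconnected (s ∩ t) := by
  rw [isPreconnected_closed_iff]
  rintro u v hu hv hsub ⟨a, ha, hau⟩ ⟨b, hb, hbv⟩
  by_contra hempty
  have hdisj : Disjoint (s ∩ t ∩ u) (s ∩ t ∩ v) := Set.disjoint_left.2 fun x hxu hxv ↦
    hempty ⟨x, hxu.1, hxu.2, hxv.2⟩
  obtain ⟨w, hwu, hwv, -⟩ := exists_continuous_zero_one_of_isClosed ((hs.inter ht).inter hu)
    ((hs.inter ht).inter hv) hdisj
  let θ : X → ℂ := fun x ↦ Real.pi * w x * Complex.I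
  have hθu : ∀ x ∈ s ∩ t ∩ u, θ x = 0 := fun x hx ↦ by simp [θ, hwu hx]
  have hθv : ∀ x ∈ s ∩ t ∩ v, θ x = Real.pi * Complex.I := fun x hx ↦ by simp [θ, hwv hx]
  have hexp : ∀ x ∈ s ∩ t, Complex.exp (θ x) = Complex.exp (-θ x) := fun x hx ↦ by
    rcases hsub hx with h | h
    · simp [hθu x ⟨hx, h⟩]
    · simp [hθv x ⟨hx, h⟩, Complex.exp_neg]
  have hθab := eq_of_exp_eq_exp_neg_on_inter hs ht hs' ht' hst (by fun_prop) hexp ha hb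
  rw [hθu a ⟨ha, hau⟩, hθv b ⟨hb, hbv⟩] at hθab
  simp [Real.pi_ne_zero] at hθab

end Unicoherence

section Components

variable {X : Type*} [TopologicalSpace X] [LocallyConnectedSpace X] {A : Set X}

theorem frontier_connectedComponentIn_compl_subset (hA : IsClosed A) (x : X) :
    frontier (connectedComponentIn Aᶜ x) ⊆ A := by
  intro y hy
  by_contra hyA
  have hopen : ∀ z, IsOpen (connectedComponentIn Aᶜ z) := fun _ ↦
    hA.isOpen_compl.connectedComponentIn
  obtain ⟨z, hzy, hzx⟩ := mem_closure_iff.1 (frontier_subset_closure hy) _ (hopen y)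
    (mem_connectedComponentIn hyA)
  have hxy : connectedComponentIn Aᶜ x = connectedComponentIn Aᶜ y :=
    (connectedComponentIn_eq hzx).trans (connectedComponentIn_eq hzy).symm
  rw [hxy, (hopen y).frontier_eq] at hy
  exact hy.2 (mem_connectedComponentIn hyA)

theorem frontier_connectedComponentIn_compl_subset_frontier (hA : IsClosed A) (x : X) :
    frontier (connectedComponentIn Aᶜ x) ⊆ frontier A := by
  rw [frontier_eq_closure_inter_closure (s := A)]
  exact subset_inter ((frontier_connectedComponentIn_compl_subset hA x).trans subset_closure)
    (frontier_subset_closure.trans (closure_mono (connectedComponentIn_subset _ _)))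

/- Each component of `Aᶜ` other than that of `x` touches `A`, so adjoining all of them to `A` keeps
it preconnected. -/
theorem isPreconnected_compl_connectedComponentIn_compl [PreconnectedSpace X] (hA : IsClosed A)
    (hA' : IsPreconnected A) (hne : A.Nonempty) (x : X) :
    IsPreconnected (connectedComponentIn Aᶜ x)ᶜ := by
  obtain ⟨a, ha⟩ := hne
  have hAsub : A ⊆ (connectedComponentIn Aᶜ x)ᶜ :=
    subset_compl_comm.1 (connectedComponentIn_subset _ _)
  refine isPreconnected_of_forall a fun y hy ↦ ?_
  by_cases hyA : y ∈ A
  · exact ⟨A, hAsub, ha, hyA, hA'⟩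
  set C := connectedComponentIn Aᶜ y
  have hyC : y ∈ C := mem_connectedComponentIn hyA
  have hCA : C ⊆ Aᶜ := connectedComponentIn_subset _ _
  have hfr : (frontier C).Nonempty := nonempty_frontier_iff.2
    ⟨⟨y, hyC⟩, fun h ↦ hCA (h ▸ mem_univ a) ha⟩
  obtain ⟨b, hb⟩ := hfr
  have hbA : b ∈ A := frontier_connectedComponentIn_compl_subset hA y hb
  have hAC : IsPreconnected (A ∪ insert b C) :=
    hA'.union b hbA (mem_insert b C) (isPreconnected_connectedComponentIn.subset_closure
      (subset_insert b C) (insert_subset (frontier_subset_closure hb) subset_closure))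
  refine ⟨A ∪ insert b C, ?_, .inl ha, .inr (.inr hyC), hAC⟩
  refine union_subset hAsub (insert_subset (hAsub hbA) fun z hzC hzx ↦ hy ?_)
  rwa [connectedComponentIn_eq hzx, ← connectedComponentIn_eq hzC]

end Components

section IrreducibleContinua

variable {X : Type*} [TopologicalSpace X]

theorem isPreconnected_iInter_of_directed [T2Space X] {ι : Type*} [Nonempty ι] {K : ι → Set X}
    (hdir : Directed (· ⊇ ·) K) (hcomp : ∀ i, IsCompact (K i)) (hconn : ∀ i, IsPreconnected (K i)) :
    IsPreconnected (⋂ i, K i) := by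
  have hcl : IsClosed (⋂ i, K i) := isClosed_iInter fun i ↦ (hcomp i).isClosed
  have hc : IsCompact (⋂ i, K i) :=
    (hcomp (Classical.arbitrary ι)).of_isClosed_subset hcl (iInter_subset _ _)
  rw [isPreconnected_iff_subset_of_fully_disjoint_closed hcl]
  intro u v hu hv hsub hdisj
  obtain ⟨U, V, hU, hV, huU, hvV, hUV⟩ := SeparatedNhds.of_isCompact_isCompact
    (hc.inter_right hu) (hc.inter_right hv) (hdisj.mono inter_subset_right inter_subset_right)
  have hUV' : ⋂ i, K i ⊆ U ∪ V := fun x hx ↦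
    (hsub hx).imp (fun h ↦ huU ⟨hx, h⟩) fun h ↦ hvV ⟨hx, h⟩
  obtain ⟨i, hi⟩ := exists_subset_nhds_of_isCompact hdir hcomp
    fun x hx ↦ (hU.union hV).mem_nhds (hUV' hx)
  have hiI : ⋂ i, K i ⊆ K i := iInter_subset K i
  refine ((hconn i).subset_or_subset hU hV hUV hi).imp (fun h x hx ↦ ?_) fun h x hx ↦ ?_
  · exact (hsub hx).resolve_right fun hxv ↦
      Set.disjoint_left.1 hUV (h (hiI hx)) (hvV ⟨hx, hxv⟩)
  · exact (hsub hx).resolve_left fun hxu ↦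
      Set.disjoint_left.1 hUV (huU ⟨hx, hxu⟩) (h (hiI hx))

/-- `K` is a continuum irreducible about `s`, that is, minimal among the compact connected sets
containing `s`. Connectedness is encoded as `IsPreconnected`, which is equivalent for `s ≠ ∅`. -/
def IsIrreducibleAbout (s K : Set X) : Prop :=
  Minimal (fun K ↦ IsCompact K ∧ IsPreconnected K ∧ s ⊆ K) K

theorem exists_isIrreducibleAbout_subset [T2Space X] {s F : Set X} (hF : IsCompact F)
    (hF' : IsPreconnected F) (hs : s ⊆ F) : ∃ K ⊆ F, IsIrreducibleAbout s K := by
  refine zorn_superset_nonempty {K | IsCompact K ∧ IsPreconnected K ∧ s ⊆ K} ?_ F ⟨hF, hF', hs⟩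
  intro c hc hchain hne
  have := hne.to_subtype
  refine ⟨⋂₀ c, ?_, fun K hK ↦ sInter_subset_of_mem hK⟩
  rw [sInter_eq_iInter]
  have hdir : Directed (· ⊇ ·) ((↑) : c → Set X) :=
    (show IsChain (· ⊇ ·) c from hchain.symm).directedOn.directed_val
  have hcomp : IsCompact (⋂ K : c, (K : Set X)) :=
    (hc hne.some_mem).1.of_isClosed_subset (isClosed_iInter fun K ↦ (hc K.2).1.isClosed)
      (iInter_subset _ (⟨_, hne.some_mem⟩ : c))
  refine ⟨hcomp, ?_, subset_iInter fun K ↦ (hc K.2).2.2⟩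
  exact isPreconnected_iInter_of_directed hdir (fun K ↦ (hc K.2).1) fun K ↦ (hc K.2).2.1

theorem subset_of_inter_subset_of_isPreconnected_union {s t u v : Set X} (hs : IsClosed s)
    (ht : IsClosed t) (hst : IsPreconnected (s ∪ t)) (hne : t.Nonempty) (hu : IsClosed u)
    (hv : IsClosed v) (huv : Disjoint u v) (hsub : s ⊆ u ∪ v) (hinter : s ∩ t ⊆ u) : s ⊆ u := by
  have hdisj : Disjoint (t ∪ s ∩ u) (s ∩ v) := disjoint_union_left.2
    ⟨Set.disjoint_left.2 fun x hxt hx ↦ huv.le_bot ⟨hinter ⟨hx.1, hxt⟩, hx.2⟩,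
      huv.mono inter_subset_right inter_subset_right⟩
  have hcover : s ∪ t ⊆ (t ∪ s ∩ u) ∪ s ∩ v := by
    rintro x (hx | hx)
    · exact (hsub hx).imp (fun h ↦ .inr ⟨hx, h⟩) fun h ↦ ⟨hx, h⟩
    · exact .inl (.inl hx)
  rcases isPreconnected_iff_subset_of_disjoint_closed.1 hst _ _ (ht.union (hs.inter hu))
    (hs.inter hv) hcover (by rw [hdisj.inter_eq, inter_empty]) with h | h
  · exact fun x hx ↦ (h (.inl hx)).elim (fun hxt ↦ hinter ⟨hx, hxt⟩) (·.2)
  · obtain ⟨x, hx⟩ := hne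
    exact (hdisj.le_bot ⟨.inl hx, h (.inr hx)⟩).elim

theorem exists_isClosed_separation_of_not_isPreconnected {s t : Set X} {p q : X} (hs : IsClosed s)
    (ht : IsClosed t) (hst : IsPreconnected (s ∪ t)) (hpq : s ∩ t = {p, q})
    (hs' : ¬ IsPreconnected s) :
    ∃ u v, IsClosed u ∧ IsClosed v ∧ Disjoint u v ∧ u ∪ v = s ∧ p ∈ u ∧ q ∈ v := by
  rw [isPreconnected_iff_subset_of_fully_disjoint_closed hs] at hs'
  push Not at hs'
  obtain ⟨u, v, hu, hv, hsub, huv, hsu, hsv⟩ := hs'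
  have hp : p ∈ s ∩ t := hpq ▸ mem_insert p {q}
  have hq : q ∈ s ∩ t := hpq ▸ mem_insert_of_mem p rfl
  have hpq_u : ¬ {p, q} ⊆ u := fun h ↦ hsu <|
    subset_of_inter_subset_of_isPreconnected_union hs ht hst ⟨p, hp.2⟩ hu hv huv hsub (hpq ▸ h)
  have hpq_v : ¬ {p, q} ⊆ v := fun h ↦ hsv <|
    subset_of_inter_subset_of_isPreconnected_union hs ht hst ⟨p, hp.2⟩ hv hu huv.symm
      (union_comm u v ▸ hsub) (hpq ▸ h)
  have huv' : Disjoint (s ∩ u) (s ∩ v) := huv.mono inter_subset_right inter_subset_right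
  have hunion : s ∩ u ∪ s ∩ v = s := by rw [← inter_union_distrib_left, inter_eq_left.2 hsub]
  rcases hsub hp.1 with hpu | hpv <;> rcases hsub hq.1 with hqu | hqv
  · exact absurd (pair_subset hpu hqu) hpq_u
  · exact ⟨_, _, hs.inter hu, hs.inter hv, huv', hunion, ⟨hp.1, hpu⟩, hq.1, hqv⟩
  · exact ⟨_, _, hs.inter hv, hs.inter hu, huv'.symm, union_comm _ _ ▸ hunion, ⟨hp.1, hpv⟩,
      hq.1, hqu⟩
  · exact absurd (pair_subset hpv hqv) hpq_v

theorem isPreconnected_or_isPreconnected_of_inter_eq_pair {s t : Set X} {p q : X} (hs : IsClosed s)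
    (ht : IsClosed t) (hst : IsPreconnected (s ∪ t)) (hpq : s ∩ t = {p, q}) :
    IsPreconnected s ∨ IsPreconnected t := by
  by_contra! h
  obtain ⟨u, v, hu, hv, huv, rfl, hpu, hqv⟩ :=
    exists_isClosed_separation_of_not_isPreconnected hs ht hst hpq h.1
  obtain ⟨u', v', hu', hv', huv', rfl, hpu', hqv'⟩ :=
    exists_isClosed_separation_of_not_isPreconnected ht hs (union_comm _ _ ▸ hst)
      (inter_comm _ _ ▸ hpq) h.2
  have hinter : ∀ x ∈ u ∪ v, x ∈ u' ∪ v' → x = p ∨ x = q := fun x hx hx' ↦ hpq.le ⟨hx, hx'⟩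
  have huv'_disj : Disjoint u v' := Set.disjoint_left.2 fun x hx hx' ↦ by
    rcases hinter x (.inl hx) (.inr hx') with rfl | rfl
    · exact huv'.le_bot ⟨hpu', hx'⟩
    · exact huv.le_bot ⟨hx, hqv⟩
  have hu'v_disj : Disjoint u' v := Set.disjoint_left.2 fun x hx' hx ↦ by
    rcases hinter x (.inr hx) (.inl hx') with rfl | rfl
    · exact huv.le_bot ⟨hpu, hx⟩
    · exact huv'.le_bot ⟨hx', hqv'⟩
  have hdisj : Disjoint (u ∪ u') (v ∪ v') := by
    simp only [disjoint_union_left, disjoint_union_right]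
    exact ⟨⟨huv, hu'v_disj⟩, huv'_disj, huv'⟩
  rcases isPreconnected_iff_subset_of_disjoint_closed.1 hst _ _ (hu.union hu') (hv.union hv')
    (union_union_union_comm u v u' v').le (by rw [hdisj.inter_eq, inter_empty]) with h | h
  · exact hdisj.le_bot ⟨h (.inl (.inr hqv)), .inl hqv⟩
  · exact hdisj.le_bot ⟨.inl hpu, h (.inl (.inl hpu))⟩

/- A separation of `K \ {p, q}` splits `K` into two closed sets meeting exactly in `{p, q}`. One of
them is connected, so by minimality it is all of `K`. -/
theorem IsIrreducibleAbout.isPreconnected_sdiff_pair [T2Space X] {K : Set X} {p q : X}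
    (hK : IsIrreducibleAbout {p, q} K) : IsPreconnected (K \ {p, q}) := by
  obtain ⟨hcomp, hconn, hpq⟩ := hK.prop
  rw [isPreconnected_iff_subset_of_disjoint]
  intro U V hU hV hsub hUV
  let KU := K \ (V \ {p, q})
  let KV := K \ (U \ {p, q})
  have hcl : IsClosed ({p, q} : Set X) := (toFinite _).isClosed
  have hKU : IsCompact KU := hcomp.diff (hV.sdiff hcl)
  have hKV : IsCompact KV := hcomp.diff (hU.sdiff hcl)
  have hdisj : ∀ x ∈ K, x ∉ ({p, q} : Set X) → x ∈ U → x ∉ V := fun x hx hxpq hxU hxV ↦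
    hUV.le ⟨⟨hx, hxpq⟩, hxU, hxV⟩
  have hunion : KU ∪ KV = K := by grind
  have hinter : KU ∩ KV = {p, q} := by
    refine Subset.antisymm (fun x hx ↦ by_contra fun hxpq ↦ ?_) (by grind)
    exact (hsub ⟨hx.1.1, hxpq⟩).elim (hx.2.2 ⟨·, hxpq⟩) (hx.1.2 ⟨·, hxpq⟩)
  rcases isPreconnected_or_isPreconnected_of_inter_eq_pair hKU.isClosed hKV.isClosed
    (hunion ▸ hconn) hinter with h | h
  · have hKU_eq : K ⊆ KU := hK.le_of_le ⟨hKU, h, hinter ▸ inter_subset_left⟩ sdiff_subset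
    grind
  · have hKV_eq : K ⊆ KV := hK.le_of_le ⟨hKV, h, hinter ▸ inter_subset_right⟩ sdiff_subset
    grind

theorem mem_closure_sdiff_pair [T1Space X] {K : Set X} (hK : IsPreconnected K) {p q : X}
    (hpK : p ∈ K) (hqK : q ∈ K) (hpq : p ≠ q) : p ∈ closure (K \ {p, q}) := by
  have hacc : AccPt p (𝓟 K) := hK.preperfect_of_nontrivial ⟨p, hpK, q, hqK, hpq⟩ p hpK
  rw [mem_closure_iff_frequently]
  refine ((accPt_iff_frequently.1 hacc).and_eventually (isOpen_ne.mem_nhds hpq)).mono ?_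
  rintro x ⟨⟨hxp, hxK⟩, hxq⟩
  exact ⟨hxK, by simp [hxp, show x ≠ q from hxq]⟩

theorem exists_isPreconnected_subset_sdiff_pair [T2Space X] {F : Set X} (hF : IsCompact F)
    (hF' : IsPreconnected F) {p q : X} (hp : p ∈ F) (hq : q ∈ F) (hpq : p ≠ q) :
    ∃ C ⊆ F \ {p, q}, IsPreconnected C ∧ {p, q} ⊆ closure C := by
  obtain ⟨K, hKF, hK⟩ := exists_isIrreducibleAbout_subset hF hF' (pair_subset hp hq)
  obtain ⟨-, hconn, hpqK⟩ := hK.prop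
  obtain ⟨hpK, hqK⟩ := pair_subset_iff.1 hpqK
  have hpC : p ∈ closure (K \ {p, q}) := mem_closure_sdiff_pair hconn hpK hqK hpq
  have hqC : q ∈ closure (K \ {p, q}) :=
    pair_comm q p ▸ mem_closure_sdiff_pair hconn hqK hpK hpq.symm
  exact ⟨K \ {p, q}, sdiff_subset_sdiff_left hKF, hK.isPreconnected_sdiff_pair,
    pair_subset hpC hqC⟩

end IrreducibleContinua

section CircleArcs

theorem range_subset_closure_image_Ioo {X : Type*} [TopologicalSpace X] {f : I → X}
    (hf : Continuous f) : range f ⊆ closure (f '' Ioo 0 1) := by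
  have hclosure : closure (Ioo (0 : I) 1) = univ :=
    (closure_Ioo zero_ne_one).trans univ_eq_Icc.symm
  simpa only [hclosure, image_univ] using image_closure_subset_closure_image hf (s := Ioo 0 1)

theorem isOpen_compl_range_circlePath (x y : Circle) : IsOpen (range (Circle.path x y))ᶜ :=
  (isCompact_range (Circle.path x y).continuous).isClosed.isOpen_compl

theorem isPreconnected_compl_range_circlePath {x y : Circle} (hxy : x ≠ y) :
    IsPreconnected (range (Circle.path x y))ᶜ := by
  rw [Circle.compl_range_path hxy]
  exact isPreconnected_Ioo.image _ (Circle.path y x).continuous.continuousOn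

theorem pair_subset_closure_compl_range_circlePath {x y : Circle} (hxy : x ≠ y) :
    {x, y} ⊆ closure (range (Circle.path x y))ᶜ := by
  rw [Circle.compl_range_path hxy]
  have hrange := range_subset_closure_image_Ioo (Circle.path y x).continuous
  exact pair_subset (hrange ⟨1, Path.target _⟩) (hrange ⟨0, Path.source _⟩)

theorem exists_isPreconnected_disjoint_range_of_injective {α : I → Circle} (hα : Continuous α)
    (hinj : Injective α) :
    ∃ B, IsPreconnected B ∧ Disjoint B (range α) ∧ {α 0, α 1} ⊆ closure B := by
  have hne : α 0 ≠ α 1 := hinj.ne zero_ne_one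
  let U := (range (Circle.path (α 0) (α 1)))ᶜ
  let V := (range (Circle.path (α 1) (α 0)))ᶜ
  have hU : IsOpen U := isOpen_compl_range_circlePath _ _
  have hV : IsOpen V := isOpen_compl_range_circlePath _ _
  have hcover : α '' Ioo 0 1 ⊆ U ∪ V := by
    rw [← compl_inter, Circle.range_path_inter_range_path hne]
    rintro _ ⟨t, ht, rfl⟩
    simp [hinj.eq_iff, ht.1.ne', ht.2.ne]
  have hUV : Disjoint U V := disjoint_compl_left_iff_subset.2
    (compl_subset_iff_union.2 (Circle.range_path_union_range_path hne.symm))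
  have hrange : ∀ W, IsOpen W → Disjoint W (α '' Ioo 0 1) → Disjoint W (range α) :=
    fun W hW h ↦ (h.closure_right hW).mono_right (range_subset_closure_image_Ioo hα)
  rcases (isPreconnected_Ioo.image α hα.continuousOn).subset_or_subset hU hV hUV hcover with h | h
  · exact ⟨V, isPreconnected_compl_range_circlePath hne.symm, hrange V hV (hUV.symm.mono_right h),
      pair_comm (α 0) (α 1) ▸ pair_subset_closure_compl_range_circlePath hne.symm⟩
  · exact ⟨U, isPreconnected_compl_range_circlePath hne, hrange U hU (hUV.mono_right h),
      pair_subset_closure_compl_range_circlePath hne⟩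

end CircleArcs
section Separation

theorem exists_continuous_comp_eq_of_range_subset {X Y Z : Type*} [TopologicalSpace X]
    [TopologicalSpace Y] [TopologicalSpace Z] {f : X → Y} (hf : IsEmbedding f) {γ : Z → Y}
    (hγ : Continuous γ) (hrange : range γ ⊆ range f) :
    ∃ α : Z → X, Continuous α ∧ f ∘ α = γ := by
  choose α hα using fun z ↦ hrange (mem_range_self z)
  have hfα : f ∘ α = γ := funext hα
  exact ⟨α, hf.continuous_iff.2 (hfα ▸ hγ), hfα⟩

variable {X : Type*} [TopologicalSpace X] [CompactSpace X] [T2Space X] [ContractibleSpace X]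
  [LocallyConnectedSpace X] {A : Set X}

theorem isPreconnected_frontier_connectedComponentIn_compl (hA : IsClosed A)
    (hA' : IsPreconnected A) (hne : A.Nonempty) (x : X) :
    IsPreconnected (frontier (connectedComponentIn Aᶜ x)) := by
  set W := connectedComponentIn Aᶜ x
  have hW : IsOpen W := hA.isOpen_compl.connectedComponentIn
  rw [hW.frontier_eq, sdiff_eq]
  exact isPreconnected_inter_of_union_eq_univ isClosed_closure hW.isClosed_compl
    isPreconnected_connectedComponentIn.closure
    (isPreconnected_compl_connectedComponentIn_compl hA hA' hne x)
    (univ_subset_iff.1 ((union_compl_self W).ge.trans (union_subset_union_left _ subset_closure)))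

theorem exists_isPreconnected_subset_frontier_sdiff_pair (hA : IsClosed A) (hA' : IsPreconnected A)
    {B : Set X} (hB : IsPreconnected B) (hBA : Disjoint B A) {p q : X} (hpq : p ≠ q)
    (hpqA : {p, q} ⊆ A) (hpqB : {p, q} ⊆ closure B) :
    ∃ C ⊆ frontier A \ {p, q}, IsPreconnected C ∧ {p, q} ⊆ closure C := by
  obtain ⟨hpA, hqA⟩ := pair_subset_iff.1 hpqA
  obtain ⟨hpB, hqB⟩ := pair_subset_iff.1 hpqB
  obtain ⟨b, hb⟩ : B.Nonempty := closure_nonempty_iff.1 ⟨p, hpB⟩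
  set W := connectedComponentIn Aᶜ b
  have hBW : B ⊆ W := hB.subset_connectedComponentIn hb hBA.subset_compl_right
  have hWA : W ⊆ Aᶜ := connectedComponentIn_subset _ _
  have hmem : ∀ x ∈ A, x ∈ closure B → x ∈ frontier W := fun x hxA hxB ↦
    (hA.isOpen_compl.connectedComponentIn.frontier_eq).ge
      ⟨closure_mono hBW hxB, fun hxW ↦ hWA hxW hxA⟩
  obtain ⟨C, hC, hC', hCpq⟩ := exists_isPreconnected_subset_sdiff_pair isClosed_frontier.isCompact
    (isPreconnected_frontier_connectedComponentIn_compl hA hA' ⟨p, hpA⟩ b)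
    (hmem p hpA hpB) (hmem q hqA hqB) hpq
  exact ⟨C, hC.trans (sdiff_subset_sdiff_left
    (frontier_connectedComponentIn_compl_subset_frontier hA b)), hC', hCpq⟩

theorem exists_isPreconnected_subset_frontier_of_preimage_eq_range {β : Circle → X}
    (hβ : Continuous β) (hβ' : Injective β) (hA : IsClosed A) (hA' : IsPreconnected A)
    {α : I → Circle} (hα : Continuous α) (hα' : Injective α) (hAα : β ⁻¹' A = range α) :
    ∃ C ⊆ frontier A \ {β (α 0), β (α 1)}, IsPreconnected C ∧
      {β (α 0), β (α 1)} ⊆ closure C := by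
  obtain ⟨B, hB, hBα, hcl⟩ := exists_isPreconnected_disjoint_range_of_injective hα hα'
  have hBA : Disjoint (β '' B) A := by rwa [disjoint_image_left, hAα]
  have hmem : ∀ t, β (α t) ∈ A := fun t ↦ hAα.ge (mem_range_self t)
  refine exists_isPreconnected_subset_frontier_sdiff_pair hA hA' (hB.image β hβ.continuousOn) hBA
    ((hβ'.comp hα').ne zero_ne_one) (pair_subset (hmem 0) (hmem 1)) ?_
  rw [← image_pair]
  exact (image_mono hcl).trans (image_closure_subset_closure_image hβ)

variable {Y : Type*} [TopologicalSpace Y]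

theorem exists_isPreconnected_subset_image_frontier_preimage {f : X → Y} (hf : IsEmbedding f)
    {β : Circle → X} (hβ : Continuous β) (hβ' : Injective β) {A : Set Y} (hA : IsClosed A)
    (hA' : IsPreconnected A) (hAf : A ⊆ range f) {γ : I → Y} (hγ : Continuous γ) (hγ' : Injective γ)
    (hAγ : range γ = A ∩ range (f ∘ β)) :
    ∃ C ⊆ f '' frontier (f ⁻¹' A) \ {γ 0, γ 1}, IsPreconnected C ∧ {γ 0, γ 1} ⊆ closure C := by
  have hfβ : IsEmbedding (f ∘ β) := hf.comp (hβ.isClosedEmbedding hβ').isEmbedding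
  obtain ⟨α, hα, rfl⟩ := exists_continuous_comp_eq_of_range_subset hfβ hγ
    (hAγ.le.trans inter_subset_right)
  have hpre : IsPreconnected (f ⁻¹' A) := by
    rwa [← hf.isInducing.isPreconnected_image, image_preimage_eq_of_subset hAf]
  have hβα : β ⁻¹' (f ⁻¹' A) = range α := by
    rw [← preimage_comp, ← preimage_inter_range, ← hAγ, range_comp,
      preimage_image_eq _ hfβ.injective]
  obtain ⟨C, hC, hC', hcl⟩ := exists_isPreconnected_subset_frontier_of_preimage_eq_range
    hβ hβ' (hA.preimage hf.continuous) hpre hα hγ'.of_comp hβα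
  refine ⟨f '' C, ?_, hC'.image f hf.continuous.continuousOn, ?_⟩
  · simpa only [image_sdiff hf.injective, image_pair, comp_apply] using image_mono (f := f) hC
  · simpa only [image_pair, comp_apply] using
      (image_mono hcl).trans (image_closure_subset_closure_image hf.continuous)

end Separation
section JordanDomain

theorem locallyConnectedSpace_of_convex {E : Type*} [SeminormedAddCommGroup E] [NormedSpace ℝ E]
    {s : Set E} (hs : Convex ℝ s) : LocallyConnectedSpace s := by
  refine locallyConnectedSpace_of_connected_bases (fun x r ↦ ball x r) (fun _ r ↦ 0 < r)
    (fun x ↦ nhds_basis_ball) fun x r _ ↦ ?_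
  rw [← IsInducing.subtypeVal.isPreconnected_image]
  have hball : (↑) '' ball x r = s ∩ ball (x : E) r := by
    rw [← Subtype.image_preimage_coe]
    rfl
  rw [hball]
  exact (hs.inter (convex_ball _ _)).isPreconnected

theorem inter_range_sdiff_nonempty_of_mem_frontier_preimage {X Y : Type*} [TopologicalSpace X]
    [TopologicalSpace Y] {f : X → Y} (hf : Continuous f) {A V : Set Y} (hV : IsOpen V) {x : X}
    (hx : x ∈ frontier (f ⁻¹' A)) (hxV : f x ∈ V) : (V ∩ (range f \ A)).Nonempty := by
  rw [frontier_eq_closure_inter_closure] at hx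
  obtain ⟨z, hzV, hzA⟩ := mem_closure_iff.1 hx.2 _ (hV.preimage hf) hxV
  exact ⟨f z, hzV, mem_range_self z, hzA⟩

theorem exists_subset_closure_connectedComponentIn {X : Type*} [TopologicalSpace X] {C s t : Set X}
    (hC : IsPreconnected C) (hCs : C ⊆ s) (ht : t.Nonempty) (htC : t ⊆ closure C) :
    ∃ x ∈ s, t ⊆ closure (connectedComponentIn s x) := by
  obtain ⟨x, hx⟩ := closure_nonempty_iff.1 (ht.mono htC)
  exact ⟨x, hCs hx, htC.trans (closure_mono (hC.subset_connectedComponentIn hx hCs))⟩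

theorem frontier_eq_image_sphere {X Y : Type*} [PseudoMetricSpace X] [TopologicalSpace Y]
    {φ : X → Y} {Ω : Set Y} {c : X} {r : ℝ} (hφ : InjOn φ (closedBall c r)) (hΩ : IsOpen Ω)
    (hφcl : φ '' closedBall c r = closure Ω) (hφb : φ '' ball c r = Ω) :
    frontier Ω = φ '' sphere c r := by
  rw [hΩ.frontier_eq, ← hφcl, ← closedBall_sdiff_ball, hφ.image_sdiff,
    inter_eq_right.2 ball_subset_closedBall, hφb]

theorem image_frontier_preimage_sdiff_subset {X Y : Type*} [TopologicalSpace X]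
    [TopologicalSpace Y] {f : X → Y} (hf : Continuous f) {A S Ω : Set Y} (hA : IsClosed A)
    (hΩ : IsOpen Ω) (hfΩ : range f = closure Ω)
    (hnbhd : ∀ x ∈ (A ∩ frontier Ω) \ S, ∃ V, IsOpen V ∧ x ∈ V ∧ V ∩ (closure Ω \ A) = ∅) :
    f '' frontier (f ⁻¹' A) \ S ⊆ frontier A ∩ Ω := by
  rintro _ ⟨⟨z, hz, rfl⟩, hzS⟩
  refine ⟨hf.frontier_preimage_subset A hz, by_contra fun hzΩ ↦ ?_⟩
  have hzfr : f z ∈ frontier Ω := hΩ.frontier_eq.ge ⟨hfΩ.le (mem_range_self z), hzΩ⟩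
  obtain ⟨V, hV, hzV, hVA⟩ := hnbhd (f z) ⟨⟨(hA.preimage hf).frontier_subset hz, hzfr⟩, hzS⟩
  exact (inter_range_sdiff_nonempty_of_mem_frontier_preimage hf hV hz hzV).ne_empty (hfΩ ▸ hVA)

theorem exists_isPreconnected_subset_image_frontier_of_closedBall {Y : Type*} [TopologicalSpace Y]
    {f : closedBall (0 : ℂ) 1 → Y} (hf : IsEmbedding f) {A : Set Y} (hA : IsClosed A)
    (hA' : IsPreconnected A) (hAf : A ⊆ range f) {γ : I → Y} (hγ : Continuous γ)
    (hγ' : Injective γ) (hAγ : range γ = A ∩ f '' ((↑) ⁻¹' sphere (0 : ℂ) 1)) :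
    ∃ C ⊆ f '' frontier (f ⁻¹' A) \ {γ 0, γ 1}, IsPreconnected C ∧ {γ 0, γ 1} ⊆ closure C := by
  have : ContractibleSpace (closedBall (0 : ℂ) 1) := contractibleSpace_closedBall zero_le_one
  have : LocallyConnectedSpace (closedBall (0 : ℂ) 1) :=
    locallyConnectedSpace_of_convex (convex_closedBall 0 1)
  let β : Circle → closedBall (0 : ℂ) 1 := fun ζ ↦ ⟨ζ, by simp [Circle.norm_coe]⟩
  have hβ : Continuous β := by fun_prop
  have hβ' : Injective β := fun ζ ξ h ↦
    Circle.ext (congrArg ((↑) : closedBall (0 : ℂ) 1 → ℂ) h)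
  have hrange : range β = (↑) ⁻¹' sphere (0 : ℂ) 1 := Subset.antisymm
    (range_subset_iff.2 fun ζ ↦ mem_sphere_zero_iff_norm.2 ζ.norm_coe)
    fun z hz ↦ ⟨⟨z, hz⟩, rfl⟩
  exact exists_isPreconnected_subset_image_frontier_preimage hf hβ hβ' hA hA' hAf hγ hγ'
    (by rwa [range_comp, hrange])

end JordanDomain

/-- Separation Lemma: Let `Ω` be a Jordan domain (image of the open unit
disk under a map `φ` that is continuous and injective on the closed unit disk, sending
the closed disk onto `clos Ω`). Let `A ⊆ clos Ω` be closed and connected with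
`Γ = A ∩ ∂Ω` a simple arc from `P` to `Q`, such that every point of `Γ ∖ {P, Q}` has a
neighborhood disjoint from `clos Ω ∖ A`. Then `∂A ∩ Ω` has a connected component whose
closure contains both `P` and `Q`. -/
theorem stmt_11 (Ω : Set ℂ) (φ : ℂ → ℂ)
    (hφc : ContinuousOn φ (Metric.closedBall (0 : ℂ) 1))
    (hφi : Set.InjOn φ (Metric.closedBall (0 : ℂ) 1))
    (hφcl : φ '' Metric.closedBall (0 : ℂ) 1 = closure Ω)
    (hφb : φ '' Metric.ball (0 : ℂ) 1 = Ω)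
    (A : Set ℂ) (hAcl : IsClosed A) (hAconn : IsConnected A) (hAsub : A ⊆ closure Ω)
    (P Q : ℂ) (hPQ : P ≠ Q)
    (γ : ℝ → ℂ) (hγc : ContinuousOn γ (Set.Icc 0 1)) (hγi : Set.InjOn γ (Set.Icc 0 1))
    (hγim : γ '' Set.Icc 0 1 = A ∩ frontier Ω)
    (hγ0 : γ 0 = P) (hγ1 : γ 1 = Q)
    (hnbhd : ∀ x ∈ (A ∩ frontier Ω) \ {P, Q},
      ∃ V : Set ℂ, IsOpen V ∧ x ∈ V ∧ V ∩ (closure Ω \ A) = ∅) :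
    ∃ x ∈ frontier A ∩ Ω,
      P ∈ closure (connectedComponentIn (frontier A ∩ Ω) x) ∧
      Q ∈ closure (connectedComponentIn (frontier A ∩ Ω) x) := by
  let f := (closedBall (0 : ℂ) 1).domRestrict φ
  have hf : IsEmbedding f :=
    (hφc.domRestrict.isClosedEmbedding (injOn_iff_injective.1 hφi)).isEmbedding
  have hfΩ : range f = closure Ω := by rw [range_domRestrict, hφcl]
  have hΩ : IsOpen Ω := hφb ▸ isOpen_image_of_injOn isOpen_ball
    (hφc.mono ball_subset_closedBall) (hφi.mono ball_subset_closedBall)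
  have hfr : frontier Ω = f '' ((↑) ⁻¹' sphere (0 : ℂ) 1) := by
    rw [image_domRestrict, inter_eq_left.2 sphere_subset_closedBall,
      frontier_eq_image_sphere hφi hΩ hφcl hφb]
  obtain ⟨C, hC, hCconn, hPQC⟩ := exists_isPreconnected_subset_image_frontier_of_closedBall hf hAcl
    hAconn.isPreconnected (hAsub.trans hfΩ.ge) hγc.domRestrict (injOn_iff_injective.1 hγi)
    (by rw [range_domRestrict, hγim, hfr])
  simp only [domRestrict_apply, Icc.coe_zero, Icc.coe_one, hγ0, hγ1] at hC hPQC
  have hCΩ : C ⊆ frontier A ∩ Ω :=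
    hC.trans (image_frontier_preimage_sdiff_subset hf.continuous hAcl hΩ hfΩ hnbhd)
  obtain ⟨x, hx, hPQx⟩ := exists_subset_closure_connectedComponentIn hCconn hCΩ
    (insert_nonempty P {Q}) hPQC
  exact ⟨x, hx, pair_subset_iff.1 hPQx⟩
end

section
/- Let p, q ∈ ℂ[z] be coprime polynomials with q ≠ 0 and d = max(deg p, deg q) ≥ 2. Let n be the number of distinct poles of r = p/q on the Riemann sphere, i.e. n = (number of distinct roots of q) + (1 if deg p > deg q, else 0). Then the set F = {z ∈ ℂ : q(z) ≠ 0 and p(z) = conj(z)·q(z)} of finite fixed points of z ↦ conj(r(z)) is finite, and, counting also ∞ as a fixed point when deg p > deg q, the total number of fixed points satisfies |F| + (1 if deg p > deg q, else 0) ≤ min(3d + 2n − 3, 5d − 5). -/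
open Polynomial

/-- The set of finite fixed points of `z ↦ conj(r(z))` for the rational function
`r = p/q`: points `z` with `q(z) ≠ 0` and `p(z) = conj(z)·q(z)`. -/
def fixedPts (p q : Polynomial ℂ) : Set ℂ :=
  {z | q.eval z ≠ 0 ∧ p.eval z = (starRingEnd ℂ) z * q.eval z}

open ComplexConjugate

/-!
Write `f z = conj (p z / q z)`. A Möbius change of coordinate moves `∞` away from the points of
period two of `f`, and a small perturbation `p + c q` makes the `d² + 1` points of period two
simple. The perturbation loses no fixed points: along a suitable real line of values of `c`, every
fixed point splits into two, shared among the perturbations by `t` and by `-t`, so one of the two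
has at least as many fixed points as `f`.

Apart from one fixed point `a`, the number of repelling fixed points is then at most the number of
attracting ones plus `d`. Indeed, residues of `f ∘ f` define a Hermitian form on the functions on
the `d²` points of period two other than `a`; two-cycles contribute hyperbolic planes to it,
repelling fixed points positive and attracting ones negative directions. The residue theorem makes
a space of polynomials in `1 / (z - a)` and `1 / conj (f z - a)`, of dimension `d (d - 1) / 2`,
isotropic, which bounds the signature by `d² - d (d - 1) = d`.

By Fatou's theorem every attracting fixed point attracts a critical point. There are `2 d - 2`
critical points with multiplicity, which gives `5 d - 5`; since all multiple poles have the same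
image, they serve a single attracting fixed point, which gives the bound by the number of poles.
-/

/-! ### Isotropic subspaces of a Hermitian form twisted by an involution -/

section TwistedForm

variable {ι : Type*} {σ : ι → ι} {w : ι → ℂ}

lemma re_ne_zero_of_fixed (hw : ∀ i, w (σ i) = conj (w i)) (hw0 : ∀ i, w i ≠ 0) {i : ι}
    (hi : σ i = i) : (w i).re ≠ 0 := by
  have him : (w i).im = 0 := Complex.conj_eq_iff_im.mp (by rw [← hw i, hi])
  exact fun hre ↦ hw0 i (Complex.ext hre him)

variable [Fintype ι]

/-- The sesquilinear form `∑ uᵢ conj(v_{σ i}) wᵢ` on `ι → ℂ`. When `σ` is an involution and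
`w (σ i) = conj (w i)` it is Hermitian; a fixed point of `σ` contributes the sign of `wᵢ` to the
signature, and a two-cycle contributes a hyperbolic plane. -/
def twistedForm (σ : ι → ι) (w u v : ι → ℂ) : ℂ := ∑ i, u i * conj (v (σ i)) * w i

lemma twistedForm_eq_zero_of_mem_span {s : Set (ι → ℂ)}
    (hs : ∀ u ∈ s, ∀ v ∈ s, twistedForm σ w u v = 0) {u v : ι → ℂ}
    (hu : u ∈ Submodule.span ℂ s) (hv : v ∈ Submodule.span ℂ s) : twistedForm σ w u v = 0 := by
  induction hu, hv using Submodule.span_induction₂ with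
  | mem_mem u v hu hv => exact hs u hu v hv
  | zero_left v _ => simp [twistedForm]
  | zero_right u _ => simp [twistedForm]
  | add_left u u' v _ _ _ h h' =>
    simpa [twistedForm, add_mul, Finset.sum_add_distrib] using by simp_all [twistedForm]
  | add_right u v v' _ _ _ h h' =>
    simpa [twistedForm, add_mul, mul_add, Finset.sum_add_distrib] using by simp_all [twistedForm]
  | smul_left c u v _ _ h =>
    rw [← mul_zero c, ← h]
    simp only [twistedForm, Finset.mul_sum, Pi.smul_apply, smul_eq_mul, mul_assoc]
  | smul_right c u v _ _ h =>
    rw [← mul_zero (conj c), ← h]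
    simp only [twistedForm, Finset.mul_sum, Pi.smul_apply, smul_eq_mul, map_mul]
    exact Finset.sum_congr rfl fun i _ ↦ by ring

variable [LinearOrder ι]

lemma card_eq_card_fixed_add_two_mul (hσ : Function.Involutive σ) :
    Fintype.card ι =
      Fintype.card {i // σ i = i} + 2 * Fintype.card {i // i < σ i} := by
  have hswap : Fintype.card {i // i < σ i} = Fintype.card {i // σ i < i} :=
    Fintype.card_congr <| hσ.toPerm.subtypeEquiv fun i ↦ by
      rw [Function.Involutive.coe_toPerm, hσ i]
  have hsplit : Fintype.card ι = Fintype.card {i // σ i = i} + Fintype.card {i // σ i ≠ i} :=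
    (Fintype.card_congr (Equiv.sumCompl fun i ↦ σ i = i)).symm.trans Fintype.card_sum
  have hne : Fintype.card {i // σ i ≠ i} =
      Fintype.card {i // i < σ i} + Fintype.card {i // σ i < i} := by
    rw [← Fintype.card_subtype_or_disjoint _ _ (Pi.disjoint_iff.2 fun i ↦
      Prop.disjoint_iff.2 fun h ↦ lt_asymm h.1 h.2)]
    exact Fintype.card_congr (Equiv.subtypeEquivRight fun i ↦ by rw [ne_comm, ne_iff_lt_or_gt])
  omega

lemma card_fixed_eq_card_pos_add_card_neg (hw : ∀ i, w (σ i) = conj (w i))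
    (hw0 : ∀ i, w i ≠ 0) :
    Fintype.card {i // σ i = i} =
      Fintype.card {i // σ i = i ∧ 0 < (w i).re} + Fintype.card {i // σ i = i ∧ (w i).re < 0} := by
  rw [← Fintype.card_subtype_or_disjoint _ _ (Pi.disjoint_iff.2 fun i ↦
    Prop.disjoint_iff.2 fun h ↦ lt_asymm h.1.2 h.2.2)]
  refine Fintype.card_congr (Equiv.subtypeEquivRight fun i ↦ ?_)
  rw [← and_or_left, and_iff_left_of_imp]
  exact fun hi ↦ (re_ne_zero_of_fixed hw hw0 hi).lt_or_gt.symm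

/-- On such vectors every summand of the form has nonnegative real part, hence vanishes. -/
lemma eq_zero_of_twistedForm_self_eq_zero (hσ : Function.Involutive σ)
    (hw : ∀ i, w (σ i) = conj (w i)) (hw0 : ∀ i, w i ≠ 0) {u : ι → ℂ}
    (hu : twistedForm σ w u u = 0) (hneg : ∀ i, σ i = i → (w i).re < 0 → u i = 0)
    (hpair : ∀ i, i < σ i → u i * w i = u (σ i)) : u = 0 := by
  set s : ι → ℝ := fun i ↦ (u i * conj (u (σ i)) * w i).re with hs
  have s_symm (i : ι) : s (σ i) = s i := by
    simp only [hs, hσ i, hw]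
    rw [← Complex.conj_re]
    simp only [map_mul, Complex.conj_conj]
    ring_nf
  have s_fixed (i : ι) (hi : σ i = i) : s i = Complex.normSq (u i) * (w i).re := by
    simp only [hs, hi, Complex.mul_conj, Complex.re_ofReal_mul]
  have s_pair (i : ι) (hi : i < σ i) : s i = Complex.normSq (u (σ i)) := by
    simp only [hs]
    rw [mul_right_comm, hpair i hi, Complex.mul_conj, Complex.ofReal_re]
  have s_nonneg (i : ι) : 0 ≤ s i := by
    rcases lt_trichotomy i (σ i) with hi | hi | hi
    · exact s_pair i hi ▸ Complex.normSq_nonneg _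
    · rw [s_fixed i hi.symm]
      rcases (re_ne_zero_of_fixed hw hw0 hi.symm).lt_or_gt with h | h
      · simp [hneg i hi.symm h]
      · exact mul_nonneg (Complex.normSq_nonneg _) h.le
    · rw [← s_symm, s_pair (σ i) (by rwa [hσ])]
      exact Complex.normSq_nonneg _
  have s_zero (i : ι) : s i = 0 := by
    have hsum : ∑ i, s i = 0 := by
      rw [← Complex.re_sum, ← Complex.zero_re, ← hu, twistedForm]
    exact (Finset.sum_eq_zero_iff_of_nonneg fun i _ ↦ s_nonneg i).1 hsum i (Finset.mem_univ i)
  have u_pair (i : ι) (hi : i < σ i) : u (σ i) = 0 :=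
    Complex.normSq_eq_zero.1 (s_pair i hi ▸ s_zero i)
  funext i
  rcases lt_trichotomy i (σ i) with hi | hi | hi
  · exact (mul_eq_zero.1 ((hpair i hi).trans (u_pair i hi))).resolve_right (hw0 i)
  · rcases (re_ne_zero_of_fixed hw hw0 hi.symm).lt_or_gt with h | h
    · exact hneg i hi.symm h
    · exact Complex.normSq_eq_zero.1
        ((mul_eq_zero.1 (s_fixed i hi.symm ▸ s_zero i)).resolve_right h.ne')
  · exact (congrArg u (hσ i)).symm.trans (u_pair (σ i) (by rwa [hσ]))

lemma finrank_le_of_isotropic (hσ : Function.Involutive σ) (hw : ∀ i, w (σ i) = conj (w i))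
    (hw0 : ∀ i, w i ≠ 0) {V : Submodule ℂ (ι → ℂ)} (hV : ∀ u ∈ V, twistedForm σ w u u = 0) :
    Module.finrank ℂ V ≤
      Fintype.card {i // σ i = i ∧ (w i).re < 0} + Fintype.card {i // i < σ i} := by
  let L : (ι → ℂ) →ₗ[ℂ] ({i // σ i = i ∧ (w i).re < 0} ⊕ {i // i < σ i} → ℂ) :=
    LinearMap.pi (Sum.elim (fun i ↦ LinearMap.proj i.1)
      (fun i ↦ w i • LinearMap.proj i.1 - LinearMap.proj (σ i)))
  have hL : Function.Injective (L.domRestrict V) := by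
    rw [← LinearMap.ker_eq_bot, LinearMap.ker_eq_bot']
    intro u hu
    refine Subtype.ext (eq_zero_of_twistedForm_self_eq_zero hσ hw hw0 (hV u u.2) ?_ ?_)
    · exact fun i hi hi' ↦ congrFun hu (Sum.inl ⟨i, hi, hi'⟩)
    · intro i hi
      have : w i * u.1 i - u.1 (σ i) = 0 := congrFun hu (Sum.inr ⟨i, hi⟩)
      rw [mul_comm, sub_eq_zero.1 this]
  simpa using LinearMap.finrank_le_finrank_of_injective hL

end TwistedForm

theorem two_mul_finrank_add_card_pos_le {ι : Type*} [Fintype ι] {σ : ι → ι} {w : ι → ℂ}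
    (hσ : Function.Involutive σ) (hw : ∀ i, w (σ i) = conj (w i)) (hw0 : ∀ i, w i ≠ 0)
    {V : Submodule ℂ (ι → ℂ)} (hV : ∀ u ∈ V, twistedForm σ w u u = 0) :
    2 * Module.finrank ℂ V + {i | σ i = i ∧ 0 < (w i).re}.ncard ≤
      Fintype.card ι + {i | σ i = i ∧ (w i).re < 0}.ncard := by
  classical
  let _ : LinearOrder ι := LinearOrder.lift' _ (Fintype.equivFin ι).injective
  have hrank := finrank_le_of_isotropic hσ hw hw0 hV
  have hcard := card_eq_card_fixed_add_two_mul hσ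
  have hfixed := card_fixed_eq_card_pos_add_card_neg hw hw0
  have hncard (P : ι → Prop) [DecidablePred P] : {i | P i}.ncard = Fintype.card {i // P i} :=
    (Nat.card_coe_set_eq _).symm.trans Nat.card_eq_fintype_card
  rw [hncard, hncard]
  omega

/-! ### Homogeneous substitution of a fraction into a polynomial -/

section Coprime

lemma eval_ne_zero_of_isCoprime {R : Type*} [CommRing R] [Nontrivial R] {p q : R[X]}
    (h : IsCoprime p q) {z : R} (hq : q.eval z = 0) : p.eval z ≠ 0 := by
  intro hp
  obtain ⟨a, b, hab⟩ := h
  simpa [hp, hq] using congrArg (eval z) hab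

lemma isCoprime_of_forall_eval_ne_zero {K : Type*} [Field K] [IsAlgClosed K] {p q : K[X]}
    (h : ∀ z, q.eval z = 0 → p.eval z ≠ 0) : IsCoprime p q := by
  rw [isCoprime_iff_aeval_ne_zero_of_isAlgClosed K K]
  exact fun z ↦
    (em (q.eval z = 0)).imp (fun hz ↦ by simpa using h z hz) (fun hz ↦ by simpa using hz)

end Coprime

section HomogSubst

variable {R S K : Type*} [CommRing R] [CommRing S] [Field K] {d : ℕ}

/-- The polynomial `q ^ d * f (p / q)`, for `f` of degree at most `d`. -/
noncomputable def homogSubst (d : ℕ) (f p q : R[X]) : R[X] :=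
  ∑ k ∈ Finset.range (d + 1), C (f.coeff k) * p ^ k * q ^ (d - k)

/-- The numerator `q ^ d * (p₂ (p / q) - X * q₂ (p / q))` of the fixed point equation of the
composition of the rational functions `p₂ / q₂` and `p / q`. -/
noncomputable def compFixPoly (d : ℕ) (p q p₂ q₂ : R[X]) : R[X] :=
  homogSubst d p₂ p q - X * homogSubst d q₂ p q

lemma map_homogSubst (φ : R →+* S) (f p q : R[X]) :
    (homogSubst d f p q).map φ = homogSubst d (f.map φ) (p.map φ) (q.map φ) := by
  simp [homogSubst, Polynomial.map_sum]

lemma map_compFixPoly (φ : R →+* S) (p q p₂ q₂ : R[X]) :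
    (compFixPoly d p q p₂ q₂).map φ =
      compFixPoly d (p.map φ) (q.map φ) (p₂.map φ) (q₂.map φ) := by
  simp [compFixPoly, map_homogSubst]

lemma homogSubst_add_C_mul (f g p q : R[X]) (c : R) :
    homogSubst d (f + C c * g) p q = homogSubst d f p q + C c * homogSubst d g p q := by
  simp only [homogSubst, coeff_add, coeff_C_mul, C_add, C_mul, Finset.mul_sum,
    ← Finset.sum_add_distrib]
  exact Finset.sum_congr rfl fun k _ ↦ by ring

lemma eval_homogSubst {f : K[X]} (hf : f.natDegree ≤ d) (p : K[X]) {q : K[X]} {z : K}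
    (hq : q.eval z ≠ 0) :
    (homogSubst d f p q).eval z = q.eval z ^ d * f.eval (p.eval z / q.eval z) := by
  rw [eval_eq_sum_range' (Nat.lt_succ_of_le hf), homogSubst, eval_finsetSum, Finset.mul_sum]
  refine Finset.sum_congr rfl fun k hk ↦ ?_
  have hpow : q.eval z ^ d = q.eval z ^ (d - k) * q.eval z ^ k :=
    (pow_sub_mul_pow _ (Finset.mem_range_succ_iff.1 hk)).symm
  simp only [eval_mul, eval_C, eval_pow, hpow, div_pow]
  field_simp

lemma eval_homogSubst_of_eval_eq_zero (f p : R[X]) {q : R[X]} {z : R} (hq : q.eval z = 0) :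
    (homogSubst d f p q).eval z = f.coeff d * p.eval z ^ d := by
  rw [homogSubst, eval_finsetSum, Finset.sum_eq_single_of_mem d (Finset.self_mem_range_succ d)]
  · simp
  · intro k hk hkd
    have : d - k ≠ 0 := Nat.sub_ne_zero_of_lt ((Finset.mem_range_succ_iff.1 hk).lt_of_ne hkd)
    simp [hq, this]

lemma natDegree_C_mul_pow_le (c : R) {p : R[X]} (hp : p.natDegree ≤ d) (k : ℕ) :
    (C c * p ^ k).natDegree ≤ k * d :=
  (natDegree_C_mul_le _ _).trans (natDegree_pow_le_of_le k hp)

lemma natDegree_homogSubst_le (f : R[X]) {p q : R[X]} (hp : p.natDegree ≤ d)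
    (hq : q.natDegree ≤ d) : (homogSubst d f p q).natDegree ≤ d * d := by
  refine natDegree_sum_le_of_forall_le _ _ fun k hk ↦ ?_
  refine (natDegree_mul_le_of_le (natDegree_C_mul_pow_le _ hp k)
    (natDegree_pow_le_of_le (d - k) hq)).trans_eq ?_
  rw [← add_mul, Nat.add_sub_cancel' (Finset.mem_range_succ_iff.1 hk)]

lemma coeff_homogSubst {f p q : K[X]} (hf : f.natDegree ≤ d) (hp : p.natDegree ≤ d)
    (hq : q.natDegree ≤ d) (hqd : q.coeff d ≠ 0) :
    (homogSubst d f p q).coeff (d * d) = q.coeff d ^ d * f.eval (p.coeff d / q.coeff d) := by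
  rw [eval_eq_sum_range' (Nat.lt_succ_of_le hf), homogSubst, finsetSum_coeff, Finset.mul_sum]
  refine Finset.sum_congr rfl fun k hk ↦ ?_
  have hk : k ≤ d := Finset.mem_range_succ_iff.1 hk
  have hdd : d * d = k * d + (d - k) * d := by rw [← add_mul, Nat.add_sub_cancel' hk]
  rw [hdd, coeff_mul_add_eq_of_natDegree_le (natDegree_C_mul_pow_le _ hp k)
    (natDegree_pow_le_of_le _ hq), coeff_C_mul, coeff_pow_of_natDegree_le hp,
    coeff_pow_of_natDegree_le hq, ← pow_sub_mul_pow (q.coeff d) hk, div_pow]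
  field_simp

lemma isCoprime_homogSubst [IsAlgClosed K] {f g p q : K[X]} (hf : f.natDegree ≤ d)
    (hg : g.natDegree ≤ d) (hfg : IsCoprime f g) (hpq : IsCoprime p q) (hgd : g.coeff d ≠ 0) :
    IsCoprime (homogSubst d f p q) (homogSubst d g p q) := by
  refine isCoprime_of_forall_eval_ne_zero fun z hz ↦ ?_
  by_cases hqz : q.eval z = 0
  · rw [eval_homogSubst_of_eval_eq_zero _ _ hqz] at hz
    exact absurd hz (mul_ne_zero hgd (pow_ne_zero _ (eval_ne_zero_of_isCoprime hpq hqz)))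
  · rw [eval_homogSubst hg _ hqz] at hz
    rw [eval_homogSubst hf _ hqz]
    exact mul_ne_zero (pow_ne_zero _ hqz)
      (eval_ne_zero_of_isCoprime hfg ((mul_eq_zero.1 hz).resolve_left (pow_ne_zero _ hqz)))

lemma natDegree_compFixPoly {p q p₂ q₂ : K[X]} (hq₂ : q₂.natDegree ≤ d) (hp : p.natDegree ≤ d)
    (hq : q.natDegree ≤ d) (hqd : q.coeff d ≠ 0) (h : q₂.eval (p.coeff d / q.coeff d) ≠ 0) :
    (compFixPoly d p q p₂ q₂).natDegree = d * d + 1 := by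
  have hnum := natDegree_homogSubst_le p₂ hp hq
  have hden := natDegree_homogSubst_le q₂ hp hq
  refine natDegree_eq_of_le_of_coeff_ne_zero ?_ ?_
  · refine (natDegree_sub_le _ _).trans (max_le (by omega) (natDegree_mul_le.trans ?_))
    rw [natDegree_X]
    omega
  · rw [compFixPoly, coeff_sub, coeff_X_mul, coeff_homogSubst hq₂ hp hq hqd,
      coeff_eq_zero_of_natDegree_lt (by omega), zero_sub]
    exact neg_ne_zero.2 (mul_ne_zero (pow_ne_zero _ hqd) h)

lemma eval_compFixPoly {p₂ q₂ : K[X]} (hp₂ : p₂.natDegree ≤ d) (hq₂ : q₂.natDegree ≤ d)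
    (p : K[X]) {q : K[X]} {z : K} (hq : q.eval z ≠ 0) :
    (compFixPoly d p q p₂ q₂).eval z = q.eval z ^ d *
      (p₂.eval (p.eval z / q.eval z) - z * q₂.eval (p.eval z / q.eval z)) := by
  rw [compFixPoly, eval_sub, eval_mul, eval_X, eval_homogSubst hp₂ p hq, eval_homogSubst hq₂ p hq]
  ring

end HomogSubst

section RatioDeriv

/-- The derivative of the rational function `p / q` at `z`. -/
noncomputable def ratioDeriv (p q : ℂ[X]) (z : ℂ) : ℂ := (wronskian q p).eval z / q.eval z ^ 2

lemma hasStrictDerivAt_ratio (p : ℂ[X]) {q : ℂ[X]} {z : ℂ} (hq : q.eval z ≠ 0) :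
    HasStrictDerivAt (fun x ↦ p.eval x / q.eval x) (ratioDeriv p q z) z := by
  refine ((p.hasStrictDerivAt z).div (q.hasStrictDerivAt z) hq).congr_deriv ?_
  rw [ratioDeriv, wronskian, eval_sub, eval_mul, eval_mul]
  ring

lemma hasDerivAt_ratio (p : ℂ[X]) {q : ℂ[X]} {z : ℂ} (hq : q.eval z ≠ 0) :
    HasDerivAt (fun x ↦ p.eval x / q.eval x) (ratioDeriv p q z) z :=
  (hasStrictDerivAt_ratio p hq).hasDerivAt

lemma wronskian_sub_C_mul_self {R : Type*} [CommRing R] (q p : R[X]) (b : R) :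
    wronskian q (p - C b * q) = wronskian q p := by
  simp only [wronskian, derivative_sub, derivative_C_mul]
  ring

lemma eval_derivative_compFixPoly {d : ℕ} {p q p₂ q₂ : ℂ[X]} (hp₂ : p₂.natDegree ≤ d)
    (hq₂ : q₂.natDegree ≤ d) {z : ℂ} (hq : q.eval z ≠ 0) (hw : q₂.eval (p.eval z / q.eval z) ≠ 0)
    (hz : p₂.eval (p.eval z / q.eval z) = z * q₂.eval (p.eval z / q.eval z)) :
    (derivative (compFixPoly d p q p₂ q₂)).eval z =
      q.eval z ^ d * q₂.eval (p.eval z / q.eval z) *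
        (ratioDeriv p₂ q₂ (p.eval z / q.eval z) * ratioDeriv p q z - 1) := by
  have hr := hasDerivAt_ratio p hq
  set w := p.eval z / q.eval z with hw_def
  have hnum : HasDerivAt (fun x ↦ p₂.eval (p.eval x / q.eval x))
      ((derivative p₂).eval w * ratioDeriv p q z) z :=
    HasDerivAt.comp z (h₂ := fun y ↦ eval y p₂) (p₂.hasDerivAt w) hr
  have hden : HasDerivAt (fun x ↦ q₂.eval (p.eval x / q.eval x))
      ((derivative q₂).eval w * ratioDeriv p q z) z :=
    HasDerivAt.comp z (h₂ := fun y ↦ eval y q₂) (q₂.hasDerivAt w) hr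
  have heq : (fun x ↦ (compFixPoly d p q p₂ q₂).eval x) =ᶠ[nhds z] fun x ↦ q.eval x ^ d *
      (p₂.eval (p.eval x / q.eval x) - x * q₂.eval (p.eval x / q.eval x)) :=
    (q.continuous.continuousAt.eventually_ne hq).mono fun x hx ↦ eval_compFixPoly hp₂ hq₂ p hx
  rw [(((compFixPoly d p q p₂ q₂).hasDerivAt z).congr_of_eventuallyEq heq.symm).unique
    (((q.hasDerivAt z).pow d).mul (hnum.sub ((hasDerivAt_id z).mul hden)))]
  have hr₂ : ratioDeriv p₂ q₂ w =
      ((derivative p₂).eval w - z * (derivative q₂).eval w) / q₂.eval w := by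
    rw [ratioDeriv, wronskian, eval_sub, eval_mul, eval_mul, hz]
    field_simp
  simp only [id, Pi.pow_apply, ← hw_def, hz, hr₂]
  field_simp
  ring

end RatioDeriv

/-! ### Residue sums and independence in polynomial rings -/

section PolynomialLemmas

variable {K : Type*} [Field K]

lemma eq_C_mul_nodal_roots_of_separable [IsAlgClosed K] [DecidableEq K] {G : K[X]}
    (hG : G.Separable) : G = C G.leadingCoeff * Lagrange.nodal G.roots.toFinset id := by
  conv_lhs => rw [(IsAlgClosed.splits G).eq_prod_roots]
  rw [Lagrange.nodal, Finset.prod_multiset_map_count]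
  congr 1
  refine Finset.prod_congr rfl fun z hz ↦ ?_
  rw [Multiset.count_eq_one_of_mem (nodup_roots hG) (Multiset.mem_toFinset.1 hz), pow_one, id]

lemma card_roots_toFinset_of_separable [IsAlgClosed K] [DecidableEq K] {G : K[X]}
    (hG : G.Separable) : G.roots.toFinset.card = G.natDegree := by
  rw [Multiset.toFinset_card_of_nodup (nodup_roots hG), IsAlgClosed.card_roots_eq_natDegree]

/-- The sum of the residues of `N / G`; there is none at infinity for degree reasons. -/
lemma sum_roots_eval_div_eval_derivative_eq_zero [IsAlgClosed K] [DecidableEq K] {G N : K[X]}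
    (hG : G.Separable) (hN : N.natDegree + 1 < G.natDegree) :
    ∑ z ∈ G.roots.toFinset, N.eval z / (derivative G).eval z = 0 := by
  have hcard := card_roots_toFinset_of_separable hG
  have hnodal := eq_C_mul_nodal_roots_of_separable hG
  set Z := G.roots.toFinset
  have hinterp := Lagrange.coeff_eq_sum (s := Z) (v := (id : K → K)) (Set.injOn_id _) (P := N)
    (by rw [hcard]; exact degree_le_natDegree.trans_lt (by exact_mod_cast (by omega)))
  rw [coeff_eq_zero_of_natDegree_lt (by omega)] at hinterp
  have hterm (z : K) (hz : z ∈ Z) : N.eval z / (derivative G).eval z =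
      G.leadingCoeff⁻¹ * (N.eval (id z) / ∏ j ∈ Z.erase z, (id z - id j)) := by
    rw [← Lagrange.eval_nodal, ← Lagrange.eval_nodal_derivative_eval_node_eq hz]
    conv_lhs => rw [hnodal]
    rw [derivative_C_mul, eval_mul, eval_C, id, div_mul_eq_div_div, div_right_comm,
      div_eq_inv_mul]
  rw [Finset.sum_congr rfl hterm, ← Finset.mul_sum, ← hinterp, mul_zero]

lemma eq_zero_of_sum_pow_mul_pow_mul_eq_zero {p q : K[X]} (hpq : IsCoprime q p) {e : ℕ → K[X]}
    {m : ℕ} (hdeg : ∀ n < m, (e n).natDegree < q.natDegree)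
    (hsum : ∑ n ∈ Finset.range m, q ^ (m - 1 - n) * p ^ n * e n = 0) : ∀ n < m, e n = 0 := by
  induction m with
  | zero => exact fun n hn ↦ absurd hn n.not_lt_zero
  | succ m ih =>
    have hfactor : ∑ n ∈ Finset.range m, q ^ (m + 1 - 1 - n) * p ^ n * e n =
        q * ∑ n ∈ Finset.range m, q ^ (m - 1 - n) * p ^ n * e n := by
      rw [Finset.mul_sum]
      refine Finset.sum_congr rfl fun n hn ↦ ?_
      rw [show m + 1 - 1 - n = m - 1 - n + 1 by have := Finset.mem_range.1 hn; omega]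
      ring
    rw [Finset.sum_range_succ, hfactor, Nat.add_sub_cancel, Nat.sub_self, pow_zero, one_mul]
      at hsum
    have hlast : e m = 0 := by
      have hdvd : q ∣ p ^ m * e m := by
        rw [eq_neg_of_add_eq_zero_right hsum]
        exact (dvd_mul_right q _).neg_right
      exact eq_zero_of_dvd_of_natDegree_lt (hpq.pow_right.dvd_of_dvd_mul_left hdvd)
        (hdeg m m.lt_succ_self)
    have hq : q ≠ 0 := ne_zero_of_natDegree_gt (hdeg m m.lt_succ_self)
    rw [hlast, mul_zero, add_zero] at hsum
    have hrest := ih (fun n hn ↦ hdeg n (hn.trans m.lt_succ_self))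
      ((mul_eq_zero.1 hsum).resolve_left hq)
    intro n hn
    rcases Nat.lt_succ_iff_lt_or_eq.1 hn with hn | rfl
    exacts [hrest n hn, hlast]

lemma eq_zero_of_sum_C_mul_X_sub_C_pow_eq_zero {R : Type*} [CommRing R] (a : R) {n : ℕ}
    {c : Fin n → R} (h : ∑ j : Fin n, C (c j) * (X - C a) ^ (j : ℕ) = 0) : c = 0 := by
  funext j
  have hj := congrArg (fun P ↦ (P.comp (X + C a)).coeff j) h
  simp only [Polynomial.sum_comp, mul_comp, C_comp, pow_comp, sub_comp, X_comp,
    add_sub_cancel_right, finsetSum_coeff, coeff_C_mul_X_pow, zero_comp, coeff_zero] at hj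
  simpa [Fin.val_inj] using hj

end PolynomialLemmas

/-! ### The conjugate of a rational function and its points of period two -/

section ConjRatio

variable {d : ℕ} {p q : ℂ[X]} {z : ℂ}

/-- The polynomial whose coefficients are the complex conjugates of those of `p`. -/
noncomputable def conjPoly (p : ℂ[X]) : ℂ[X] := p.map (starRingEnd ℂ)

/-- The anti-holomorphic map `z ↦ conj (p z / q z)`, with junk value `0` at the zeros of `q`. -/
noncomputable def conjRatio (p q : ℂ[X]) (z : ℂ) : ℂ := conj (p.eval z / q.eval z)

lemma eval_conjPoly (p : ℂ[X]) (z : ℂ) : (conjPoly p).eval z = conj (p.eval (conj z)) := by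
  simpa [conjPoly, eval_map] using Polynomial.eval₂_hom (p := p) (starRingEnd ℂ) (conj z)

lemma natDegree_conjPoly (p : ℂ[X]) : (conjPoly p).natDegree = p.natDegree :=
  natDegree_map_eq_of_injective (starRingEnd ℂ).injective p

lemma isCoprime_conjPoly (h : IsCoprime p q) : IsCoprime (conjPoly p) (conjPoly q) :=
  h.map (mapRingHom (starRingEnd ℂ))

lemma ratioDeriv_conjPoly (p q : ℂ[X]) (z : ℂ) :
    ratioDeriv (conjPoly p) (conjPoly q) z = conj (ratioDeriv p q (conj z)) := by
  have : wronskian (conjPoly q) (conjPoly p) = conjPoly (wronskian q p) := by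
    simp [wronskian, conjPoly, derivative_map]
  simp [ratioDeriv, this, eval_conjPoly]

lemma conj_conjRatio (p q : ℂ[X]) (z : ℂ) : conj (conjRatio p q z) = p.eval z / q.eval z :=
  Complex.conj_conj _

lemma conjRatio_eq_iff {w : ℂ} (hz : q.eval z ≠ 0) :
    conjRatio p q z = w ↔ p.eval z = conj w * q.eval z := by
  rw [← (starRingEnd ℂ).injective.eq_iff, conj_conjRatio, div_eq_iff hz]

lemma mem_fixedPts_iff : z ∈ fixedPts p q ↔ q.eval z ≠ 0 ∧ conjRatio p q z = z :=
  and_congr_right fun hz ↦ (conjRatio_eq_iff hz).symm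

/-- `z` has period two under `conjRatio p q`, with no pole on its orbit. -/
def IsPeriodTwo (p q : ℂ[X]) (z : ℂ) : Prop :=
  q.eval z ≠ 0 ∧ q.eval (conjRatio p q z) ≠ 0 ∧ conjRatio p q (conjRatio p q z) = z

lemma isPeriodTwo_conjRatio (h : IsPeriodTwo p q z) : IsPeriodTwo p q (conjRatio p q z) := by
  obtain ⟨hz, hfz, hffz⟩ := h
  exact ⟨hfz, by rwa [hffz], by rw [hffz]⟩

lemma isPeriodTwo_of_mem_fixedPts (h : z ∈ fixedPts p q) : IsPeriodTwo p q z := by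
  obtain ⟨hz, hfz⟩ := mem_fixedPts_iff.1 h
  exact ⟨hz, by rwa [hfz], by rw [hfz, hfz]⟩

lemma isPeriodTwo_iff (hpq : IsCoprime p q) (hz : q.eval z ≠ 0) :
    IsPeriodTwo p q z ↔ p.eval (conjRatio p q z) = conj z * q.eval (conjRatio p q z) := by
  refine ⟨fun h ↦ (conjRatio_eq_iff h.2.1).1 h.2.2, fun h ↦ ?_⟩
  have hfz : q.eval (conjRatio p q z) ≠ 0 := fun h0 ↦
    eval_ne_zero_of_isCoprime hpq h0 (by rw [h, h0, mul_zero])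
  exact ⟨hz, hfz, (conjRatio_eq_iff hfz).2 h⟩

/-- The numerator of the equation for the points of period two of `conjRatio p q`, the second
iterate of which is the composition of the rational functions with conjugate coefficients. -/
noncomputable def periodTwoPoly (d : ℕ) (p q : ℂ[X]) : ℂ[X] :=
  compFixPoly d p q (conjPoly p) (conjPoly q)

lemma eval_periodTwoPoly_eq_zero_iff_isPeriodTwo (hpq : IsCoprime p q) (hp : p.natDegree ≤ d)
    (hq : q.natDegree ≤ d) (hz : q.eval z ≠ 0) :
    (periodTwoPoly d p q).eval z = 0 ↔ IsPeriodTwo p q z := by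
  have heval : (periodTwoPoly d p q).eval z = q.eval z ^ d *
      conj (p.eval (conjRatio p q z) - conj z * q.eval (conjRatio p q z)) := by
    rw [periodTwoPoly, eval_compFixPoly (by rwa [natDegree_conjPoly])
      (by rwa [natDegree_conjPoly]) p hz, eval_conjPoly, eval_conjPoly, map_sub, map_mul,
      Complex.conj_conj, conjRatio]
  rw [heval, mul_eq_zero, or_iff_right (pow_ne_zero _ hz), map_eq_zero, sub_eq_zero,
    isPeriodTwo_iff hpq hz]

/-- The normalization of a rational function `p / q` of degree `d` under which the point at
infinity is neither fixed nor of period two for `conjRatio p q`: its image is the finite point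
`conj (p.coeff d / q.coeff d)`, which is not a pole. -/
structure IsNormalized (d : ℕ) (p q : ℂ[X]) : Prop where
  isCoprime : IsCoprime p q
  natDegree_den : q.natDegree = d
  natDegree_num_le : p.natDegree ≤ d
  eval_image_infty_ne_zero : q.eval (conj (p.coeff d / q.coeff d)) ≠ 0

namespace IsNormalized

lemma coeff_den_ne_zero (h : IsNormalized d p q) : q.coeff d ≠ 0 := by
  rw [← h.natDegree_den, coeff_natDegree, leadingCoeff_ne_zero]
  rintro rfl
  exact h.eval_image_infty_ne_zero eval_zero

lemma natDegree_conjPoly_num_le (h : IsNormalized d p q) : (conjPoly p).natDegree ≤ d :=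
  (natDegree_conjPoly p).trans_le h.natDegree_num_le

lemma natDegree_conjPoly_den_le (h : IsNormalized d p q) : (conjPoly q).natDegree ≤ d :=
  ((natDegree_conjPoly q).trans h.natDegree_den).le

lemma natDegree_periodTwoPoly (h : IsNormalized d p q) :
    (periodTwoPoly d p q).natDegree = d * d + 1 :=
  natDegree_compFixPoly h.natDegree_conjPoly_den_le h.natDegree_num_le h.natDegree_den.le
    h.coeff_den_ne_zero (by simpa [eval_conjPoly] using h.eval_image_infty_ne_zero)

lemma eval_den_ne_zero_of_eval_periodTwoPoly_eq_zero (h : IsNormalized d p q)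
    (hz : (periodTwoPoly d p q).eval z = 0) : q.eval z ≠ 0 := by
  intro hqz
  rw [periodTwoPoly, compFixPoly, eval_sub, eval_mul, eval_homogSubst_of_eval_eq_zero _ _ hqz,
    eval_homogSubst_of_eval_eq_zero _ _ hqz, eval_X, ← mul_assoc, ← sub_mul] at hz
  have hcoeff := (mul_eq_zero.1 hz).resolve_right
    (pow_ne_zero _ (eval_ne_zero_of_isCoprime h.isCoprime hqz))
  simp only [conjPoly, coeff_map] at hcoeff
  have himage : conj (p.coeff d / q.coeff d) = z := by
    rw [map_div₀, div_eq_iff ((_root_.map_ne_zero _).2 h.coeff_den_ne_zero), sub_eq_zero.1 hcoeff]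
  exact h.eval_image_infty_ne_zero (by rw [himage, hqz])

lemma eval_periodTwoPoly_eq_zero_iff (h : IsNormalized d p q) :
    (periodTwoPoly d p q).eval z = 0 ↔ IsPeriodTwo p q z := by
  have hiff {w : ℂ} := eval_periodTwoPoly_eq_zero_iff_isPeriodTwo (z := w) h.isCoprime
    h.natDegree_num_le h.natDegree_den.le
  exact ⟨fun hz ↦ (hiff (h.eval_den_ne_zero_of_eval_periodTwoPoly_eq_zero hz)).1 hz,
    fun hz ↦ (hiff hz.1).2 hz⟩

end IsNormalized

end ConjRatio

/-! ### Counting repelling fixed points -/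

section SlopePoly

variable {d : ℕ} {p q : ℂ[X]} {a z : ℂ}

/-- The quotient of `p - conj a * q` by `X - a`, for a fixed point `a` of `conjRatio p q`. -/
noncomputable def slopePoly (p q : ℂ[X]) (a : ℂ) : ℂ[X] := (p - C (conj a) * q) /ₘ (X - C a)

lemma X_sub_C_mul_slopePoly (ha : a ∈ fixedPts p q) :
    (X - C a) * slopePoly p q a = p - C (conj a) * q := by
  rw [slopePoly, mul_divByMonic_eq_iff_isRoot, IsRoot.def, eval_sub, eval_mul, eval_C, ha.2,
    sub_self]

lemma natDegree_slopePoly_le (a : ℂ) (hp : p.natDegree ≤ d) (hq : q.natDegree ≤ d) :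
    (slopePoly p q a).natDegree ≤ d - 1 := by
  rw [slopePoly, natDegree_divByMonic _ (monic_X_sub_C a), natDegree_X_sub_C]
  exact Nat.sub_le_sub_right
    ((natDegree_sub_le _ _).trans (max_le hp ((natDegree_C_mul_le _ _).trans hq))) 1

lemma isCoprime_slopePoly (hpq : IsCoprime p q) (ha : a ∈ fixedPts p q) :
    IsCoprime q (slopePoly p q a) := by
  have h : IsCoprime (p - C (conj a) * q) q := by
    rw [sub_eq_add_neg, ← neg_mul]
    exact IsCoprime.add_mul_right_left_iff.2 hpq
  rw [← X_sub_C_mul_slopePoly ha] at h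
  exact h.of_mul_left_right.symm

lemma conj_conjRatio_sub (ha : a ∈ fixedPts p q) (hz : q.eval z ≠ 0) :
    conj (conjRatio p q z - a) = (z - a) * (slopePoly p q a).eval z / q.eval z := by
  have h := congrArg (eval z) (X_sub_C_mul_slopePoly ha)
  simp only [eval_sub, eval_mul, eval_C, eval_X] at h
  rw [h, map_sub, conj_conjRatio]
  field_simp

lemma eval_slopePoly_ne_zero (ha : a ∈ fixedPts p q) (hz : q.eval z ≠ 0)
    (hfz : conjRatio p q z ≠ a) : (slopePoly p q a).eval z ≠ 0 := by
  intro h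
  have h0 := conj_conjRatio_sub ha hz
  rw [h, mul_zero, zero_div, map_eq_zero, sub_eq_zero] at h0
  exact hfz h0

end SlopePoly

section CycleForm

variable {d : ℕ} {p q : ℂ[X]} {a z : ℂ}

/-- Up to the factor `q z ^ (d - 1)`, the derivative of `periodTwoPoly d p q` at a point `z` of
period two. -/
noncomputable def cycleDeriv (p q : ℂ[X]) (z : ℂ) : ℂ :=
  q.eval z * conj (q.eval (conjRatio p q z)) *
    (conj (ratioDeriv p q (conjRatio p q z)) * ratioDeriv p q z - 1)

/-- The weight of a point `z` of period two in the Hermitian form used to count fixed points: the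
residue of the inverse of `periodTwoPoly`, rescaled to be compatible with `conjRatio p q`. -/
noncomputable def cycleWeight (d : ℕ) (p q : ℂ[X]) (a z : ℂ) : ℂ :=
  (z - a) ^ (d - 1) * conj (conjRatio p q z - a) ^ (d - 1) / cycleDeriv p q z

/-- The monomial of bidegree `(α, β)` in the functions `1 / (z - a)` and
`1 / conj (f z - a)`, where `f = conjRatio p q`. -/
noncomputable def cycleMonomial (p q : ℂ[X]) (a : ℂ) (α β : ℕ) (z : ℂ) : ℂ :=
  (z - a)⁻¹ ^ α * (conj (conjRatio p q z - a))⁻¹ ^ β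

lemma cycleDeriv_conjRatio (h : IsPeriodTwo p q z) :
    cycleDeriv p q (conjRatio p q z) = conj (cycleDeriv p q z) := by
  simp only [cycleDeriv, h.2.2, map_mul, map_sub, Complex.conj_conj, map_one]
  ring

lemma cycleWeight_conjRatio (d : ℕ) (a : ℂ) (h : IsPeriodTwo p q z) :
    cycleWeight d p q a (conjRatio p q z) = conj (cycleWeight d p q a z) := by
  simp only [cycleWeight, h.2.2, map_mul, map_div₀, map_pow, Complex.conj_conj,
    cycleDeriv_conjRatio h]
  ring

lemma cycleMonomial_conjRatio (a : ℂ) (α β : ℕ) (h : IsPeriodTwo p q z) :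
    cycleMonomial p q a α β (conjRatio p q z) = conj (cycleMonomial p q a β α z) := by
  simp only [cycleMonomial, h.2.2, map_mul, map_inv₀, map_pow, Complex.conj_conj]
  ring

lemma cycleMonomial_mul_cycleMonomial (p q : ℂ[X]) (a : ℂ) (α β α' β' : ℕ) (z : ℂ) :
    cycleMonomial p q a α β z * cycleMonomial p q a α' β' z =
      cycleMonomial p q a (α + α') (β + β') z := by
  simp only [cycleMonomial, pow_add]
  ring

lemma cycleDeriv_of_fixed (hz : conjRatio p q z = z) :
    cycleDeriv p q z = ((‖q.eval z‖ ^ 2 * (‖ratioDeriv p q z‖ ^ 2 - 1) : ℝ) : ℂ) := by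
  rw [cycleDeriv, hz, Complex.mul_conj, Complex.conj_mul', Complex.normSq_eq_norm_sq]
  push_cast
  ring

lemma cycleWeight_of_fixed (d : ℕ) (a : ℂ) (hz : conjRatio p q z = z) :
    cycleWeight d p q a z =
      (((‖z - a‖ ^ 2) ^ (d - 1) / (‖q.eval z‖ ^ 2 * (‖ratioDeriv p q z‖ ^ 2 - 1)) : ℝ) : ℂ) := by
  rw [cycleWeight, cycleDeriv_of_fixed hz, hz, ← mul_pow, Complex.mul_conj,
    Complex.normSq_eq_norm_sq]
  push_cast
  rfl

lemma cycleWeight_re_pos_iff (d : ℕ) (hz : z ∈ fixedPts p q) (hza : z ≠ a) :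
    0 < (cycleWeight d p q a z).re ↔ 1 < ‖ratioDeriv p q z‖ := by
  have hnum : 0 < (‖z - a‖ ^ 2) ^ (d - 1) := by
    have := norm_pos_iff.2 (sub_ne_zero.2 hza)
    positivity
  have hden : 0 < ‖q.eval z‖ ^ 2 := by
    have := norm_pos_iff.2 hz.1
    positivity
  rw [cycleWeight_of_fixed d a (mem_fixedPts_iff.1 hz).2, Complex.ofReal_re,
    div_pos_iff_of_pos_left hnum, mul_pos_iff_of_pos_left hden, sub_pos,
    one_lt_sq_iff₀ (norm_nonneg _)]

lemma cycleWeight_re_neg_iff (d : ℕ) (hz : z ∈ fixedPts p q) (hza : z ≠ a) :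
    (cycleWeight d p q a z).re < 0 ↔ ‖ratioDeriv p q z‖ < 1 := by
  have hnum : 0 < (‖z - a‖ ^ 2) ^ (d - 1) := by
    have := norm_pos_iff.2 (sub_ne_zero.2 hza)
    positivity
  have hden : 0 < ‖q.eval z‖ ^ 2 := by
    have := norm_pos_iff.2 hz.1
    positivity
  rw [cycleWeight_of_fixed d a (mem_fixedPts_iff.1 hz).2, Complex.ofReal_re, ← neg_pos,
    ← div_neg, div_pos_iff_of_pos_left hnum, ← mul_neg, mul_pos_iff_of_pos_left hden, neg_sub,
    sub_pos, sq_lt_one_iff₀ (norm_nonneg _)]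

namespace IsNormalized

lemma eval_derivative_periodTwoPoly (h : IsNormalized d p q) (hd : d ≠ 0)
    (hz : IsPeriodTwo p q z) :
    (derivative (periodTwoPoly d p q)).eval z = q.eval z ^ (d - 1) * cycleDeriv p q z := by
  obtain ⟨hqz, hqfz, hffz⟩ := hz
  have himage : conj (p.eval z / q.eval z) = conjRatio p q z := rfl
  rw [periodTwoPoly, eval_derivative_compFixPoly h.natDegree_conjPoly_num_le
    h.natDegree_conjPoly_den_le hqz, ratioDeriv_conjPoly, eval_conjPoly, himage, cycleDeriv,
    ← pow_sub_one_mul hd]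
  · ring
  · rwa [eval_conjPoly, himage, Ne, map_eq_zero]
  · rw [eval_conjPoly, eval_conjPoly, himage, (conjRatio_eq_iff hqfz).1 hffz, map_mul,
      Complex.conj_conj]

variable (h : IsNormalized d p q) (hd : d ≠ 0) (hsep : (periodTwoPoly d p q).Separable)
include h hd hsep

lemma cycleDeriv_ne_zero (hz : IsPeriodTwo p q z) : cycleDeriv p q z ≠ 0 := by
  intro h0
  refine eval_ne_zero_of_isCoprime hsep ?_ (h.eval_periodTwoPoly_eq_zero_iff.2 hz)
  rw [h.eval_derivative_periodTwoPoly hd hz, h0, mul_zero]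

lemma norm_ratioDeriv_ne_one (ha : a ∈ fixedPts p q) : ‖ratioDeriv p q a‖ ≠ 1 := by
  intro h1
  refine h.cycleDeriv_ne_zero hd hsep (isPeriodTwo_of_mem_fixedPts ha) ?_
  rw [cycleDeriv_of_fixed (mem_fixedPts_iff.1 ha).2, h1]
  simp

end IsNormalized

end CycleForm

section CycleSums

variable {d : ℕ} {p q : ℂ[X]} {a z : ℂ}

/-- The points of period two of `conjRatio p q` other than `a`, provided `IsNormalized d p q`. -/
noncomputable def periodTwoFinset (d : ℕ) (p q : ℂ[X]) (a : ℂ) : Finset ℂ :=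
  (periodTwoPoly d p q).roots.toFinset.erase a

/-- The numerator whose residues against `periodTwoPoly d p q` are the values of
`cycleMonomial p q a α β` weighted by `cycleWeight d p q a`. -/
noncomputable def cycleNumerator (d : ℕ) (p q : ℂ[X]) (a : ℂ) (α β : ℕ) : ℂ[X] :=
  (X - C a) ^ (2 * d - 2 - α - β) * slopePoly p q a ^ (d - 1 - β) * q ^ β

lemma natDegree_cycleNumerator_le (a : ℂ) (hp : p.natDegree ≤ d) (hq : q.natDegree ≤ d)
    {α β : ℕ} (hβ : β + 1 ≤ d) (hαβ : α + β + 2 ≤ 2 * d) :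
    (cycleNumerator d p q a α β).natDegree + 1 ≤ d * d := by
  have hX : ((X - C a) ^ (2 * d - 2 - α - β)).natDegree ≤ (2 * d - 2 - α - β) * 1 :=
    natDegree_pow_le_of_le _ (natDegree_X_sub_C a).le
  have hslope : (slopePoly p q a ^ (d - 1 - β)).natDegree ≤ (d - 1 - β) * (d - 1) :=
    natDegree_pow_le_of_le _ (natDegree_slopePoly_le a hp hq)
  have hden : (q ^ β).natDegree ≤ β * d := natDegree_pow_le_of_le _ hq
  refine (Nat.add_le_add_right
    (natDegree_mul_le_of_le (natDegree_mul_le_of_le hX hslope) hden) 1).trans ?_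
  obtain ⟨k, rfl⟩ := Nat.exists_eq_add_of_le' hβ
  obtain ⟨j, hj⟩ := Nat.exists_eq_add_of_le' hαβ
  rw [show 2 * (k + (β + 1)) - 2 - α - β = j by omega, show k + (β + 1) - 1 - β = k by omega,
    show k + (β + 1) - 1 = k + β by omega]
  nlinarith

lemma cycleMonomial_mul_cycleWeight (ha : a ∈ fixedPts p q) (hza : z ≠ a)
    (hqz : q.eval z ≠ 0) (hfz : conjRatio p q z ≠ a) (hz : cycleDeriv p q z ≠ 0) {α β : ℕ}
    (hβ : β + 1 ≤ d) (hαβ : α + β + 2 ≤ 2 * d) :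
    cycleMonomial p q a α β z * cycleWeight d p q a z =
      (cycleNumerator d p q a α β).eval z / (q.eval z ^ (d - 1) * cycleDeriv p q z) := by
  have hslope := eval_slopePoly_ne_zero ha hqz hfz
  have hza := sub_ne_zero.2 hza
  rw [cycleMonomial, cycleWeight, cycleNumerator, conj_conjRatio_sub ha hqz]
  simp only [eval_mul, eval_pow, eval_sub, eval_X, eval_C]
  generalize z - a = A at *
  generalize (slopePoly p q a).eval z = P at *
  generalize q.eval z = Q at *
  obtain ⟨k, rfl⟩ := Nat.exists_eq_add_of_le' hβ
  obtain ⟨j, hj⟩ := Nat.exists_eq_add_of_le' hαβ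
  rw [show 2 * (k + (β + 1)) - 2 - α - β = j by omega, show k + (β + 1) - 1 - β = k by omega,
    show k + (β + 1) - 1 = k + β by omega]
  have hA : A ^ j * A ^ α * A ^ β = A ^ (k + β) * A ^ (k + β) := by
    simp only [← pow_add]
    congr 1
    omega
  simp only [inv_pow, div_pow, mul_pow]
  field_simp
  rw [pow_add P]
  linear_combination (-P ^ k * P ^ β) * hA

namespace IsNormalized

variable (h : IsNormalized d p q)
include h

lemma mem_roots_toFinset : z ∈ (periodTwoPoly d p q).roots.toFinset ↔ IsPeriodTwo p q z := by
  have hne : periodTwoPoly d p q ≠ 0 :=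
    ne_zero_of_natDegree_gt (n := 0) (by rw [h.natDegree_periodTwoPoly]; omega)
  rw [Multiset.mem_toFinset, mem_roots hne, IsRoot.def, h.eval_periodTwoPoly_eq_zero_iff]

lemma mem_periodTwoFinset : z ∈ periodTwoFinset d p q a ↔ z ≠ a ∧ IsPeriodTwo p q z := by
  rw [periodTwoFinset, Finset.mem_erase, h.mem_roots_toFinset]

variable (ha : a ∈ fixedPts p q)
include ha

lemma conjRatio_mem_periodTwoFinset (hz : z ∈ periodTwoFinset d p q a) :
    conjRatio p q z ∈ periodTwoFinset d p q a := by
  rw [h.mem_periodTwoFinset] at hz ⊢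
  refine ⟨fun hfz ↦ hz.1 ?_, isPeriodTwo_conjRatio hz.2⟩
  rw [← hz.2.2.2, hfz, (mem_fixedPts_iff.1 ha).2]

variable (hsep : (periodTwoPoly d p q).Separable)
include hsep

lemma card_periodTwoFinset : (periodTwoFinset d p q a).card = d * d := by
  rw [periodTwoFinset, Finset.card_erase_of_mem
    (h.mem_roots_toFinset.2 (isPeriodTwo_of_mem_fixedPts ha)),
    card_roots_toFinset_of_separable hsep, h.natDegree_periodTwoPoly, Nat.add_sub_cancel]

lemma sum_cycleMonomial_mul_cycleWeight_of_lt {α β : ℕ} (hβ : β + 1 ≤ d)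
    (hαβ : α + β + 2 < 2 * d) :
    ∑ z ∈ periodTwoFinset d p q a, cycleMonomial p q a α β z * cycleWeight d p q a z = 0 := by
  have hroot := h.mem_roots_toFinset.2 (isPeriodTwo_of_mem_fixedPts ha)
  have hres := sum_roots_eval_div_eval_derivative_eq_zero (N := cycleNumerator d p q a α β) hsep
    (by
      have := natDegree_cycleNumerator_le a h.natDegree_num_le h.natDegree_den.le hβ hαβ.le
      rw [h.natDegree_periodTwoPoly]
      omega)
  have hnum : (cycleNumerator d p q a α β).eval a = 0 := by
    have : 2 * d - 2 - α - β ≠ 0 := by omega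
    simp [cycleNumerator, this]
  rw [← Finset.add_sum_erase _ _ hroot, hnum, zero_div, zero_add] at hres
  rw [← hres]
  refine Finset.sum_congr rfl fun z hz ↦ ?_
  obtain ⟨hza, hper⟩ := h.mem_periodTwoFinset.1 hz
  have hfza := (h.mem_periodTwoFinset.1 (h.conjRatio_mem_periodTwoFinset ha hz)).1
  have hd : d ≠ 0 := by omega
  rw [cycleMonomial_mul_cycleWeight ha hza hper.1 hfza (h.cycleDeriv_ne_zero hd hsep hper) hβ
    hαβ.le, h.eval_derivative_periodTwoPoly hd hper]

lemma sum_cycleMonomial_mul_cycleWeight {α β : ℕ} (hαβ : α + β + 2 < 2 * d) :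
    ∑ z ∈ periodTwoFinset d p q a, cycleMonomial p q a α β z * cycleWeight d p q a z = 0 := by
  by_cases hβ : β + 1 ≤ d
  · exact h.sum_cycleMonomial_mul_cycleWeight_of_lt ha hsep hβ hαβ
  have hswap := h.sum_cycleMonomial_mul_cycleWeight_of_lt ha hsep (α := β) (β := α)
    (by omega) (by omega)
  rw [← (starRingEnd ℂ).injective.eq_iff, map_sum, map_zero, ← hswap]
  have hinv (z : ℂ) (hz : z ∈ periodTwoFinset d p q a) :=
    (h.mem_periodTwoFinset.1 hz).2.2.2
  refine Finset.sum_nbij' (conjRatio p q) (conjRatio p q)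
    (fun z ↦ h.conjRatio_mem_periodTwoFinset ha) (fun z ↦ h.conjRatio_mem_periodTwoFinset ha)
    hinv hinv fun z hz ↦ ?_
  have hper := (h.mem_periodTwoFinset.1 hz).2
  rw [map_mul, cycleMonomial_conjRatio a β α hper, cycleWeight_conjRatio d a hper]

end IsNormalized

end CycleSums

section CycleIndependence

variable {d : ℕ} {p q : ℂ[X]} {a z : ℂ}

/-- The monomials `cycleMonomial p q a α β` with `α + β + 2 ≤ d`, indexed by `β = d - 1 - n` and
`α = n - 1 - j`, where `j < n < d`. -/
noncomputable def cycleBasis (d : ℕ) (p q : ℂ[X]) (a : ℂ) (k : Σ n : Fin d, Fin n) (z : ℂ) : ℂ :=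
  cycleMonomial p q a (k.1 - 1 - k.2) (d - 1 - k.1) z

lemma two_mul_card_sigma_fin (d : ℕ) :
    2 * Fintype.card (Σ n : Fin d, Fin n) = d * (d - 1) := by
  rw [Fintype.card_sigma, mul_comm, ← Finset.sum_range_id_mul_two]
  simp only [Fintype.card_fin]
  rw [Fin.sum_univ_eq_sum_range fun n ↦ n]

/-- The polynomial in `1 / (z - a)` and `1 / conj (f z - a)` with coefficients `c`, with its
denominators cleared. -/
noncomputable def cycleCombination (d : ℕ) (p q : ℂ[X]) (a : ℂ) (c : (Σ n : Fin d, Fin n) → ℂ) :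
    ℂ[X] :=
  ∑ n : Fin d, q ^ (d - 1 - n) * slopePoly p q a ^ (n : ℕ) *
    ∑ j : Fin n, C (c ⟨n, j⟩) * (X - C a) ^ (j : ℕ)

lemma natDegree_sum_C_mul_X_sub_C_pow_le {R : Type*} [CommRing R] (a : R) {n : ℕ}
    (c : Fin n → R) : (∑ j : Fin n, C (c j) * (X - C a) ^ (j : ℕ)).natDegree ≤ n - 1 :=
  natDegree_sum_le_of_forall_le _ _ fun j _ ↦
    (natDegree_C_mul_pow_le _ (natDegree_X_sub_C_le a) j).trans (by omega)

lemma natDegree_cycleCombination_lt (a : ℂ) (hd : d ≠ 0) (hp : p.natDegree ≤ d)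
    (hq : q.natDegree ≤ d) (c : (Σ n : Fin d, Fin n) → ℂ) :
    (cycleCombination d p q a c).natDegree < d * d := by
  refine lt_of_le_of_lt (natDegree_sum_le_of_forall_le (n := (d - 1) * d) _ _ fun n _ ↦ ?_)
    (Nat.mul_lt_mul_of_pos_right (by omega) (by omega))
  have hden : (q ^ (d - 1 - n)).natDegree ≤ (d - 1 - n) * d := natDegree_pow_le_of_le _ hq
  have hslope : (slopePoly p q a ^ (n : ℕ)).natDegree ≤ n * (d - 1) :=
    natDegree_pow_le_of_le _ (natDegree_slopePoly_le a hp hq)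
  refine (natDegree_mul_le_of_le (natDegree_mul_le_of_le hden hslope)
    (natDegree_sum_C_mul_X_sub_C_pow_le a _)).trans ?_
  obtain ⟨k, hk⟩ := Nat.exists_eq_add_of_lt n.2
  generalize (n : ℕ) = m at hk
  subst hk
  rw [show m + k + 1 - 1 - m = k by omega, Nat.add_sub_cancel]
  have := Nat.sub_le m 1
  nlinarith

lemma eval_cycleCombination (ha : a ∈ fixedPts p q) (hza : z ≠ a) (hqz : q.eval z ≠ 0)
    (hfz : conjRatio p q z ≠ a) (c : (Σ n : Fin d, Fin n) → ℂ) :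
    (cycleCombination d p q a c).eval z =
      (z - a) ^ (d - 2) * (slopePoly p q a).eval z ^ (d - 1) *
        ∑ k, c k * cycleBasis d p q a k z := by
  have hslope := eval_slopePoly_ne_zero ha hqz hfz
  rw [cycleCombination, eval_finsetSum, Fintype.sum_sigma, Finset.mul_sum]
  refine Finset.sum_congr rfl fun n _ ↦ ?_
  simp only [eval_mul, eval_finsetSum, Finset.mul_sum, eval_pow, eval_sub, eval_X, eval_C]
  refine Finset.sum_congr rfl fun j _ ↦ ?_
  rw [cycleBasis, cycleMonomial, conj_conjRatio_sub ha hqz]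
  obtain ⟨n, hn⟩ := n
  obtain ⟨j, hj⟩ := j
  obtain ⟨i, rfl⟩ := Nat.exists_eq_add_of_le' hj
  obtain ⟨k, rfl⟩ := Nat.exists_eq_add_of_le' hn
  dsimp only
  generalize c ⟨_, _⟩ = b
  rw [show k + (i + j.succ).succ - 2 = k + i + j by omega,
    show k + (i + j.succ).succ - 1 - (i + j.succ) = k by omega,
    show k + (i + j.succ).succ - 1 = k + i + j + 1 by omega,
    show i + j.succ - 1 - j = i by omega, Nat.succ_eq_add_one]
  simp only [inv_pow, div_pow, mul_pow]
  field_simp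
  ring

lemma linearIndependent_cycleBasis (hd : d ≠ 0) (hpq : IsCoprime p q) (hp : p.natDegree ≤ d)
    (hq : q.natDegree = d) (ha : a ∈ fixedPts p q) {Z : Finset ℂ} (hcard : d * d ≤ Z.card)
    (hZ : ∀ z ∈ Z, z ≠ a ∧ q.eval z ≠ 0 ∧ conjRatio p q z ≠ a) :
    LinearIndependent ℂ fun (k : Σ n : Fin d, Fin n) (z : Z) ↦ cycleBasis d p q a k z := by
  rw [Fintype.linearIndependent_iff]
  intro c hc
  have hzero : cycleCombination d p q a c = 0 := by
    refine eq_zero_of_natDegree_lt_card_of_eval_eq_zero' _ Z (fun z hz ↦ ?_)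
      ((natDegree_cycleCombination_lt a hd hp hq.le c).trans_le hcard)
    obtain ⟨hza, hqz, hfz⟩ := hZ z hz
    have hcz : ∑ k, c k * cycleBasis d p q a k z = 0 := by
      simpa using congrFun hc ⟨z, hz⟩
    rw [eval_cycleCombination ha hza hqz hfz, hcz, mul_zero]
  let e : ℕ → ℂ[X] := fun n ↦
    if hn : n < d then ∑ j : Fin n, C (c ⟨⟨n, hn⟩, j⟩) * (X - C a) ^ (j : ℕ) else 0
  have he (n : Fin d) : e n = ∑ j : Fin n, C (c ⟨n, j⟩) * (X - C a) ^ (j : ℕ) := dif_pos n.2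
  have hsum : ∑ n ∈ Finset.range d, q ^ (d - 1 - n) * slopePoly p q a ^ n * e n = 0 := by
    rw [← hzero, cycleCombination, ← Fin.sum_univ_eq_sum_range fun n ↦
      q ^ (d - 1 - n) * slopePoly p q a ^ n * e n]
    exact Finset.sum_congr rfl fun n _ ↦ by rw [he]
  have hdeg (n : ℕ) (hn : n < d) : (e n).natDegree < q.natDegree := by
    rw [he ⟨n, hn⟩, hq]
    exact (natDegree_sum_C_mul_X_sub_C_pow_le a _).trans_lt (by simp only; omega)
  have hrow := eq_zero_of_sum_pow_mul_pow_mul_eq_zero (isCoprime_slopePoly hpq ha) hdeg hsum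
  rintro ⟨n, j⟩
  have hn := hrow n n.2
  rw [he] at hn
  exact congrFun (eq_zero_of_sum_C_mul_X_sub_C_pow_eq_zero a hn) j

end CycleIndependence

/-! ### Repelling fixed points are bounded by attracting ones -/

/-- The fixed points of `conjRatio p q` at which it is locally contracting. -/
def attractingPts (p q : ℂ[X]) : Set ℂ := {z ∈ fixedPts p q | ‖ratioDeriv p q z‖ < 1}

/-- The fixed points of `conjRatio p q` at which it is locally expanding. -/
def repellingPts (p q : ℂ[X]) : Set ℂ := {z ∈ fixedPts p q | 1 < ‖ratioDeriv p q z‖}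

namespace IsNormalized

variable {d : ℕ} {p q : ℂ[X]} {a z : ℂ} (h : IsNormalized d p q)

include h in
lemma finite_fixedPts : (fixedPts p q).Finite :=
  (periodTwoPoly d p q).roots.toFinset.finite_toSet.subset fun _ hz ↦
    h.mem_roots_toFinset.2 (isPeriodTwo_of_mem_fixedPts hz)

variable (ha : a ∈ fixedPts p q)

/-- The involution induced by `conjRatio p q` on its points of period two other than `a`. -/
noncomputable def periodTwoSwap (z : periodTwoFinset d p q a) : periodTwoFinset d p q a :=
  ⟨conjRatio p q z, h.conjRatio_mem_periodTwoFinset ha z.2⟩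

lemma involutive_periodTwoSwap : Function.Involutive (h.periodTwoSwap ha) := fun z ↦
  Subtype.ext (h.mem_periodTwoFinset.1 z.2).2.2.2

lemma image_fixed_periodTwoSwap (P : ℂ → Prop) :
    Subtype.val '' {z | h.periodTwoSwap ha z = z ∧ P z} = {z ∈ fixedPts p q | z ≠ a ∧ P z} := by
  ext z
  constructor
  · rintro ⟨⟨z, hz⟩, ⟨hfix, hPz⟩, rfl⟩
    obtain ⟨hza, hper⟩ := h.mem_periodTwoFinset.1 hz
    exact ⟨mem_fixedPts_iff.2 ⟨hper.1, congrArg Subtype.val hfix⟩, hza, hPz⟩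
  · rintro ⟨hz, hza, hPz⟩
    exact ⟨⟨z, h.mem_periodTwoFinset.2 ⟨hza, isPeriodTwo_of_mem_fixedPts hz⟩⟩,
      ⟨Subtype.ext (mem_fixedPts_iff.1 hz).2, hPz⟩, rfl⟩

variable (hsep : (periodTwoPoly d p q).Separable)
include hsep

lemma twistedForm_cycleBasis (k l : Σ n : Fin d, Fin n) :
    twistedForm (h.periodTwoSwap ha) (fun z ↦ cycleWeight d p q a z)
      (fun z ↦ cycleBasis d p q a k z) (fun z ↦ cycleBasis d p q a l z) = 0 := by
  have hsum := h.sum_cycleMonomial_mul_cycleWeight ha hsep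
    (α := (k.1 - 1 - k.2) + (d - 1 - l.1)) (β := (d - 1 - k.1) + (l.1 - 1 - l.2)) (by omega)
  rw [← Finset.sum_coe_sort] at hsum
  rw [twistedForm, ← hsum]
  refine Finset.sum_congr rfl fun z _ ↦ ?_
  rw [← cycleMonomial_mul_cycleMonomial, cycleBasis, cycleBasis, periodTwoSwap,
    cycleMonomial_conjRatio _ _ _ (h.mem_periodTwoFinset.1 z.2).2, Complex.conj_conj]

variable (hd : d ≠ 0)
include h ha hd

lemma cycleWeight_ne_zero (hz : z ∈ periodTwoFinset d p q a) : cycleWeight d p q a z ≠ 0 := by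
  obtain ⟨hza, hper⟩ := h.mem_periodTwoFinset.1 hz
  have hfza := (h.mem_periodTwoFinset.1 (h.conjRatio_mem_periodTwoFinset ha hz)).1
  have hderiv := h.cycleDeriv_ne_zero hd hsep hper
  exact div_ne_zero (mul_ne_zero (pow_ne_zero _ (sub_ne_zero.2 hza))
    (pow_ne_zero _ ((_root_.map_ne_zero _).2 (sub_ne_zero.2 hfza)))) hderiv

theorem ncard_repellingPts_diff_le :
    (repellingPts p q \ {a}).ncard ≤ (attractingPts p q \ {a}).ncard + d := by
  set V := Submodule.span ℂ (Set.range fun (k : Σ n : Fin d, Fin n)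
    (z : periodTwoFinset d p q a) ↦ cycleBasis d p q a k z)
  have hdim : 2 * Module.finrank ℂ V = d * (d - 1) := by
    rw [finrank_span_eq_card, two_mul_card_sigma_fin]
    refine linearIndependent_cycleBasis hd h.isCoprime h.natDegree_num_le h.natDegree_den ha
      (h.card_periodTwoFinset ha hsep).ge fun z hz ↦ ?_
    have hz' := h.mem_periodTwoFinset.1 hz
    exact ⟨hz'.1, hz'.2.1, (h.mem_periodTwoFinset.1 (h.conjRatio_mem_periodTwoFinset ha hz)).1⟩
  have hisotropic (u) (hu : u ∈ V) :
      twistedForm (h.periodTwoSwap ha) (fun z ↦ cycleWeight d p q a z) u u = 0 := by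
    refine twistedForm_eq_zero_of_mem_span ?_ hu hu
    rintro _ ⟨k, rfl⟩ _ ⟨l, rfl⟩
    exact h.twistedForm_cycleBasis ha hsep k l
  have hsign := two_mul_finrank_add_card_pos_le (h.involutive_periodTwoSwap ha)
    (fun z ↦ cycleWeight_conjRatio d a (h.mem_periodTwoFinset.1 z.2).2)
    (fun z ↦ h.cycleWeight_ne_zero ha hsep hd z.2) hisotropic
  rw [hdim, Fintype.card_coe, h.card_periodTwoFinset ha hsep,
    ← Set.ncard_image_of_injective _ Subtype.val_injective,
    ← Set.ncard_image_of_injective {z | _ ∧ _ < (0 : ℝ)} Subtype.val_injective,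
    h.image_fixed_periodTwoSwap ha fun z ↦ 0 < (cycleWeight d p q a z).re,
    h.image_fixed_periodTwoSwap ha fun z ↦ (cycleWeight d p q a z).re < 0] at hsign
  have hrep : {z ∈ fixedPts p q | z ≠ a ∧ 0 < (cycleWeight d p q a z).re} =
      repellingPts p q \ {a} := by
    ext z
    exact (and_congr_right fun hz ↦ and_comm.trans
      (and_congr_left fun hza ↦ cycleWeight_re_pos_iff d hz hza)).trans and_assoc.symm
  have hatt : {z ∈ fixedPts p q | z ≠ a ∧ (cycleWeight d p q a z).re < 0} =
      attractingPts p q \ {a} := by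
    ext z
    exact (and_congr_right fun hz ↦ and_comm.trans
      (and_congr_left fun hza ↦ cycleWeight_re_neg_iff d hz hza)).trans and_assoc.symm
  rw [hrep, hatt] at hsign
  obtain ⟨k, rfl⟩ := Nat.exists_eq_succ_of_ne_zero hd
  simp only [Nat.succ_eq_add_one, Nat.add_sub_cancel] at hsign
  nlinarith

omit ha in
theorem ncard_fixedPts_add_one_le :
    (fixedPts p q).ncard + 1 ≤ 2 * max 1 (attractingPts p q).ncard + d := by
  have hatt : (attractingPts p q).Finite := h.finite_fixedPts.subset fun z hz ↦ hz.1
  have hrep : (repellingPts p q).Finite := h.finite_fixedPts.subset fun z hz ↦ hz.1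
  have hunion : fixedPts p q ⊆ attractingPts p q ∪ repellingPts p q := fun z hz ↦
    (h.norm_ratioDeriv_ne_one hd hsep hz).lt_or_gt.imp (⟨hz, ·⟩) (⟨hz, ·⟩)
  have hcard : (fixedPts p q).ncard ≤ (attractingPts p q).ncard + (repellingPts p q).ncard :=
    (Set.ncard_le_ncard hunion (hatt.union hrep)).trans (Set.ncard_union_le _ _)
  rcases (attractingPts p q).eq_empty_or_nonempty with hempty | ⟨a, ha⟩
  · rcases (repellingPts p q).eq_empty_or_nonempty with hempty' | ⟨a, ha⟩
    · rw [hempty, hempty', Set.ncard_empty] at hcard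
      omega
    · have hle := h.ncard_repellingPts_diff_le ha.1 hsep hd
      rw [Set.ncard_sdiff_singleton_of_mem ha, hempty, Set.empty_sdiff, Set.ncard_empty] at hle
      rw [hempty, Set.ncard_empty] at hcard
      omega
  · have hle := h.ncard_repellingPts_diff_le ha.1 hsep hd
    have ha' : a ∉ repellingPts p q := fun ha' ↦ ha.2.not_gt ha'.2
    rw [Set.ncard_sdiff_singleton_of_mem ha, Set.sdiff_singleton_eq_self ha'] at hle
    have hpos := (Set.ncard_pos hatt).2 ⟨a, ha⟩
    omega

end IsNormalized

/-! ### Attracting fixed points attract critical points -/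

section Fatou

open Metric Filter Topology

lemma half_radius_le_mul_norm_deriv_of_rightInverse {F g : ℂ → ℂ} {a : ℂ} {r R : ℝ} (hr : 0 < r)
    (hg : ContinuousOn g (ball a r)) (hF : ∀ y ∈ ball a r, deriv F (g y) ≠ 0)
    (hinv : ∀ y ∈ ball a r, F (g y) = y) (hR : ∀ y ∈ ball a r, ‖g y‖ ≤ R) :
    r / 2 ≤ R * ‖deriv F (g a)‖ := by
  have hderiv (y) (hy : y ∈ ball a r) : HasDerivAt g (deriv F (g y))⁻¹ y :=
    HasDerivAt.of_local_left_inverse (hg.continuousAt (isOpen_ball.mem_nhds hy))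
      (differentiableAt_of_deriv_ne_zero (hF y hy)).hasDerivAt (hF y hy)
      (eventually_of_mem (isOpen_ball.mem_nhds hy) hinv)
  have hball : closedBall a (r / 2) ⊆ ball a r := closedBall_subset_ball (by linarith)
  have hdiff : DiffContOnCl ℂ g (ball a (r / 2)) :=
    DifferentiableOn.diffContOnCl fun y hy ↦
      (hderiv y (hball (closure_ball_subset_closedBall hy))).differentiableAt.differentiableWithinAt
  have hcauchy := Complex.norm_deriv_le_of_forall_mem_sphere_norm_le (half_pos hr) hdiff
    fun y hy ↦ hR y (hball (sphere_subset_closedBall hy))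
  have hpos := norm_pos_iff.2 (hF a (mem_ball_self hr))
  rw [(hderiv a (mem_ball_self hr)).deriv, norm_inv, inv_eq_one_div,
    div_le_div_iff₀ hpos (half_pos hr), one_mul] at hcauchy
  exact hcauchy

variable {p q : ℂ[X]} {a z : ℂ}

lemma continuousAt_conjRatio (hz : q.eval z ≠ 0) : ContinuousAt (conjRatio p q) z :=
  Complex.continuous_conj.continuousAt.comp
    (p.continuous.continuousAt.div q.continuous.continuousAt hz)

lemma hasDerivAt_conjRatio_conjRatio (hz : q.eval z ≠ 0) (hfz : q.eval (conjRatio p q z) ≠ 0) :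
    HasDerivAt (fun z ↦ conjRatio p q (conjRatio p q z))
      (conj (ratioDeriv p q (conjRatio p q z)) * ratioDeriv p q z) z := by
  have hcomp : (fun z ↦ conjRatio p q (conjRatio p q z)) =
      (fun w ↦ (conjPoly p).eval w / (conjPoly q).eval w) ∘ fun z ↦ p.eval z / q.eval z := by
    funext z
    simp only [Function.comp_apply, eval_conjPoly, ← map_div₀]
    rfl
  have houter := hasDerivAt_ratio (p := conjPoly p) (q := conjPoly q) (z := p.eval z / q.eval z)
    (by rw [eval_conjPoly]; exact (_root_.map_ne_zero _).2 hfz)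
  rw [ratioDeriv_conjPoly] at houter
  rw [hcomp]
  exact houter.comp z (hasDerivAt_ratio p hz)

lemma eventually_dist_conjRatio_le (ha : a ∈ attractingPts p q) :
    ∀ᶠ z in 𝓝 a, q.eval z ≠ 0 ∧ dist (conjRatio p q z) a ≤ dist z a := by
  obtain ⟨hqa, hfa⟩ := mem_fixedPts_iff.1 ha.1
  have hlittle := (hasDerivAt_iff_isLittleO.1 (hasDerivAt_ratio (p := p) hqa)).def
    (sub_pos.2 ha.2)
  filter_upwards [hlittle, q.continuous.continuousAt.eventually_ne hqa] with z hz hqz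
  refine ⟨hqz, ?_⟩
  calc dist (conjRatio p q z) a
      = dist (conjRatio p q z) (conjRatio p q a) := by rw [hfa]
    _ = ‖p.eval z / q.eval z - p.eval a / q.eval a‖ := by
        rw [dist_eq_norm, conjRatio, conjRatio, ← map_sub, RCLike.norm_conj]
    _ ≤ ‖p.eval z / q.eval z - p.eval a / q.eval a - (z - a) • ratioDeriv p q a‖ +
          ‖(z - a) • ratioDeriv p q a‖ := norm_le_norm_sub_add _ _
    _ ≤ (1 - ‖ratioDeriv p q a‖) * ‖z - a‖ + ‖z - a‖ * ‖ratioDeriv p q a‖ := by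
        rw [norm_smul]
        gcongr
    _ = dist z a := by rw [dist_eq_norm]; ring

/-- A bounded open set without poles and critical points of `p / q` that is completely invariant
under `conjRatio p q`. The basin of an attracting fixed point would be such a set if it contained
no critical point. -/
structure IsUnramifiedBasin (p q : ℂ[X]) (B : Set ℂ) : Prop where
  isOpen : IsOpen B
  isBounded : Bornology.IsBounded B
  eval_den_ne_zero : ∀ z ∈ B, q.eval z ≠ 0
  ratioDeriv_ne_zero : ∀ z ∈ B, ratioDeriv p q z ≠ 0
  mapsTo : Set.MapsTo (conjRatio p q) B B
  mem_of_conjRatio_mem : ∀ z, q.eval z ≠ 0 → conjRatio p q z ∈ B → z ∈ B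

namespace IsUnramifiedBasin

variable {B : Set ℂ} (hB : IsUnramifiedBasin p q B)
include hB

lemma continuous_restrict : Continuous (hB.mapsTo.restrict (conjRatio p q) B B) :=
  ContinuousOn.mapsToRestrict
    (fun z hz ↦ (continuousAt_conjRatio (hB.eval_den_ne_zero z hz)).continuousWithinAt) hB.mapsTo

lemma isLocalHomeomorph_restrict :
    IsLocalHomeomorph (hB.mapsTo.restrict (conjRatio p q) B B) := by
  have hratio : IsLocalHomeomorphOn (fun z ↦ p.eval z / q.eval z) B := fun z hz ↦ by
    have hstrict := hasStrictDerivAt_ratio p (hB.eval_den_ne_zero z hz)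
    exact ⟨_, (hstrict.hasStrictFDerivAt_equiv
      (hB.ratioDeriv_ne_zero z hz)).mem_toOpenPartialHomeomorph_source, by simp⟩
  have hval : IsLocalHomeomorph (Subtype.val : B → ℂ) :=
    hB.isOpen.isOpenEmbedding_subtypeVal.isLocalHomeomorph
  have hcomp : IsLocalHomeomorph ((fun z ↦ p.eval z / q.eval z) ∘ (Subtype.val : B → ℂ)) := by
    rw [isLocalHomeomorph_iff_isLocalHomeomorphOn_univ]
    exact hratio.comp hval.isLocalHomeomorphOn fun z _ ↦ z.2
  exact IsLocalHomeomorph.of_comp (g := (Subtype.val : B → ℂ))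
    (f := hB.mapsTo.restrict (conjRatio p q) B B)
    (Complex.conjLIE.toHomeomorph.isLocalHomeomorph.comp hcomp) hval hB.continuous_restrict

lemma finite_preimage_restrict (y : B) :
    (hB.mapsTo.restrict (conjRatio p q) B B ⁻¹' {y}).Finite := by
  have hmem (x : B) (hx : hB.mapsTo.restrict (conjRatio p q) B B x = y) :
      (p - C (conj (y : ℂ)) * q).eval (x : ℂ) = 0 := by
    have := (conjRatio_eq_iff (hB.eval_den_ne_zero x x.2)).1 (congrArg Subtype.val hx)
    simp [this]
  by_cases hne : p - C (conj (y : ℂ)) * q = 0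
  · refine (Set.finite_empty).subset fun x _ ↦ hB.ratioDeriv_ne_zero x x.2 ?_
    have hW : wronskian q p = 0 := by
      rw [← wronskian_sub_C_mul_self, hne, wronskian_zero_right]
    rw [ratioDeriv, hW, eval_zero, zero_div]
  · exact ((p - C (conj (y : ℂ)) * q).roots.toFinset.finite_toSet.preimage
      Subtype.val_injective.injOn).subset fun x hx ↦ by simp [hne, ← hmem x hx]

variable (hpq : IsCoprime p q)
include hpq

lemma isClosedMap_restrict : IsClosedMap (hB.mapsTo.restrict (conjRatio p q) B B) := by
  refine fun S hS ↦ IsSeqClosed.isClosed fun y y₀ hy hlim ↦ ?_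
  choose x hxS hxy using hy
  obtain ⟨z, -, φ, hφ, hxz⟩ := tendsto_subseq_of_bounded hB.isBounded fun n ↦ (x n).2
  have heq (n : ℕ) : p.eval (x n : ℂ) = conj (y n : ℂ) * q.eval (x n : ℂ) :=
    (conjRatio_eq_iff (hB.eval_den_ne_zero _ (x n).2)).1 (congrArg Subtype.val (hxy n))
  have hlim' : Tendsto (fun n ↦ (y (φ n) : ℂ)) atTop (𝓝 y₀) :=
    (continuous_subtype_val.tendsto y₀).comp (hlim.comp hφ.tendsto_atTop)
  have heqz : p.eval z = conj (y₀ : ℂ) * q.eval z := by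
    refine tendsto_nhds_unique ((p.continuous.tendsto z).comp hxz) ?_
    refine (((Complex.continuous_conj.tendsto _).comp hlim').mul
      ((q.continuous.tendsto z).comp hxz)).congr fun n ↦ (heq (φ n)).symm
  have hqz : q.eval z ≠ 0 := fun hqz ↦
    eval_ne_zero_of_isCoprime hpq hqz (by rw [heqz, hqz, mul_zero])
  have hfz : conjRatio p q z = y₀ := (conjRatio_eq_iff hqz).2 heqz
  have hzB : z ∈ B := hB.mem_of_conjRatio_mem z hqz (hfz ▸ y₀.2)
  exact ⟨⟨z, hzB⟩, hS.isSeqClosed (fun n ↦ hxS (φ n)) (tendsto_subtype_rng.2 hxz),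
    Subtype.ext hfz⟩

lemma isCoveringMap_restrict : IsCoveringMap (hB.mapsTo.restrict (conjRatio p q) B B) := by
  rw [isCoveringMap_iff_isCoveringMapOn_univ]
  refine (hB.isClosedMap_restrict hpq).isCoveringMapOn_of_isLocalHomeomorphOn
    (fun y _ ↦ hB.finite_preimage_restrict y) ?_
  rw [Set.preimage_univ, ← isLocalHomeomorph_iff_isLocalHomeomorphOn_univ]
  exact hB.isLocalHomeomorph_restrict

lemma exists_rightInverse_iterate {r : ℝ} (hr : 0 < r) (hrB : ball a r ⊆ B)
    (ha : conjRatio p q a = a) (n : ℕ) :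
    ∃ g : C(ball a r, B), (g ⟨a, mem_ball_self hr⟩ : ℂ) = a ∧
      ∀ x, (conjRatio p q)^[n] (g x) = x := by
  have : ContractibleSpace (ball a r) := (convex_ball a r).contractibleSpace (by simpa)
  have : LocallyPathConnectedSpace (ball a r) := isOpen_ball.locallyPathConnectedSpace
  induction n with
  | zero => exact ⟨⟨Set.inclusion hrB, continuous_inclusion hrB⟩, rfl, fun x ↦ rfl⟩
  | succ n ih =>
    obtain ⟨g, hga, hg⟩ := ih
    obtain ⟨g', ⟨hga', hg'⟩, -⟩ :=
      (hB.isCoveringMap_restrict hpq).existsUnique_continuousMap_lifts g ⟨a, mem_ball_self hr⟩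
        ⟨a, hrB (mem_ball_self hr)⟩ (Subtype.ext (ha.trans hga.symm))
    refine ⟨g', by rw [hga'], fun x ↦ ?_⟩
    have hfg : conjRatio p q (g' x) = g x := congrArg Subtype.val (congrFun hg' x)
    rw [Function.iterate_succ_apply, hfg, hg]

lemma exists_continuousOn_rightInverse_iterate {r : ℝ} (hr : 0 < r) (hrB : ball a r ⊆ B)
    (ha : conjRatio p q a = a) (n : ℕ) :
    ∃ g : ℂ → ℂ, ContinuousOn g (ball a r) ∧ Set.MapsTo g (ball a r) B ∧ g a = a ∧
      ∀ y ∈ ball a r, (conjRatio p q)^[n] (g y) = y := by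
  obtain ⟨g, hga, hg⟩ := hB.exists_rightInverse_iterate hpq hr hrB ha n
  set g' : ℂ → ℂ := Function.extend Subtype.val (fun x ↦ (g x : ℂ)) 0
  have hg' (y : ball a r) : g' y = g y := Subtype.val_injective.extend_apply _ _ y
  refine ⟨g', ?_, fun y hy ↦ hg' ⟨y, hy⟩ ▸ (g _).2, (hg' ⟨a, mem_ball_self hr⟩).trans hga,
    fun y hy ↦ (congrArg _ (hg' ⟨y, hy⟩)).trans (hg ⟨y, hy⟩)⟩
  have hrestrict : Set.domRestrict (ball a r) g' = fun x ↦ (g x : ℂ) := funext hg'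
  rw [continuousOn_iff_continuous_domRestrict, hrestrict]
  fun_prop

omit hpq in
lemma deriv_iterate_ne_zero (n : ℕ) {z : ℂ} (hz : z ∈ B) :
    deriv (fun z ↦ conjRatio p q (conjRatio p q z))^[n] z ≠ 0 := by
  induction n generalizing z with
  | zero => simp
  | succ n ih =>
    have hfz := hB.mapsTo hz
    have hinner := hasDerivAt_conjRatio_conjRatio (p := p) (hB.eval_den_ne_zero z hz)
      (hB.eval_den_ne_zero _ hfz)
    have houter := ih (hB.mapsTo hfz)
    rw [Function.iterate_succ, deriv_comp z (differentiableAt_of_deriv_ne_zero houter)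
      hinner.differentiableAt, hinner.deriv]
    exact mul_ne_zero houter (mul_ne_zero ((_root_.map_ne_zero _).2
      (hB.ratioDeriv_ne_zero _ hfz)) (hB.ratioDeriv_ne_zero z hz))

theorem notMem_attractingPts (ha : a ∈ B) : a ∉ attractingPts p q := by
  intro hatt
  have hfa := (mem_fixedPts_iff.1 hatt.1).2
  obtain ⟨r, hr, hrB⟩ := Metric.isOpen_iff.1 hB.isOpen a ha
  obtain ⟨R, hR⟩ := isBounded_iff_forall_norm_le.1 hB.isBounded
  -- The second iterate is holomorphic. Its inverse branches at `a` all exist on one ball and are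
  -- uniformly bounded there, so by Cauchy's estimate its derivatives cannot decay.
  set F := fun z ↦ conjRatio p q (conjRatio p q z) with hF
  have hderiv : HasDerivAt F (conj (ratioDeriv p q a) * ratioDeriv p q a) a := by
    simpa only [hfa] using hasDerivAt_conjRatio_conjRatio (p := p) (hB.eval_den_ne_zero a ha)
      (by rw [hfa]; exact hB.eval_den_ne_zero a ha)
  have hlower (n : ℕ) : r / 2 ≤ R * (‖ratioDeriv p q a‖ ^ 2) ^ n := by
    obtain ⟨g, hcont, hgB, hga, hg⟩ :=
      hB.exists_continuousOn_rightInverse_iterate hpq hr hrB hfa (2 * n)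
    have hle := half_radius_le_mul_norm_deriv_of_rightInverse (F := F^[n]) hr hcont
      (fun y hy ↦ hB.deriv_iterate_ne_zero n (hgB hy))
      (fun y hy ↦ (congrFun (Function.iterate_mul (conjRatio p q) 2 n).symm _).trans (hg y hy))
      fun y hy ↦ hR _ (hgB hy)
    rw [hga, (HasDerivAt.iterate a hderiv (by rw [hF]; simp only [hfa]) n).deriv] at hle
    simpa [sq] using hle
  have hlim : Tendsto (fun n : ℕ ↦ R * (‖ratioDeriv p q a‖ ^ 2) ^ n) atTop (𝓝 (R * 0)) :=
    (tendsto_pow_atTop_nhds_zero_of_lt_one (sq_nonneg _)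
      (sq_lt_one_iff₀ (norm_nonneg _) |>.2 hatt.2)).const_mul R
  have := ge_of_tendsto' hlim hlower
  linarith

end IsUnramifiedBasin

/-- The points that `conjRatio p q` maps into `U` after exactly `n` steps, none of them
starting at a pole. -/
def iteratedPreimage (p q : ℂ[X]) (U : Set ℂ) : ℕ → Set ℂ
  | 0 => U
  | n + 1 => {z | q.eval z ≠ 0} ∩ conjRatio p q ⁻¹' iteratedPreimage p q U n

lemma isOpen_iteratedPreimage {U : Set ℂ} (hU : IsOpen U) (n : ℕ) :
    IsOpen (iteratedPreimage p q U n) := by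
  induction n with
  | zero => exact hU
  | succ n ih =>
    exact ContinuousOn.isOpen_inter_preimage
      (fun z hz ↦ (continuousAt_conjRatio hz).continuousWithinAt)
      (isOpen_ne_fun q.continuous continuous_const) ih

lemma iteratedPreimage_subset_of_invariant {U S : Set ℂ} (hU : U ⊆ S)
    (hS : ∀ z, q.eval z ≠ 0 → conjRatio p q z ∈ S → z ∈ S) (n : ℕ) :
    iteratedPreimage p q U n ⊆ S := by
  induction n with
  | zero => exact hU
  | succ n ih => exact fun z hz ↦ hS z hz.1 (ih hz.2)

lemma iteratedPreimage_mono {U V : Set ℂ} (hUV : U ⊆ V) (n : ℕ) :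
    iteratedPreimage p q U n ⊆ iteratedPreimage p q V n := by
  induction n with
  | zero => exact hUV
  | succ n ih => exact Set.inter_subset_inter_right _ (Set.preimage_mono ih)

theorem exists_critical_mem_iteratedPreimage (hpq : IsCoprime p q) {R : ℝ}
    (hescape : ∀ z, R ≤ ‖z‖ → q.eval z ≠ 0 → R ≤ ‖conjRatio p q z‖) (haR : ‖a‖ < R)
    (ha : a ∈ attractingPts p q) {U : Set ℂ} (hU : U ∈ 𝓝 a) :
    ∃ c, q.eval c ≠ 0 ∧ (wronskian q p).eval c = 0 ∧ ∃ n, c ∈ iteratedPreimage p q U n := by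
  have hnorm : ∀ᶠ z in 𝓝 a, ‖z‖ < R := continuous_norm.continuousAt.eventually_lt_const haR
  obtain ⟨s, hs, hball⟩ := Metric.eventually_nhds_iff_ball.1
    ((eventually_dist_conjRatio_le ha).and ((eventually_mem_set.2 hU).and hnorm))
  set B : Set ℂ := ⋃ n, iteratedPreimage p q (ball a s) n
  have hden (z) (hz : z ∈ B) : q.eval z ≠ 0 := by
    obtain ⟨n, hn⟩ := Set.mem_iUnion.1 hz
    cases n with
    | zero => exact (hball z hn).1.1
    | succ n => exact hn.1
  by_contra! hnone
  have hB : IsUnramifiedBasin p q B := by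
    refine ⟨isOpen_iUnion (isOpen_iteratedPreimage isOpen_ball), ?_, hden, ?_, ?_, ?_⟩
    · refine (isBounded_ball (x := (0 : ℂ)) (r := R)).subset (Set.iUnion_subset fun n ↦ ?_)
      refine iteratedPreimage_subset_of_invariant (fun z hz ↦ ?_) (fun z hz hfz ↦ ?_) n
      · exact mem_ball_zero_iff.2 (hball z hz).2.2
      · rw [mem_ball_zero_iff] at hfz ⊢
        exact lt_of_not_ge fun hRz ↦ hfz.not_ge (hescape z hRz hz)
    · intro z hz
      obtain ⟨n, hn⟩ := Set.mem_iUnion.1 hz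
      refine div_ne_zero (fun hW ↦ ?_) (pow_ne_zero _ (hden z hz))
      exact hnone z (hden z hz) hW n
        (iteratedPreimage_mono (fun y hy ↦ (hball y hy).2.1) n hn)
    · intro z hz
      obtain ⟨n, hn⟩ := Set.mem_iUnion.1 hz
      cases n with
      | zero => exact Set.mem_iUnion.2 ⟨0, (hball z hn).1.2.trans_lt hn⟩
      | succ n => exact Set.mem_iUnion.2 ⟨n, hn.2⟩
    · intro z hz hfz
      obtain ⟨n, hn⟩ := Set.mem_iUnion.1 hfz
      exact Set.mem_iUnion.2 ⟨n + 1, hz, hn⟩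
  exact hB.notMem_attractingPts hpq (Set.mem_iUnion.2 ⟨0, mem_ball_self hs⟩) ha

end Fatou

/-! ### The change of coordinate `u = 1 / (z - m)` -/

section InvShift

variable {K : Type*} [Field K] {d : ℕ} {f : K[X]}

/-- The polynomial `u ^ d * f (m + 1 / u)` in `u`, for `f` of degree at most `d`. -/
noncomputable def invShift (d : ℕ) (m : K) (f : K[X]) : K[X] := reflect d (taylor m f)

lemma eval_invShift (hf : f.natDegree ≤ d) (m : K) {u : K} (hu : u ≠ 0) :
    (invShift d m f).eval u = u ^ d * f.eval (m + u⁻¹) := by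
  have : Invertible u⁻¹ := invertibleOfNonzero (inv_ne_zero hu)
  have h := eval₂_reflect_mul_pow (RingHom.id K) u⁻¹ d (taylor m f)
    (by rwa [natDegree_taylor])
  rw [invOf_eq_inv, inv_inv, ← eval, ← eval, taylor_eval] at h
  rw [invShift, add_comm m, ← h, inv_pow, mul_comm, inv_mul_cancel_right₀ (pow_ne_zero d hu)]

lemma coeff_invShift_self (d : ℕ) (m : K) (f : K[X]) : (invShift d m f).coeff d = f.eval m := by
  rw [invShift, coeff_reflect, revAt_le le_rfl, Nat.sub_self, taylor_coeff_zero]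

lemma eval_zero_invShift (hf : f.natDegree ≤ d) (m : K) : (invShift d m f).eval 0 = f.coeff d := by
  rw [← coeff_zero_eq_eval_zero, invShift, coeff_reflect, revAt_le (Nat.zero_le _), Nat.sub_zero]
  obtain hlt | rfl := hf.lt_or_eq
  · rw [coeff_eq_zero_of_natDegree_lt hlt,
      coeff_eq_zero_of_natDegree_lt (by rwa [natDegree_taylor])]
  · exact coeff_taylor_natDegree m f

lemma natDegree_invShift_le (hf : f.natDegree ≤ d) (m : K) : (invShift d m f).natDegree ≤ d := by
  refine natDegree_le_iff_coeff_eq_zero.2 fun k hk ↦ ?_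
  rw [invShift, coeff_reflect, revAt_eq_self_of_lt hk]
  exact coeff_eq_zero_of_natDegree_lt (by rw [natDegree_taylor]; omega)

lemma natDegree_invShift (hf : f.natDegree ≤ d) {m : K} (hm : f.eval m ≠ 0) :
    (invShift d m f).natDegree = d :=
  natDegree_eq_of_le_of_coeff_ne_zero (natDegree_invShift_le hf m)
    (by rwa [coeff_invShift_self])

lemma natDegree_sub_C_mul_le {p q : K[X]} (hp : p.natDegree ≤ d) (hq : q.natDegree ≤ d) (b : K) :
    (p - C b * q).natDegree ≤ d :=
  natDegree_sub_le_iff_left ((natDegree_C_mul_le b q).trans hq) |>.2 hp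

lemma natDegree_wronskian_le {p q : K[X]} (hp : p.natDegree ≤ d) (hq : q.natDegree ≤ d) :
    (wronskian q p).natDegree ≤ 2 * d - 2 := by
  by_cases hW : wronskian q p = 0
  · simp [hW]
  by_cases hqd : q.coeff d = 0
  · have := natDegree_wronskian_lt_add hW
    have := natDegree_le_pred hq hqd
    omega
  · set b := p.coeff d / q.coeff d
    have hcoeff : (p - C b * q).coeff d = 0 := by
      rw [coeff_sub, coeff_C_mul, div_mul_cancel₀ _ hqd, sub_self]
    rw [← wronskian_sub_C_mul_self q p b] at hW ⊢
    have := natDegree_wronskian_lt_add hW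
    have := natDegree_le_pred (natDegree_sub_C_mul_le hp hq b) hcoeff
    omega

lemma card_roots_invShift [DecidableEq K] (hf : f.natDegree ≤ d) {m : K} (hm : f.eval m ≠ 0) :
    (invShift d m f).roots.toFinset.card =
      f.roots.toFinset.card + if f.coeff d = 0 then 1 else 0 := by
  have hf0 : f ≠ 0 := by rintro rfl; simp at hm
  have hS : invShift d m f ≠ 0 := fun h ↦ hm (by rw [← coeff_invShift_self d, h, coeff_zero])
  have hroots : (invShift d m f).roots.toFinset =
      f.roots.toFinset.image (fun z ↦ (z - m)⁻¹) ∪ if f.coeff d = 0 then {0} else ∅ := by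
    ext u
    obtain rfl | hu := eq_or_ne u 0
    · split_ifs <;> simp_all [eval_zero_invShift, sub_eq_zero]
    · have hmem : u ∈ f.roots.toFinset.image (fun z ↦ (z - m)⁻¹) ↔ f.eval (m + u⁻¹) = 0 := by
        simp [hf0, inv_eq_iff_eq_inv, sub_eq_iff_eq_add']
      rw [Finset.mem_union, hmem]
      split_ifs <;> simp [hS, hu, eval_invShift hf]
  rw [hroots, Finset.card_union_of_disjoint, Finset.card_image_of_injective]
  · split_ifs <;> simp
  · exact inv_injective.comp (sub_left_injective)
  · split_ifs <;> simp [sub_eq_zero, hf0, hm]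

end InvShift

section MobiusConjugate

variable {d : ℕ} {p q : ℂ[X]}

lemma eval_derivative_invShift {f : ℂ[X]} (hf : f.natDegree ≤ d) (m : ℂ) {u : ℂ} (hu : u ≠ 0) :
    (derivative (invShift d m f)).eval u = d * u ^ (d - 1) * f.eval (m + u⁻¹) +
      u ^ d * ((derivative f).eval (m + u⁻¹) * (-(u ^ 2)⁻¹)) := by
  have hinv : HasDerivAt (fun u : ℂ ↦ m + u⁻¹) (-(u ^ 2)⁻¹) u := (hasDerivAt_inv hu).const_add m
  have heq : (fun u ↦ (invShift d m f).eval u) =ᶠ[nhds u] fun u ↦ u ^ d * f.eval (m + u⁻¹) := by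
    filter_upwards [isOpen_ne.mem_nhds hu] with x hx using eval_invShift hf m hx
  exact (((invShift d m f).hasDerivAt u).congr_of_eventuallyEq heq.symm).unique
    ((hasDerivAt_pow d u).mul ((f.hasDerivAt _).comp u hinv))

/-- The denominator of `conjRatio p q` read in the coordinate `u = 1 / (z - m)`; the numerator is
`invShift d m q`. -/
noncomputable def mobiusDen (d : ℕ) (m : ℂ) (p q : ℂ[X]) : ℂ[X] :=
  invShift d m (p - C (conj m) * q)

lemma conj_div_sub_conj_mul (m x : ℂ) {y : ℂ} (hy : y ≠ 0) :
    conj (y / (x - conj m * y)) = (conj (x / y) - m)⁻¹ := by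
  rw [← inv_div, sub_div, mul_div_cancel_right₀ _ hy, map_inv₀, map_sub, Complex.conj_conj]

variable (hp : p.natDegree ≤ d) (hq : q.natDegree ≤ d) (m : ℂ)
include hp hq

lemma eval_mobiusDen {u : ℂ} (hu : u ≠ 0) :
    (mobiusDen d m p q).eval u = u ^ d * (p.eval (m + u⁻¹) - conj m * q.eval (m + u⁻¹)) := by
  rw [mobiusDen, eval_invShift (natDegree_sub_C_mul_le hp hq _) m hu, eval_sub, eval_mul, eval_C]

lemma eval_zero_mobiusDen :
    (mobiusDen d m p q).eval 0 = p.coeff d - conj m * q.coeff d := by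
  rw [mobiusDen, eval_zero_invShift (natDegree_sub_C_mul_le hp hq _), coeff_sub, coeff_C_mul]

lemma isCoprime_invShift_mobiusDen (hpq : IsCoprime p q) (hpqd : p.coeff d ≠ 0 ∨ q.coeff d ≠ 0) :
    IsCoprime (invShift d m q) (mobiusDen d m p q) := by
  refine isCoprime_of_forall_eval_ne_zero fun u hu ↦ ?_
  obtain rfl | hu0 := eq_or_ne u 0
  · rw [eval_zero_mobiusDen hp hq] at hu
    rw [eval_zero_invShift hq]
    intro hqd
    rw [hqd, mul_zero, sub_zero] at hu
    exact hpqd.elim (· hu) (· hqd)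
  · rw [eval_mobiusDen hp hq m hu0, mul_eq_zero_iff_left (pow_ne_zero _ hu0)] at hu
    rw [eval_invShift hq m hu0]
    refine mul_ne_zero (pow_ne_zero _ hu0) fun hqu ↦ eval_ne_zero_of_isCoprime hpq hqu ?_
    rwa [hqu, mul_zero, sub_zero] at hu

lemma wronskian_mobiusDen_invShift (hd : d ≠ 0) :
    wronskian (mobiusDen d m p q) (invShift d m q) = invShift (2 * d - 2) m (wronskian q p) := by
  refine eq_of_infinite_eval_eq _ _ ((Set.finite_singleton (0 : ℂ)).infinite_compl.mono ?_)
  intro u (hu : u ≠ 0)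
  have hpq := natDegree_sub_C_mul_le hp hq (conj m)
  obtain ⟨e, rfl⟩ := Nat.exists_eq_add_one_of_ne_zero hd
  rw [Set.mem_ofPred_eq, eval_invShift (natDegree_wronskian_le hp hq) m hu,
    ← wronskian_sub_C_mul_self q p (conj m)]
  simp only [wronskian, mobiusDen, eval_sub, eval_mul, eval_invShift hq m hu,
    eval_invShift hpq m hu, eval_derivative_invShift hq m hu, eval_derivative_invShift hpq m hu,
    show 2 * (e + 1) - 2 = 2 * e by omega, Nat.add_sub_cancel]
  field_simp
  ring

lemma conjRatio_invShift_mobiusDen {u : ℂ} (hu : u ≠ 0) (hqu : q.eval (m + u⁻¹) ≠ 0) :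
    conjRatio (invShift d m q) (mobiusDen d m p q) u = (conjRatio p q (m + u⁻¹) - m)⁻¹ := by
  rw [conjRatio, conjRatio, eval_mobiusDen hp hq m hu, eval_invShift hq m hu,
    mul_div_mul_left _ _ (pow_ne_zero _ hu), conj_div_sub_conj_mul m _ hqu]

lemma eval_mobiusDen_ne_zero_iff {u : ℂ} (hu : u ≠ 0) :
    (mobiusDen d m p q).eval u ≠ 0 ↔ p.eval (m + u⁻¹) ≠ conj m * q.eval (m + u⁻¹) := by
  rw [eval_mobiusDen hp hq m hu, mul_ne_zero_iff_left (pow_ne_zero _ hu), sub_ne_zero]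

variable {m}

lemma inv_sub_mem_fixedPts {z : ℂ} (hz : z ∈ fixedPts p q) (hzm : z ≠ m) :
    (z - m)⁻¹ ∈ fixedPts (invShift d m q) (mobiusDen d m p q) := by
  obtain ⟨hqz, hfz⟩ := mem_fixedPts_iff.1 hz
  have hu : (z - m)⁻¹ ≠ 0 := inv_ne_zero (sub_ne_zero.2 hzm)
  have hinv : m + ((z - m)⁻¹)⁻¹ = z := by rw [inv_inv, add_sub_cancel]
  refine mem_fixedPts_iff.2 ⟨?_, ?_⟩
  · rw [eval_mobiusDen_ne_zero_iff hp hq m hu, hinv, Ne, ← conjRatio_eq_iff hqz, hfz]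
    exact hzm
  · rw [conjRatio_invShift_mobiusDen hp hq m hu (by rwa [hinv]), hinv, hfz]

lemma norm_ratioDeriv_invShift_mobiusDen (hd : d ≠ 0) {z : ℂ} (hz : z ∈ fixedPts p q)
    (hzm : z ≠ m) :
    ‖ratioDeriv (invShift d m q) (mobiusDen d m p q) (z - m)⁻¹‖ = ‖ratioDeriv p q z‖ := by
  have hzm' : ‖z - m‖ ≠ 0 := norm_ne_zero_iff.2 (sub_ne_zero.2 hzm)
  have hu : (z - m)⁻¹ ≠ 0 := inv_ne_zero (sub_ne_zero.2 hzm)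
  have hqz : ‖q.eval z‖ ≠ 0 := norm_ne_zero_iff.2 hz.1
  have hden : p.eval z - conj m * q.eval z = conj (z - m) * q.eval z := by
    rw [hz.2, map_sub, sub_mul]
  obtain ⟨e, rfl⟩ := Nat.exists_eq_add_one_of_ne_zero hd
  rw [ratioDeriv, ratioDeriv, wronskian_mobiusDen_invShift hp hq m hd, eval_mobiusDen hp hq m hu,
    eval_invShift (natDegree_wronskian_le hp hq) m hu, inv_inv, add_sub_cancel, hden,
    show 2 * (e + 1) - 2 = 2 * e by omega]
  simp only [norm_div, norm_mul, norm_pow, RCLike.norm_conj, norm_inv, inv_pow]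
  field_simp
  ring

lemma inv_sub_mem_attractingPts (hd : d ≠ 0) {z : ℂ} (hz : z ∈ attractingPts p q) (hzm : z ≠ m) :
    (z - m)⁻¹ ∈ attractingPts (invShift d m q) (mobiusDen d m p q) :=
  ⟨inv_sub_mem_fixedPts hp hq hz.1 hzm,
    (norm_ratioDeriv_invShift_mobiusDen hp hq hd hz.1 hzm).trans_lt hz.2⟩

end MobiusConjugate

section SphereMap

open OnePoint

variable {d : ℕ} {p q : ℂ[X]} {a m : ℂ}

open Classical in
/-- The extension of `conjRatio p q` to the Riemann sphere, when both degrees are at most `d` and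
`q` has degree `d`. -/
noncomputable def sphereMap (d : ℕ) (p q : ℂ[X]) (z : OnePoint ℂ) : OnePoint ℂ :=
  z.elim ↑(conj (p.coeff d / q.coeff d)) fun z ↦ if q.eval z = 0 then ∞ else ↑(conjRatio p q z)

open Classical in
/-- The chart of the Riemann sphere inverse to the coordinate `u = 1 / (z - m)`. -/
noncomputable def mobiusChart (m u : ℂ) : OnePoint ℂ := if u = 0 then ∞ else ↑(m + u⁻¹)

lemma sphereMap_coe {z : ℂ} (hz : q.eval z ≠ 0) :
    sphereMap d p q z = (conjRatio p q z : ℂ) :=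
  if_neg hz

lemma mobiusChart_of_ne_zero {u : ℂ} (hu : u ≠ 0) : mobiusChart m u = (m + u⁻¹ : ℂ) := if_neg hu

lemma mobiusChart_inv_sub {z : ℂ} (hz : z ≠ m) : mobiusChart m (z - m)⁻¹ = z := by
  rw [mobiusChart_of_ne_zero (inv_ne_zero (sub_ne_zero.2 hz)), inv_inv, add_sub_cancel]

namespace IsNormalized

variable (h : IsNormalized d p q)
include h

lemma sphereMap_mobiusChart {u : ℂ} (hu : (mobiusDen d m p q).eval u ≠ 0) :
    sphereMap d p q (mobiusChart m u) =
      mobiusChart m (conjRatio (invShift d m q) (mobiusDen d m p q) u) := by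
  have hp := h.natDegree_num_le
  have hq := h.natDegree_den.le
  obtain rfl | hu0 := eq_or_ne u 0
  · rw [eval_zero_mobiusDen hp hq, sub_ne_zero] at hu
    have hqd := h.coeff_den_ne_zero
    have hne : conj (p.coeff d / q.coeff d) ≠ m := fun hm ↦ hu <| by
      rw [← hm, Complex.conj_conj, div_mul_cancel₀ _ hqd]
    rw [conjRatio, eval_zero_mobiusDen hp hq, eval_zero_invShift hq, conj_div_sub_conj_mul m _ hqd,
      mobiusChart_inv_sub hne, mobiusChart, if_pos rfl]
    rfl
  rw [mobiusChart_of_ne_zero hu0]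
  by_cases hz : q.eval (m + u⁻¹) = 0
  · have hzero : conjRatio (invShift d m q) (mobiusDen d m p q) u = 0 := by
      rw [conjRatio, eval_invShift hq m hu0, hz, mul_zero, zero_div, map_zero]
    rw [hzero, mobiusChart, if_pos rfl]
    exact if_pos hz
  · rw [eval_mobiusDen_ne_zero_iff hp hq m hu0, Ne, ← conjRatio_eq_iff hz] at hu
    rw [sphereMap_coe hz, conjRatio_invShift_mobiusDen hp hq m hu0 hz, mobiusChart_inv_sub hu]

lemma exists_sphereMap_iterate_of_mem_iteratedPreimage {U : Set ℂ} {n : ℕ} {u : ℂ}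
    (hu : u ∈ iteratedPreimage (invShift d m q) (mobiusDen d m p q) U n) :
    ∃ w ∈ U, (sphereMap d p q)^[n] (mobiusChart m u) = mobiusChart m w := by
  induction n generalizing u with
  | zero => exact ⟨u, hu, rfl⟩
  | succ n ih =>
    obtain ⟨w, hw, hiter⟩ := ih hu.2
    exact ⟨w, hw, by rw [Function.iterate_succ_apply, h.sphereMap_mobiusChart hu.1, hiter]⟩

lemma exists_le_norm_conjRatio_mobius (hm : m ∈ attractingPts p q) (R₀ : ℝ) :
    ∃ R > R₀, ∀ u, R ≤ ‖u‖ → (mobiusDen d m p q).eval u ≠ 0 →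
      R ≤ ‖conjRatio (invShift d m q) (mobiusDen d m p q) u‖ := by
  obtain ⟨s, hs, hball⟩ := Metric.eventually_nhds_iff_ball.1 (eventually_dist_conjRatio_le hm)
  refine ⟨max R₀ s⁻¹ + 1, by linarith [le_max_left R₀ s⁻¹], fun u hu hden ↦ hu.trans ?_⟩
  have hsu : s⁻¹ < ‖u‖ := by linarith [le_max_right R₀ s⁻¹]
  have hnorm : 0 < ‖u‖ := (inv_pos.2 hs).trans hsu
  have hu0 : u ≠ 0 := norm_pos_iff.1 hnorm
  obtain ⟨hqu, hdist⟩ := hball (m + u⁻¹) (by simpa using inv_lt_of_inv_lt₀ hs hsu)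
  have hp := h.natDegree_num_le
  have hq := h.natDegree_den.le
  have hne : conjRatio p q (m + u⁻¹) - m ≠ 0 := by
    rwa [sub_ne_zero, Ne, conjRatio_eq_iff hqu, ← Ne, ← eval_mobiusDen_ne_zero_iff hp hq m hu0]
  rw [conjRatio_invShift_mobiusDen hp hq m hu0 hqu, norm_inv,
    le_inv_comm₀ hnorm (norm_pos_iff.2 hne)]
  simpa [dist_eq_norm] using hdist

theorem exists_critical_sphereMap_iterate_mem (hd : d ≠ 0)
    (hW : (wronskian q p).coeff (2 * d - 2) ≠ 0) (ham : a ≠ m) (ha : a ∈ attractingPts p q)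
    (hm : m ∈ attractingPts p q) {U : Set ℂ} (hU : U ∈ nhds a) :
    ∃ c : ℂ, (wronskian q p).eval c = 0 ∧ ∃ n, ∃ w ∈ U, (sphereMap d p q)^[n] c = (w : ℂ) := by
  have hp := h.natDegree_num_le
  have hq := h.natDegree_den.le
  have hu : (a - m)⁻¹ ≠ 0 := inv_ne_zero (sub_ne_zero.2 ham)
  have hchart : {u : ℂ | u ≠ 0 ∧ m + u⁻¹ ∈ U} ∈ nhds (a - m)⁻¹ := by
    have hcont : ContinuousAt (fun u : ℂ ↦ m + u⁻¹) (a - m)⁻¹ :=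
      continuousAt_const.add (continuousAt_inv₀ hu)
    refine (continuousAt_id.eventually_ne hu).and (hcont.eventually_mem ?_)
    rwa [inv_inv, add_sub_cancel]
  obtain ⟨R, hR, hescape⟩ := h.exists_le_norm_conjRatio_mobius hm ‖(a - m)⁻¹‖
  obtain ⟨u, -, hWu, n, hn⟩ := exists_critical_mem_iteratedPreimage
    (isCoprime_invShift_mobiusDen hp hq m h.isCoprime (Or.inr h.coeff_den_ne_zero)) hescape hR
    (inv_sub_mem_attractingPts hp hq hd ha ham) hchart
  obtain ⟨w, ⟨hw0, hwU⟩, hiter⟩ := h.exists_sphereMap_iterate_of_mem_iteratedPreimage hn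
  have hWdeg := natDegree_wronskian_le hp hq
  rw [wronskian_mobiusDen_invShift hp hq m hd] at hWu
  have hu0 : u ≠ 0 := by
    rintro rfl
    exact hW (by rwa [eval_zero_invShift hWdeg] at hWu)
  rw [eval_invShift hWdeg m hu0] at hWu
  refine ⟨m + u⁻¹, (mul_eq_zero.1 hWu).resolve_left (pow_ne_zero _ hu0), n, m + w⁻¹, hwU, ?_⟩
  rwa [mobiusChart_of_ne_zero hu0, mobiusChart_of_ne_zero hw0] at hiter

end IsNormalized

end SphereMap

/-! ### The number of attracting fixed points -/

section AttractingCount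

open Metric

lemma rootMultiplicity_le_rootMultiplicity_wronskian_add_one {R : Type*} [CommRing R] {p q : R[X]}
    (hW : wronskian q p ≠ 0) (x : R) :
    p.rootMultiplicity x ≤ (wronskian q p).rootMultiplicity x + 1 := by
  have hp : (X - C x) ^ p.rootMultiplicity x ∣ p := pow_rootMultiplicity_dvd p x
  have hW' : (X - C x) ^ (p.rootMultiplicity x - 1) ∣ wronskian q p :=
    dvd_sub ((pow_sub_one_dvd_derivative_of_pow_dvd hp).mul_left _)
      (((pow_dvd_pow _ (Nat.sub_le _ _)).trans hp).mul_left _)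
  exact Nat.sub_le_iff_le_add.1 ((le_rootMultiplicity_iff hW).2 hW')

lemma card_roots_sdiff_add_natDegree_le {K : Type*} [Field K] [IsAlgClosed K] [DecidableEq K]
    {f g : K[X]} (h : ∀ x, f.rootMultiplicity x ≤ g.rootMultiplicity x + 1) :
    (g.roots.toFinset \ f.roots.toFinset).card + f.natDegree ≤
      g.natDegree + f.roots.toFinset.card := by
  have hle : (g.roots.toFinset \ f.roots.toFinset).val + f.roots ≤ g.roots + f.roots.dedup := by
    refine Multiset.le_iff_count.2 fun x ↦ ?_
    rw [Multiset.count_add, Multiset.count_add, Multiset.count_dedup]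
    by_cases hf : x ∈ f.roots
    · have hx := h x
      rw [← count_roots, ← count_roots] at hx
      have : x ∉ (g.roots.toFinset \ f.roots.toFinset).val := by
        simp [-Finset.sdiff_val, hf]
      rw [Multiset.count_eq_zero_of_notMem this, if_pos hf]
      omega
    · rw [Multiset.count_eq_zero_of_notMem hf, if_neg hf, add_zero, add_zero]
      exact Multiset.count_le_of_le x
        ((Finset.val_le_iff.2 Finset.sdiff_subset).trans (Multiset.dedup_le _))
  have hcard := Multiset.card_le_card hle
  rw [Multiset.card_add, Multiset.card_add, IsAlgClosed.card_roots_eq_natDegree,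
    IsAlgClosed.card_roots_eq_natDegree] at hcard
  exact hcard

lemma injective_comp_of_iterate_mem {α ι : Type*} {f : α → α} {S : ι → Set α}
    (hS : ∀ i, Set.MapsTo f (S i) (S i)) (hdisj : Pairwise (Function.onFun Disjoint S))
    {c : ι → α} {n : ι → ℕ} (hn : ∀ i, f^[n i] (c i) ∈ S i) : Function.Injective (f ∘ c) := by
  intro i j hij
  by_contra hne
  have hmem (k l : ι) : f^[n l + n k] (f (c k)) ∈ S k := by
    rw [← Function.iterate_succ_apply, Nat.succ_eq_add_one, add_right_comm,
      Function.iterate_add_apply]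
    exact (hS k).iterate _ (hn k)
  have hj := hmem j i
  rw [add_comm, show f (c j) = f (c i) from hij.symm] at hj
  exact Set.disjoint_left.1 (hdisj hne) (hmem i j) hj

lemma sphereMap_coe_of_isRoot {d : ℕ} {p q : ℂ[X]} (hpq : IsCoprime p q) {b z : ℂ}
    (hz : (p - C b * q).IsRoot z) : sphereMap d p q z = (conj b : ℂ) := by
  have hpz : p.eval z = b * q.eval z := by simpa [sub_eq_zero] using hz
  have hqz : q.eval z ≠ 0 := fun hqz ↦
    eval_ne_zero_of_isCoprime hpq hqz (by rw [hpz, hqz, mul_zero])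
  rw [sphereMap_coe hqz, (conjRatio_eq_iff hqz).2 (by rw [hpz, Complex.conj_conj])]

namespace IsNormalized

variable {d : ℕ} {p q : ℂ[X]} (h : IsNormalized d p q) (hd : 2 ≤ d)
  (hW : (wronskian q p).coeff (2 * d - 2) ≠ 0)
include h

lemma finite_attractingPts : (attractingPts p q).Finite :=
  h.finite_fixedPts.subset fun _ hz ↦ hz.1

include hd hW

lemma exists_critical_injective (hnt : (attractingPts p q).Nontrivial) :
    ∃ c : attractingPts p q → ℂ, (∀ a, (wronskian q p).eval (c a) = 0) ∧
      Function.Injective fun a ↦ sphereMap d p q (c a) := by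
  have hsep : 0 < (attractingPts p q).infsep :=
    (h.finite_attractingPts.infsep_pos_iff_nontrivial).2 hnt
  have hlocal (a : attractingPts p q) : ∃ s ≤ (attractingPts p q).infsep / 2,
      Set.MapsTo (sphereMap d p q) ((↑) '' ball (a : ℂ) s) ((↑) '' ball (a : ℂ) s) ∧
      ∃ c : ℂ, (wronskian q p).eval c = 0 ∧
        ∃ n, (sphereMap d p q)^[n] c ∈ ((↑) '' ball (a : ℂ) s : Set (OnePoint ℂ)) := by
    obtain ⟨s, hs, hball⟩ := eventually_nhds_iff_ball.1 (eventually_dist_conjRatio_le a.2)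
    obtain ⟨m, hm, hma⟩ := hnt.exists_ne a
    have hpos : 0 < min s ((attractingPts p q).infsep / 2) := by positivity
    obtain ⟨c, hc, n, w, hw, hn⟩ := h.exists_critical_sphereMap_iterate_mem (by omega) hW hma.symm
      a.2 hm (ball_mem_nhds _ hpos)
    refine ⟨_, min_le_right _ _, ?_, c, hc, n, w, hw, hn.symm⟩
    rintro _ ⟨z, hz, rfl⟩
    obtain ⟨hqz, hdist⟩ := hball z (ball_subset_ball (min_le_left _ _) hz)
    exact ⟨_, hdist.trans_lt hz, (sphereMap_coe hqz).symm⟩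
  choose s hs hmaps c hc n hn using hlocal
  refine ⟨c, hc, injective_comp_of_iterate_mem (c := fun a ↦ (c a : OnePoint ℂ)) hmaps ?_ hn⟩
  intro a b hab
  refine (Set.disjoint_image_iff OnePoint.coe_injective).2 (ball_disjoint_ball ?_)
  have := Set.infsep_le_dist_of_mem a.2 b.2 (Subtype.coe_ne_coe.2 hab)
  linarith [hs a, hs b]

lemma max_one_ncard_attractingPts_le : max 1 (attractingPts p q).ncard ≤ 2 * d - 2 := by
  refine max_le (by omega) ?_
  obtain hsub | hnt := (attractingPts p q).subsingleton_or_nontrivial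
  · have := (Set.ncard_le_one hsub.finite).2 fun a ha b hb ↦ hsub ha hb
    omega
  obtain ⟨c, hc, hinj⟩ := h.exists_critical_injective hd hW hnt
  have hc_inj : Function.Injective c := fun a b hab ↦ hinj (by simp only [hab])
  classical
  have hW0 : wronskian q p ≠ 0 := by rintro h0; simp [h0] at hW
  calc (attractingPts p q).ncard
      = (Set.range c).ncard := (Set.ncard_range_of_injective hc_inj).symm
    _ ≤ ((wronskian q p).roots.toFinset : Set ℂ).ncard := by
        refine Set.ncard_le_ncard ?_
        rintro _ ⟨a, rfl⟩
        simp [hW0, hc a]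
    _ ≤ (wronskian q p).natDegree := by
        rw [Set.ncard_coe_finset]
        exact (Multiset.toFinset_card_le _).trans (card_roots' _)
    _ ≤ 2 * d - 2 := natDegree_wronskian_le h.natDegree_num_le h.natDegree_den.le

lemma max_one_ncard_attractingPts_add_one_le [DecidableEq ℂ] {b : ℂ}
    (hb : (p - C b * q).natDegree = d) :
    max 1 (attractingPts p q).ncard + 1 ≤ d + (p - C b * q).roots.toFinset.card := by
  have hb0 : p - C b * q ≠ 0 := ne_zero_of_natDegree_gt (hb ▸ hd)
  have hroot : 1 ≤ (p - C b * q).roots.toFinset.card := by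
    obtain ⟨z, hz⟩ := IsAlgClosed.exists_root (p - C b * q)
      (natDegree_pos_iff_degree_pos.1 (by omega)).ne'
    exact Finset.card_pos.2 ⟨z, by simpa [hb0] using hz⟩
  rw [← max_add_add_right]
  refine max_le (by omega) ?_
  obtain hsub | hnt := (attractingPts p q).subsingleton_or_nontrivial
  · have := (Set.ncard_le_one hsub.finite).2 fun a ha b hb ↦ hsub ha hb
    omega
  obtain ⟨c, hc, hinj⟩ := h.exists_critical_injective hd hW hnt
  have hc_inj : Function.Injective c := fun a b hab ↦ hinj (by simp only [hab])
  have hW0 : wronskian q p ≠ 0 := by rintro h0; simp [h0] at hW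
  have hvalue (a) (ha : c a ∈ (p - C b * q).roots.toFinset) :=
    sphereMap_coe_of_isRoot (d := d) h.isCoprime (isRoot_of_mem_roots (Multiset.mem_toFinset.1 ha))
  have hone : (Set.range c ∩ (p - C b * q).roots.toFinset).ncard ≤ 1 := by
    refine (Set.ncard_le_one (Set.toFinite _)).2 ?_
    rintro _ ⟨⟨a, rfl⟩, ha⟩ _ ⟨⟨a', rfl⟩, ha'⟩
    rw [hinj ((hvalue a ha).trans (hvalue a' ha').symm)]
  have hdiff : (Set.range c \ (p - C b * q).roots.toFinset).ncard ≤
      ((wronskian q p).roots.toFinset \ (p - C b * q).roots.toFinset).card := by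
    rw [← Set.ncard_coe_finset, Finset.coe_sdiff]
    refine Set.ncard_le_ncard (Set.sdiff_subset_sdiff_left ?_) (Set.toFinite _)
    rintro _ ⟨a, rfl⟩
    simp [hW0, hc a]
  have hmult := card_roots_sdiff_add_natDegree_le fun x ↦
    rootMultiplicity_le_rootMultiplicity_wronskian_add_one
      (by rwa [wronskian_sub_C_mul_self q p b]) x
  rw [wronskian_sub_C_mul_self] at hmult
  have hsplit := Set.ncard_inter_add_ncard_sdiff_eq_ncard (Set.range c)
    ((p - C b * q).roots.toFinset : Set ℂ)
    (Set.finite_range_iff hc_inj |>.2 h.finite_attractingPts.to_subtype)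
  rw [Set.ncard_range_of_injective hc_inj, Nat.card_coe_set_eq] at hsplit
  have := natDegree_wronskian_le h.natDegree_num_le h.natDegree_den.le
  omega

theorem ncard_fixedPts_le (hsep : (periodTwoPoly d p q).Separable) :
    (fixedPts p q).ncard ≤ 5 * d - 5 := by
  have := h.ncard_fixedPts_add_one_le hsep (by omega)
  have := h.max_one_ncard_attractingPts_le hd hW
  omega

theorem ncard_fixedPts_add_three_le [DecidableEq ℂ] (hsep : (periodTwoPoly d p q).Separable)
    {b : ℂ} (hb : (p - C b * q).natDegree = d) :
    (fixedPts p q).ncard + 3 ≤ 3 * d + 2 * (p - C b * q).roots.toFinset.card := by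
  have := h.ncard_fixedPts_add_one_le hsep (by omega)
  have := h.max_one_ncard_attractingPts_add_one_le hd hW hb
  omega

end IsNormalized

end AttractingCount

/-! ### Generic perturbations -/

section GenericSeparable

open Filter

variable {K : Type*} [Field K] {d : ℕ}

lemma eventually_cofinite_eval_ne_zero {f : K[X]} (hf : f ≠ 0) :
    ∀ᶠ z in cofinite, f.eval z ≠ 0 := by
  simpa [eventually_cofinite, IsRoot] using finite_setOfPred_isRoot hf

lemma separable_iff_resultant_derivative_ne_zero [CharZero K] {f : K[X]} {n : ℕ}
    (hf : f.natDegree = n + 1) :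
    f.Separable ↔ resultant f (derivative f) (n + 1) n ≠ 0 := by
  have hf0 : f ≠ 0 := ne_zero_of_natDegree_gt (n := n) (by omega)
  have hf' : (derivative f).natDegree = n := by rw [natDegree_derivative, hf, Nat.add_sub_cancel]
  have hres := resultant_eq_zero_iff (f := f) (g := derivative f)
  rw [hf, hf'] at hres
  simp [hres, hf0, Separable]

/-- The family `compFixPoly d (p + t * q) q (p₂ + η * t * q₂) q₂`, as a polynomial with
coefficients in the ring of polynomials in `t`. -/
noncomputable def compFixFamily (d : ℕ) (p q p₂ q₂ : K[X]) (η : K) : K[X][X] :=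
  compFixPoly d (p.map C + C X * q.map C) (q.map C) (p₂.map C + C (C η * X) * q₂.map C) (q₂.map C)

lemma map_compFixFamily (p q p₂ q₂ : K[X]) (η t : K) :
    (compFixFamily d p q p₂ q₂ η).map (evalRingHom t) =
      compFixPoly d (p + C t * q) q (p₂ + C (η * t) * q₂) q₂ := by
  have hcomp : (evalRingHom t).comp C = RingHom.id K := by ext; simp
  simp [compFixFamily, map_compFixPoly, Polynomial.map_map, hcomp]

variable [IsAlgClosed K] [CharZero K]

lemma eventually_cofinite_separable_add_sub_X_mul {A B : K[X]} (hAB : IsCoprime A B)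
    (hB : B.natDegree ≠ 0) : ∀ᶠ c in cofinite, (A + (C c - X) * B).Separable := by
  have hE : wronskian B A - B ^ 2 ≠ 0 := by
    intro h0
    have hdvd : B ∣ derivative B := by
      refine hAB.symm.dvd_of_dvd_mul_left ⟨derivative A - B, ?_⟩
      rw [wronskian] at h0
      linear_combination -h0
    have hB' : derivative B ≠ 0 := fun h ↦ hB (derivative_eq_zero.1 h)
    exact (natDegree_derivative_lt hB).not_ge (natDegree_le_of_dvd hdvd hB')
  refine ((finite_setOfPred_isRoot hE).image fun z ↦ z - A.eval z / B.eval z).subset fun c hc ↦ ?_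
  by_contra hcS
  refine hc (isCoprime_of_forall_eval_ne_zero fun z hz' hz ↦ hcS ⟨z, ?_, ?_⟩)
  all_goals simp only [derivative_add, derivative_mul, derivative_sub, derivative_C, derivative_X,
    eval_add, eval_mul, eval_sub, eval_C, eval_X, eval_zero, eval_one] at hz' hz
  · simp only [wronskian, Set.mem_ofPred_eq, IsRoot.def, eval_sub, eval_mul, eval_pow]
    linear_combination B.eval z * hz' - (derivative B).eval z * hz
  · have hBz : B.eval z ≠ 0 := fun hBz ↦
      eval_ne_zero_of_isCoprime hAB hBz (by simpa [hBz] using hz)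
    field_simp
    linear_combination -hz

theorem eventually_cofinite_separable_compFixPoly {p q p₂ q₂ : K[X]} (hpq : IsCoprime p q)
    (hpq₂ : IsCoprime p₂ q₂) (hp : p.natDegree ≤ d) (hq : q.natDegree ≤ d)
    (hp₂ : p₂.natDegree ≤ d) (hq₂ : q₂.natDegree ≤ d) (hd : d ≠ 0) (hqd : q.coeff d ≠ 0)
    (hq₂d : q₂.coeff d ≠ 0) :
    ∀ᶠ η in cofinite, ∀ᶠ t in cofinite,
      (compFixPoly d (p + C t * q) q (p₂ + C (η * t) * q₂) q₂).Separable := by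
  have hpt (t : K) : (p + C t * q).natDegree ≤ d :=
    natDegree_add_le_of_degree_le hp ((natDegree_C_mul_le _ _).trans hq)
  have hinfty (t : K) : (p + C t * q).coeff d / q.coeff d = p.coeff d / q.coeff d + t := by
    rw [coeff_add, coeff_C_mul]
    field_simp
  have hgood : ∀ᶠ t in cofinite, q₂.eval (p.coeff d / q.coeff d + t) ≠ 0 :=
    (add_right_injective _).tendsto_cofinite.eventually
      (eventually_cofinite_eval_ne_zero fun h0 ↦ hq₂d (by simp [h0]))
  have hsep (η t : K) (ht : q₂.eval (p.coeff d / q.coeff d + t) ≠ 0) :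
      (compFixPoly d (p + C t * q) q (p₂ + C (η * t) * q₂) q₂).Separable ↔
        (resultant (compFixFamily d p q p₂ q₂ η) (derivative (compFixFamily d p q p₂ q₂ η))
          (d * d + 1) (d * d)).eval t ≠ 0 := by
    rw [separable_iff_resultant_derivative_ne_zero
      (natDegree_compFixPoly hq₂ (hpt t) hq hqd (by rwa [hinfty])), ← map_compFixFamily,
      derivative_map, resultant_map_map, coe_evalRingHom]
  obtain ⟨c, hc, hc0⟩ :=
    (hgood.and (Set.finite_singleton (0 : K)).eventually_cofinite_notMem).exists
  have hB : (homogSubst d q₂ (p + C c * q) q).natDegree ≠ 0 := by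
    refine (Nat.pos_of_ne_zero (mul_ne_zero hd hd)).trans_le (le_natDegree_of_ne_zero ?_) |>.ne'
    rw [coeff_homogSubst hq₂ (hpt c) hq hqd, hinfty]
    exact mul_ne_zero (pow_ne_zero _ hqd) hc
  have hline := (mul_left_injective₀ hc0).tendsto_cofinite.eventually
    (eventually_cofinite_separable_add_sub_X_mul (isCoprime_homogSubst hp₂ hq₂ hpq₂
      (IsCoprime.add_mul_right_left_iff.2 hpq) hq₂d) hB)
  filter_upwards [hline] with η hη
  have hR := (hsep η c hc).1 (by
    rw [compFixPoly, homogSubst_add_C_mul]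
    convert hη using 1
    ring)
  have hR0 := ne_of_apply_ne (eval c) (hR.trans_eq eval_zero.symm)
  filter_upwards [hgood, eventually_cofinite_eval_ne_zero hR0] with t ht using (hsep η t ht).2

end GenericSeparable

section Perturbation

open Filter Topology

variable {d : ℕ} {p q : ℂ[X]}

lemma conjPoly_add_C_mul (p q : ℂ[X]) (c : ℂ) :
    conjPoly (p + C c * q) = conjPoly p + C (conj c) * conjPoly q := by
  simp [conjPoly]

theorem IsNormalized.eventually_isNormalized_and_separable (h : IsNormalized d p q) (hd : d ≠ 0) :
    ∀ᶠ η in cofinite, ∀ᶠ c in cofinite, conj c = η * c →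
      IsNormalized d (p + C c * q) q ∧ (periodTwoPoly d (p + C c * q) q).Separable := by
  have hqd := h.coeff_den_ne_zero
  have hgood : ∀ᶠ c in cofinite, q.eval (conj (p.coeff d / q.coeff d + c)) ≠ 0 :=
    ((starRingEnd ℂ).injective.comp (add_right_injective _)).tendsto_cofinite.eventually
      (eventually_cofinite_eval_ne_zero fun h0 ↦ hqd (by simp [h0]))
  filter_upwards [eventually_cofinite_separable_compFixPoly h.isCoprime
    (isCoprime_conjPoly h.isCoprime) h.natDegree_num_le h.natDegree_den.le
    h.natDegree_conjPoly_num_le h.natDegree_conjPoly_den_le hd hqd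
    (by simpa [conjPoly] using hqd)] with η hη
  filter_upwards [hη, hgood] with c hsep hc hηc
  refine ⟨⟨IsCoprime.add_mul_right_left_iff.2 h.isCoprime, h.natDegree_den,
    natDegree_add_le_of_degree_le h.natDegree_num_le
      ((natDegree_C_mul_le _ _).trans h.natDegree_den.le), ?_⟩, ?_⟩
  · rwa [coeff_add, coeff_C_mul, add_div, mul_div_cancel_right₀ _ hqd]
  · rwa [periodTwoPoly, conjPoly_add_C_mul, hηc]

lemma exists_ne_zero_conj_div_self {P : ℂ → Prop} (hP : ∀ᶠ η in cofinite, P η) :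
    ∃ ω : ℂ, ω ≠ 0 ∧ P (conj ω / ω) := by
  have hne (s : ℝ) : (1 + s * Complex.I : ℂ) ≠ 0 := fun h ↦ by
    simpa using congrArg Complex.re h
  have hinj : Function.Injective fun s : ℝ ↦
      conj (1 + s * Complex.I : ℂ) / (1 + s * Complex.I) := by
    intro s s' hss
    simp only [map_add, map_one, map_mul, Complex.conj_ofReal, Complex.conj_I] at hss
    rw [div_eq_div_iff (hne s) (hne s')] at hss
    have : 2 * Complex.I * ((s : ℂ) - s') = 0 := by linear_combination -hss
    exact Complex.ofReal_injective (sub_eq_zero.1 (by simpa using this))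
  obtain ⟨s, hs⟩ := (hinj.tendsto_cofinite.eventually hP).exists
  exact ⟨_, hne s, hs⟩

end Perturbation

/-! ### Every fixed point splits into two under a real perturbation -/

section Splitting

open Filter Topology

variable {p q : ℂ[X]} {z₀ ω : ℂ}

lemma exists_curve_of_hasStrictDerivAt {g : ℂ → ℂ} {g' : ℂ} (hg : HasStrictDerivAt g g' z₀)
    (hg' : g' ≠ 0) {U : Set ℂ} (hU : U ∈ 𝓝 z₀) :
    ∃ δ > 0, ∃ γ : ℝ → ℂ, ContinuousOn γ (Set.Icc (-δ) δ) ∧ γ 0 = z₀ ∧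
      ∀ s ∈ Set.Icc (-δ) δ, γ s ∈ U ∧ g (γ s) = g z₀ + s := by
  have hg₁ := hg.hasStrictFDerivAt_equiv hg'
  set e := hg₁.toOpenPartialHomeomorph g
  have hsource : z₀ ∈ e.source := hg₁.mem_toOpenPartialHomeomorph_source
  have htarget : g z₀ ∈ e.target := e.map_source hsource
  have hsymm : e.symm (g z₀) = z₀ := e.left_inv hsource
  have hmem : ∀ᶠ w in 𝓝 (g z₀), w ∈ e.target ∧ e.symm w ∈ U :=
    (e.open_target.eventually_mem htarget).and
      ((e.continuousAt_symm htarget).eventually_mem (by rwa [hsymm]))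
  have hline : Tendsto (fun s : ℝ ↦ g z₀ + s) (𝓝 0) (𝓝 (g z₀)) :=
    Continuous.tendsto' (by fun_prop) _ _ (by simp)
  obtain ⟨δ, hδ, hball⟩ := Metric.nhds_basis_closedBall.eventually_iff.1 (hline.eventually hmem)
  simp only [Real.closedBall_eq_Icc, zero_sub, zero_add] at hball
  refine ⟨δ, hδ, fun s ↦ e.symm (g z₀ + s), fun s hs ↦ ?_, by simpa using hsymm,
    fun s hs ↦ ⟨(hball hs).2, e.right_inv (hball hs).1⟩⟩
  exact ((e.continuousAt_symm (hball hs).1).comp (f := fun s : ℝ ↦ g z₀ + s)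
    (by fun_prop)).continuousWithinAt

lemma exists_sign_eventually_exists_eq {h : ℝ → ℝ} {s : ℝ} (hs : 0 ≤ s)
    (hc : ContinuousOn h (Set.Icc 0 s)) (h0 : h 0 = 0) (h1 : h s ≠ 0) :
    ∃ σ : ℤˣ, ∀ᶠ t : ℝ in 𝓝[>] 0, ∃ x ∈ Set.Ioc 0 s, h x = σ * t := by
  wlog hpos : 0 < h s generalizing h
  · obtain ⟨σ, hσ⟩ := this (h := -h) hc.neg (by simp [h0]) (by simpa using h1)
      (by simpa using h1.lt_of_le (not_lt.1 hpos))
    refine ⟨-σ, hσ.mono fun t ⟨x, hx, hxt⟩ ↦ ⟨x, hx, ?_⟩⟩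
    simp [← hxt]
  refine ⟨1, ?_⟩
  filter_upwards [Ioo_mem_nhdsGT hpos] with t ht
  obtain ⟨x, hx, hxt⟩ := intermediate_value_Icc hs hc (h0 ▸ Set.Ioo_subset_Icc_self ht)
  refine ⟨x, ⟨hx.1.lt_of_ne' ?_, hx.2⟩, by simpa using hxt⟩
  rintro rfl
  exact ht.1.ne (h0 ▸ hxt)

lemma units_mul_mem_Icc_neg {s δ : ℝ} (hs : s ∈ Set.Icc 0 δ) (τ : ℤˣ) :
    (τ * s : ℝ) ∈ Set.Icc (-δ) δ := by
  obtain ⟨hs0, hsδ⟩ := hs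
  rcases Int.units_eq_one_or τ with rfl | rfl
  · simpa using ⟨by linarith, hsδ⟩
  · simpa using ⟨hsδ, by linarith⟩

lemma units_eq_of_mul_eq_mul {s s' : ℝ} (hs : 0 < s) (hs' : 0 < s') {τ τ' : ℤˣ}
    (h : (τ * s : ℝ) = τ' * s') : τ = τ' := by
  rcases Int.units_eq_one_or τ with rfl | rfl <;> rcases Int.units_eq_one_or τ' with rfl | rfl
  · rfl
  · simp only [Units.val_one, Int.cast_one, Units.val_neg, Int.cast_neg] at h
    linarith
  · simp only [Units.val_one, Int.cast_one, Units.val_neg, Int.cast_neg] at h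
    linarith
  · rfl

lemma exists_signs_eventually_exists_eq {h : ℝ → ℝ} {δ : ℝ} (hδ : 0 < δ)
    (hc : ContinuousOn h (Set.Icc (-δ) δ)) (h0 : ∀ s ∈ Set.Icc (-δ) δ, h s = 0 ↔ s = 0) :
    ∃ σ : ℤˣ → ℤˣ, ∀ᶠ t : ℝ in 𝓝[>] 0, ∀ τ : ℤˣ, ∃ s ∈ Set.Ioc 0 δ, h (τ * s) = σ τ * t := by
  have hside (τ : ℤˣ) := exists_sign_eventually_exists_eq (h := fun s ↦ h (τ * s)) hδ.le
    (hc.comp (by fun_prop) fun s hs ↦ units_mul_mem_Icc_neg hs τ)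
    ((h0 _ (units_mul_mem_Icc_neg ⟨le_rfl, hδ.le⟩ τ)).2 (mul_zero _))
    (by simp [h0 _ (units_mul_mem_Icc_neg ⟨hδ.le, le_rfl⟩ τ), hδ.ne'])
  choose σ hσ using hside
  exact ⟨σ, eventually_all.2 hσ⟩

/-- The value of `c` for which `z` is a fixed point of the perturbation
`conjRatio (p + C (c * ω) * q) q`. -/
noncomputable def fixDefect (p q : ℂ[X]) (ω z : ℂ) : ℂ := (conj z - p.eval z / q.eval z) / ω

lemma mem_fixedPts_add_C_mul_iff {z : ℂ} (hω : ω ≠ 0) (hz : q.eval z ≠ 0) (c : ℂ) :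
    z ∈ fixedPts (p + C (c * ω) * q) q ↔ fixDefect p q ω z = c := by
  simp only [fixedPts, Set.mem_ofPred_eq, fixDefect, hz, ne_eq, not_false_eq_true, true_and,
    eval_add, eval_mul, eval_C]
  rw [div_eq_iff hω, sub_eq_iff_eq_add, eq_comm, ← sub_eq_iff_eq_add', ← sub_eq_iff_eq_add',
    eq_div_iff hz]
  constructor <;> intro h <;> linear_combination h

lemma exists_curve_fixDefect_im_eq_zero (hz₀ : z₀ ∈ fixedPts p q) (hω : ω ≠ 0)
    (hderiv : 1 + conj ω / ω * ratioDeriv p q z₀ ≠ 0) {U : Set ℂ} (hU : U ∈ 𝓝 z₀) :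
    ∃ δ > 0, ∃ γ : ℝ → ℂ, ContinuousOn γ (Set.Icc (-δ) δ) ∧ Set.InjOn γ (Set.Icc (-δ) δ) ∧
      γ 0 = z₀ ∧ ∀ s ∈ Set.Icc (-δ) δ,
        γ s ∈ U ∧ q.eval (γ s) ≠ 0 ∧ (fixDefect p q ω (γ s)).im = 0 := by
  -- `conj z / ω` and the holomorphic `z / conj ω` have opposite imaginary parts.
  let g : ℂ → ℂ := fun z ↦ z / conj ω + p.eval z / q.eval z / ω
  have him (z : ℂ) : (fixDefect p q ω z).im = -(g z).im := by
    have hconj : z / conj ω = conj (conj z / ω) := by rw [map_div₀, Complex.conj_conj]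
    rw [fixDefect, sub_div, Complex.sub_im, Complex.add_im, hconj, Complex.conj_im]
    ring
  have hg : HasStrictDerivAt g (1 / conj ω + ratioDeriv p q z₀ / ω) z₀ :=
    ((hasStrictDerivAt_id z₀).div_const _).add ((hasStrictDerivAt_ratio p hz₀.1).div_const ω)
  have hω' : conj ω ≠ 0 := (_root_.map_ne_zero _).2 hω
  have hg' : 1 / conj ω + ratioDeriv p q z₀ / ω ≠ 0 := by
    contrapose! hderiv
    field_simp at hderiv ⊢
    linear_combination hderiv
  obtain ⟨δ, hδ, γ, hγ, hγ0, hγU⟩ := exists_curve_of_hasStrictDerivAt hg hg'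
    (inter_mem hU (q.continuous.continuousAt.eventually_ne hz₀.1))
  refine ⟨δ, hδ, γ, hγ, fun s hs s' hs' hss ↦ ?_, hγ0,
    fun s hs ↦ ⟨(hγU s hs).1.1, (hγU s hs).1.2, ?_⟩⟩
  · have := (hγU s hs).2.symm.trans ((congrArg g hss).trans (hγU s' hs').2)
    exact Complex.ofReal_injective (add_left_cancel this)
  · have hz₀im : (g z₀).im = 0 := by
      have := him z₀
      simp only [fixDefect, hz₀.2, mul_div_cancel_right₀ _ hz₀.1, sub_self, zero_div] at this
      simpa using this.symm
    rw [him, (hγU s hs).2]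
    simp [hz₀im]

theorem exists_signs_eventually_fixedPts_split (hz₀ : z₀ ∈ fixedPts p q) (hω : ω ≠ 0)
    (hderiv : 1 + conj ω / ω * ratioDeriv p q z₀ ≠ 0) {U : Set ℂ} (hU : U ∈ 𝓝 z₀)
    (hiso : U ∩ fixedPts p q ⊆ {z₀}) :
    ∃ σ : ℤˣ → ℤˣ, ∀ᶠ t : ℝ in 𝓝[>] 0, ∃ x : ℤˣ → ℂ, Function.Injective x ∧
      ∀ τ, x τ ∈ U ∩ fixedPts (p + C ((σ τ * t : ℝ) * ω) * q) q := by
  obtain ⟨δ, hδ, γ, hγ, hinj, hγ0, hγU⟩ := exists_curve_fixDefect_im_eq_zero hz₀ hω hderiv hU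
  let h : ℝ → ℝ := fun s ↦ (fixDefect p q ω (γ s)).re
  have hh {s : ℝ} (hs : s ∈ Set.Icc (-δ) δ) : fixDefect p q ω (γ s) = h s :=
    Complex.ext rfl (by simpa using (hγU s hs).2.2)
  have hcont : ContinuousOn h (Set.Icc (-δ) δ) := by
    refine Complex.continuous_re.comp_continuousOn (.div_const (.sub ?_ (.div ?_ ?_ ?_)) _)
    · exact Complex.continuous_conj.comp_continuousOn hγ
    · exact p.continuous.comp_continuousOn hγ
    · exact q.continuous.comp_continuousOn hγ
    · exact fun s hs ↦ (hγU s hs).2.1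
  have hfix {s t : ℝ} (hs : s ∈ Set.Icc (-δ) δ) :
      γ s ∈ fixedPts (p + C (t * ω) * q) q ↔ h s = t := by
    rw [mem_fixedPts_add_C_mul_iff hω (hγU s hs).2.1, hh hs, Complex.ofReal_inj]
  have hzero (s) (hs : s ∈ Set.Icc (-δ) δ) : h s = 0 ↔ s = 0 := by
    have h0 : (0 : ℝ) ∈ Set.Icc (-δ) δ := ⟨by linarith, hδ.le⟩
    have hmem : γ s ∈ fixedPts p q ↔ γ s = γ 0 :=
      ⟨fun hfix ↦ (hiso ⟨(hγU s hs).1, hfix⟩).trans hγ0.symm, fun heq ↦ by rwa [heq, hγ0]⟩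
    rw [← hfix hs, ← hinj.eq_iff hs h0, ← hmem]
    simp
  obtain ⟨σ, hσ⟩ := exists_signs_eventually_exists_eq hδ hcont hzero
  refine ⟨σ, hσ.mono fun t ht ↦ ?_⟩
  choose s hs hst using ht
  have hmem (τ : ℤˣ) := units_mul_mem_Icc_neg (Set.Ioc_subset_Icc_self (hs τ)) τ
  exact ⟨fun τ ↦ γ (τ * s τ),
    fun τ τ' hττ ↦ units_eq_of_mul_eq_mul (hs τ).1 (hs τ').1 (hinj (hmem τ) (hmem τ') hττ),
    fun τ ↦ ⟨(hγU _ (hmem τ)).1, (hfix (hmem τ)).2 (hst τ)⟩⟩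

theorem eventually_exists_encard_fixedPts_le (hfin : (fixedPts p q).Finite) (hω : ω ≠ 0)
    (hderiv : ∀ z ∈ fixedPts p q, 1 + conj ω / ω * ratioDeriv p q z ≠ 0) :
    ∀ᶠ t : ℝ in 𝓝[>] 0, ∃ σ : ℤˣ,
      (fixedPts p q).encard ≤ (fixedPts (p + C ((σ * t : ℝ) * ω) * q) q).encard := by
  obtain ⟨U, hU, hdisj⟩ := hfin.t2_separation
  have hsplit (z : fixedPts p q) := exists_signs_eventually_fixedPts_split z.2 hω (hderiv z z.2)
    ((hU z).2.mem_nhds (hU z).1) fun w hw ↦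
      (hdisj.elim_set hw.2 z.2 w (hU w).1 hw.1)
  choose σ hσ using hsplit
  have := hfin.to_subtype
  have := hfin.fintype
  filter_upwards [eventually_all.2 hσ] with t ht
  choose x hx hmem using ht
  have hxinj : Function.Injective fun i : fixedPts p q × ℤˣ ↦ x i.1 i.2 := by
    rintro ⟨z, τ⟩ ⟨z', τ'⟩ h
    obtain rfl : z = z' := Subtype.ext (hdisj.elim_set z.2 z'.2 (x z τ) (hmem z τ).1
      (by simpa only [h] using (hmem z' τ').1))
    exact congrArg (Prod.mk z) (hx z h)
  obtain ⟨s, hs⟩ := Fintype.exists_le_card_fiber_of_mul_le_card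
    (f := fun i : fixedPts p q × ℤˣ ↦ σ i.1 i.2) (n := Fintype.card (fixedPts p q)) (by
      rw [Fintype.card_prod, mul_comm])
  refine ⟨s, ?_⟩
  calc (fixedPts p q).encard
      = Fintype.card (fixedPts p q) := (Set.coe_fintypeCard _).symm
    _ ≤ (Finset.univ.filter fun i : fixedPts p q × ℤˣ ↦ σ i.1 i.2 = s).card := by exact_mod_cast hs
    _ = ((fun i : fixedPts p q × ℤˣ ↦ x i.1 i.2) ''
          (Finset.univ.filter fun i : fixedPts p q × ℤˣ ↦ σ i.1 i.2 = s)).encard := by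
        rw [hxinj.encard_image, Set.encard_coe_eq_coe_finsetCard]
    _ ≤ _ := by
        refine Set.encard_le_encard ?_
        rintro _ ⟨⟨z, τ⟩, hi, rfl⟩
        obtain rfl : σ z τ = s := by simpa using hi
        exact (hmem z τ).2

end Splitting

section Perturbation

variable {d : ℕ} {p q : ℂ[X]}

open Filter Topology

theorem IsNormalized.exists_separable_perturbation (h : IsNormalized d p q) (hd : d ≠ 0) :
    ∃ c : ℂ, IsNormalized d (p + C c * q) q ∧ (periodTwoPoly d (p + C c * q) q).Separable ∧
      (fixedPts p q).ncard ≤ (fixedPts (p + C c * q) q).ncard := by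
  have hderiv : ∀ᶠ η in cofinite, ∀ z ∈ fixedPts p q, 1 + η * ratioDeriv p q z ≠ 0 := by
    refine (eventually_all_finite h.finite_fixedPts).2 fun z _ ↦ ?_
    have hne : (1 + X * C (ratioDeriv p q z) : ℂ[X]) ≠ 0 :=
      ne_of_apply_ne (eval 0) (by simp)
    simpa only [eval_add, eval_one, eval_mul, eval_X, eval_C] using
      eventually_cofinite_eval_ne_zero hne
  obtain ⟨ω, hω, hgeneric, hderiv⟩ := exists_ne_zero_conj_div_self
    ((h.eventually_isNormalized_and_separable hd).and hderiv)
  have hline (σ : ℤˣ) : ∀ᶠ t : ℝ in 𝓝[>] 0, IsNormalized d (p + C ((σ * t : ℝ) * ω) * q) q ∧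
      (periodTwoPoly d (p + C ((σ * t : ℝ) * ω) * q) q).Separable := by
    have hinj : Function.Injective fun t : ℝ ↦ ((σ * t : ℝ) : ℂ) * ω :=
      (mul_left_injective₀ hω).comp (Complex.ofReal_injective.comp
        (mul_right_injective₀ (by simp)))
    filter_upwards [((nhdsGT_le_nhdsNE 0).trans (nhdsNE_le_cofinite 0))
      (hinj.tendsto_cofinite.eventually hgeneric)] with t ht
    refine ht ?_
    rw [map_mul, Complex.conj_ofReal]
    field_simp
  obtain ⟨t, ⟨σ, hle⟩, hgood⟩ := ((eventually_exists_encard_fixedPts_le h.finite_fixedPts hω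
    hderiv).and (eventually_all.2 hline)).exists
  exact ⟨_, (hgood σ).1, (hgood σ).2,
    ENat.toNat_le_toNat hle (hgood σ).1.finite_fixedPts.encard_lt_top.ne⟩

end Perturbation

/-! ### Reduction to a normalized rational function -/

section Wronskian

variable {K : Type*} [Field K] {p q : K[X]}

lemma wronskian_ne_zero_of_isCoprime [CharZero K] (hpq : IsCoprime p q)
    (hd : max p.natDegree q.natDegree ≠ 0) : wronskian q p ≠ 0 := by
  rw [Ne, hpq.symm.wronskian_eq_zero_iff]
  rintro ⟨hq, hp⟩
  exact hd (by rw [derivative_eq_zero.1 hq, derivative_eq_zero.1 hp, max_self])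

lemma coeff_max_natDegree_ne_zero (hd : max p.natDegree q.natDegree ≠ 0) :
    p.coeff (max p.natDegree q.natDegree) ≠ 0 ∨ q.coeff (max p.natDegree q.natDegree) ≠ 0 := by
  obtain hle | hle := le_total p.natDegree q.natDegree
  · rw [max_eq_right hle] at hd ⊢
    exact .inr (leadingCoeff_ne_zero.2 (ne_zero_of_natDegree_gt (Nat.pos_of_ne_zero hd)))
  · rw [max_eq_left hle] at hd ⊢
    exact .inl (leadingCoeff_ne_zero.2 (ne_zero_of_natDegree_gt (Nat.pos_of_ne_zero hd)))

lemma coeff_max_natDegree_eq_zero_iff (hq : q ≠ 0) :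
    q.coeff (max p.natDegree q.natDegree) = 0 ↔ q.natDegree < p.natDegree := by
  refine ⟨fun h ↦ ?_, fun h ↦ coeff_eq_zero_of_natDegree_lt (h.trans_le (le_max_left _ _))⟩
  by_contra! hle
  rw [max_eq_right hle, coeff_natDegree, leadingCoeff_eq_zero] at h
  exact hq h

lemma C_mul_sub_C_mul_ne_zero_of_wronskian_ne_zero (hW : wronskian q p ≠ 0) {a b : K}
    (hab : a ≠ 0 ∨ b ≠ 0) : C a * q - C b * p ≠ 0 := by
  intro h
  have h' : C a * derivative q - C b * derivative p = 0 := by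
    simpa using congrArg derivative h
  have ha : C a * wronskian q p = 0 := by
    rw [wronskian]
    linear_combination derivative p * h - p * h'
  have hb : C b * wronskian q p = 0 := by
    rw [wronskian]
    linear_combination derivative q * h - q * h'
  simp only [mul_eq_zero, C_eq_zero, hW, or_false] at ha hb
  exact hab.elim (· ha) (· hb)

lemma rootMultiplicity_eq_natDegree_of_forall_root_eq [IsAlgClosed K] {f : K[X]}
    {z₀ : K} (h : ∀ z, f.eval z = 0 → z = z₀) : f.rootMultiplicity z₀ = f.natDegree := by
  classical
  have hroots : f.roots = Multiset.replicate f.natDegree z₀ :=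
    Multiset.eq_replicate.2 ⟨IsAlgClosed.card_roots_eq_natDegree,
      fun z hz ↦ h z (isRoot_of_mem_roots hz)⟩
  rw [← count_roots, hroots, Multiset.count_replicate_self]

end Wronskian

section Reduction

open Filter

variable {d : ℕ} {p q : ℂ[X]} {m : ℂ}

theorem IsNormalized.ncard_fixedPts_le_min [DecidableEq ℂ] (h : IsNormalized d p q) (hd : 2 ≤ d)
    (hW : (wronskian q p).coeff (2 * d - 2) ≠ 0) (hp : p.natDegree = d) :
    (fixedPts p q).ncard ≤ min (3 * d + 2 * p.roots.toFinset.card - 3) (5 * d - 5) := by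
  obtain ⟨c, hc, hsep, hle⟩ := h.exists_separable_perturbation (by omega)
  have hpc : p + C c * q - C c * q = p := add_sub_cancel_right _ _
  have hWc : (wronskian q (p + C c * q)).coeff (2 * d - 2) ≠ 0 := by
    rwa [← wronskian_sub_C_mul_self q _ c, hpc]
  have hfive := hc.ncard_fixedPts_le hd hWc hsep
  have hthree := hc.ncard_fixedPts_add_three_le hd hWc hsep (b := c) (by rwa [hpc])
  rw [hpc] at hthree
  exact le_min (by omega) (by omega)

variable (hpq : IsCoprime p q) (hp : p.natDegree ≤ d) (hq : q.natDegree ≤ d)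
  (hpqd : p.coeff d ≠ 0 ∨ q.coeff d ≠ 0)

include hpq hp hq hpqd

theorem periodTwoPoly_ne_zero (hd : 2 ≤ d) (hW : wronskian q p ≠ 0) :
    periodTwoPoly d p q ≠ 0 := by
  intro hzero
  have hq0 : q ≠ 0 := by rintro rfl; simp [wronskian] at hW
  obtain ⟨z₀, ⟨hqz₀, hWz₀⟩, hz₀⟩ := (((eventually_cofinite_eval_ne_zero hq0).and
    (eventually_cofinite_eval_ne_zero hW)).and (eventually_cofinite_eval_ne_zero
      (C_mul_sub_C_mul_ne_zero_of_wronskian_ne_zero hW hpqd))).exists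
  have hperiod {z : ℂ} (hz : q.eval z ≠ 0) : conjRatio p q (conjRatio p q z) = z :=
    ((eval_periodTwoPoly_eq_zero_iff_isPeriodTwo hpq hp hq hz).1 (by simp [hzero])).2.2
  set f := p - C (p.eval z₀ / q.eval z₀) * q with hf
  -- An involution is injective, so `f` has the single root `z₀`, which is then multiple.
  have hroot (z : ℂ) (hz : f.eval z = 0) : z = z₀ := by
    have hpz : p.eval z = p.eval z₀ / q.eval z₀ * q.eval z := by
      simpa [hf, sub_eq_zero] using hz
    have hqz : q.eval z ≠ 0 := fun h0 ↦ eval_ne_zero_of_isCoprime hpq h0 (by rw [hpz, h0, mul_zero])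
    have hratio : conjRatio p q z = conjRatio p q z₀ :=
      (conjRatio_eq_iff hqz).2 (by rwa [conj_conjRatio])
    rw [← hperiod hqz, hratio, hperiod hqz₀]
  have hfd : f.natDegree = d := by
    refine natDegree_eq_of_le_of_coeff_ne_zero (natDegree_sub_C_mul_le hp hq _) fun hcoeff ↦ hz₀ ?_
    rw [hf, coeff_sub, coeff_C_mul] at hcoeff
    simp only [eval_sub, eval_mul, eval_C]
    field_simp at hcoeff
    linear_combination hcoeff
  have hWf : wronskian q f = wronskian q p := wronskian_sub_C_mul_self ..
  have hmult := rootMultiplicity_le_rootMultiplicity_wronskian_add_one (hWf.trans_ne hW) z₀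
  rw [rootMultiplicity_eq_natDegree_of_forall_root_eq hroot, hWf, hfd,
    rootMultiplicity_eq_zero hWz₀] at hmult
  omega

lemma isNormalized_invShift_mobiusDen (hm : q.eval m ≠ 0) (hper : ¬ IsPeriodTwo p q m) :
    IsNormalized d (invShift d m q) (mobiusDen d m p q) := by
  have hfix : conjRatio p q m ≠ m := fun hfix ↦
    hper (isPeriodTwo_of_mem_fixedPts (mem_fixedPts_iff.2 ⟨hm, hfix⟩))
  have hden : (p - C (conj m) * q).eval m ≠ 0 := by
    rwa [eval_sub, eval_mul, eval_C, sub_ne_zero, Ne, ← conjRatio_eq_iff hm]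
  have hdeg := natDegree_sub_C_mul_le hp hq (conj m)
  refine ⟨isCoprime_invShift_mobiusDen hp hq m hpq hpqd, natDegree_invShift hdeg hden,
    natDegree_invShift_le hq m, ?_⟩
  have himage : conj ((invShift d m q).coeff d / (mobiusDen d m p q).coeff d) =
      (conjRatio p q m - m)⁻¹ := by
    rw [mobiusDen, coeff_invShift_self, coeff_invShift_self, eval_sub, eval_mul, eval_C,
      conj_div_sub_conj_mul m _ hm, conjRatio]
  rw [himage, eval_mobiusDen_ne_zero_iff hp hq m (inv_ne_zero (sub_ne_zero.2 hfix)), inv_inv,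
    add_sub_cancel, Ne, ← isPeriodTwo_iff hpq hm]
  exact hper

omit hpq in
lemma zero_mem_fixedPts_invShift_mobiusDen (hqd : q.coeff d = 0) :
    0 ∈ fixedPts (invShift d m q) (mobiusDen d m p q) := by
  constructor
  · rw [eval_zero_mobiusDen hp hq, hqd, mul_zero, sub_zero]
    exact hpqd.resolve_right (not_not.2 hqd)
  · rw [eval_zero_invShift hq, hqd, map_zero, zero_mul]

omit hpq in
theorem finite_and_ncard_fixedPts_add_le [DecidableEq ℂ] (hm : m ∉ fixedPts p q)
    (hfin : (fixedPts (invShift d m q) (mobiusDen d m p q)).Finite) :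
    (fixedPts p q).Finite ∧ (fixedPts p q).ncard + (if q.coeff d = 0 then 1 else 0) ≤
      (fixedPts (invShift d m q) (mobiusDen d m p q)).ncard := by
  have hne {z : ℂ} (hz : z ∈ fixedPts p q) : z ≠ m := ne_of_mem_of_not_mem hz hm
  have hinj : Function.Injective fun z ↦ (z - m)⁻¹ := inv_injective.comp sub_left_injective
  have himage : (fun z ↦ (z - m)⁻¹) '' fixedPts p q ⊆
      fixedPts (invShift d m q) (mobiusDen d m p q) := by
    rintro _ ⟨z, hz, rfl⟩
    exact inv_sub_mem_fixedPts hp hq hz (hne hz)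
  refine ⟨(hfin.subset himage).of_finite_image hinj.injOn, ?_⟩
  rw [← Set.ncard_image_of_injective _ hinj]
  split_ifs with hqd
  · have hzero : (0 : ℂ) ∉ (fun z ↦ (z - m)⁻¹) '' fixedPts p q := by
      rintro ⟨z, hz, hz0⟩
      exact hne hz (sub_eq_zero.1 (inv_eq_zero.1 hz0))
    rw [← Set.ncard_insert_of_notMem hzero (hfin.subset himage)]
    exact Set.ncard_le_ncard
      (Set.insert_subset (zero_mem_fixedPts_invShift_mobiusDen hp hq hpqd hqd) himage) hfin
  · exact Set.ncard_le_ncard himage hfin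

end Reduction

/-- For a rational function `r = p/q` of degree `d ≥ 2` with `n` distinct
poles on the Riemann sphere (`n = #{roots of q} + 1` if `deg p > deg q`, else
`#{roots of q}`), the set of finite fixed points of `z ↦ conj(r(z))` is finite and the
total number of fixed points (counting `∞` when `deg p > deg q`) is at most
`min(3d + 2n − 3, 5d − 5)`. -/
theorem stmt_13 (p q : Polynomial ℂ) (hq : q ≠ 0) (hcop : IsCoprime p q)
    (hd : 2 ≤ max p.natDegree q.natDegree) :
    (fixedPts p q).Finite ∧
    (fixedPts p q).ncard + (if q.natDegree < p.natDegree then 1 else 0) ≤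
      min (3 * max p.natDegree q.natDegree +
            2 * (q.roots.toFinset.card + if q.natDegree < p.natDegree then 1 else 0) - 3)
          (5 * max p.natDegree q.natDegree - 5) := by
  have hpd : p.natDegree ≤ max p.natDegree q.natDegree := le_max_left _ _
  have hqd : q.natDegree ≤ max p.natDegree q.natDegree := le_max_right _ _
  have hpqd := coeff_max_natDegree_ne_zero (p := p) (q := q) (by omega)
  have hW := wronskian_ne_zero_of_isCoprime hcop (by omega)
  have hinfty := coeff_max_natDegree_eq_zero_iff (p := p) hq
  generalize max p.natDegree q.natDegree = d at *
  obtain ⟨m, ⟨hqm, hWm⟩, hperm⟩ := (((eventually_cofinite_eval_ne_zero hq).and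
    (eventually_cofinite_eval_ne_zero hW)).and (eventually_cofinite_eval_ne_zero
      (periodTwoPoly_ne_zero hcop hpd hqd hpqd hd hW))).exists
  rw [Ne, eval_periodTwoPoly_eq_zero_iff_isPeriodTwo hcop hpd hqd hqm] at hperm
  have hnorm := isNormalized_invShift_mobiusDen hcop hpd hqd hpqd hqm hperm
  have hbound := hnorm.ncard_fixedPts_le_min hd
    (by rwa [wronskian_mobiusDen_invShift hpd hqd m (by omega), coeff_invShift_self])
    (natDegree_invShift hqd hqm)
  obtain ⟨hfin, hcard⟩ := finite_and_ncard_fixedPts_add_le hpd hqd hpqd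
    (fun hm ↦ hperm (isPeriodTwo_of_mem_fixedPts hm)) hnorm.finite_fixedPts
  rw [card_roots_invShift hqd hqm] at hbound
  simp only [hinfty] at hbound hcard
  exact ⟨hfin, hcard.trans hbound⟩
end
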